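/- arXiv:2409.06810 — 2 statements merged into one kernel-verified Lean document; each statement's English description precedes it below -/
import Mathlib

section
/- Let k ≥ 5 and ℓ ≥ 3 be integers, and let p = p(n) ∈ [0,1] satisfy p(n)·n^{k−3}/(log n)² → ∞ as n → ∞. Then for every ε > 0, the probability that (⌊(ℓ−1)/2⌋−ε)·p·C(n,k−1) ≤ ex(G^(k)(n,p), C^(k)_ℓ) ≤ (⌊(ℓ−1)/2⌋+ε)·p·C(n,k−1) tends to 1 as n → ∞; that is, with high probability ex(G^(k)(n,p), C^(k)_ℓ) = (⌊(ℓ−1)/2⌋+o(1))·p·C(n,k−1). -/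
open Finset Filter

attribute [local instance] Classical.propDecidable

/-- The vertex set `[n] = {1,…,n}`. -/
def vtx (n : ℕ) : Finset ℕ := Finset.Icc 1 n

/-- `F` is a `k`-graph on `[n]`: a family of `k`-element subsets of `[n]`. -/
def IsKGraphOn (k n : ℕ) (F : Finset (Finset ℕ)) : Prop :=
  ∀ E ∈ F, E ⊆ vtx n ∧ E.card = k

/-- The vertex set of a hypergraph (union of its edges). -/
def vertexSet {α : Type} [DecidableEq α] (H : Finset (Finset α)) : Finset α := H.sup id

/-- The degree of a vertex: the number of edges containing it. -/
def vdeg {α : Type} [DecidableEq α] (H : Finset (Finset α)) (v : α) : ℕ :=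
  (H.filter fun E => v ∈ E).card

/-- Hypertrees, defined recursively: a single edge is a hypertree, and a hypertree grows
by adding a new leaf edge `E` whose intersection with the current vertex set equals its
intersection with some existing (parent) edge `F`. -/
inductive IsHypertree {α : Type} [DecidableEq α] : Finset (Finset α) → Prop
  | single (E : Finset α) : IsHypertree {E}
  | grow {H : Finset (Finset α)} (E F : Finset α) (hH : IsHypertree H) (hE : E ∉ H)
      (hF : F ∈ H) (hint : E ∩ vertexSet H = E ∩ F) : IsHypertree (insert E H)

/-- A `k`-tree: a `k`-uniform hypertree. -/
def IsKTree {α : Type} [DecidableEq α] (k : ℕ) (H : Finset (Finset α)) : Prop :=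
  IsHypertree H ∧ ∀ E ∈ H, E.card = k

/-- A hypergraph is 2-contractible if every edge contains at least two vertices of degree 1. -/
def TwoContractible {α : Type} [DecidableEq α] (H : Finset (Finset α)) : Prop :=
  ∀ E ∈ H, 2 ≤ (E.filter fun v => vdeg H v = 1).card

/-- `S` is a cross-cut of `H`: every edge meets `S` in exactly one vertex. -/
def IsCrosscut {α : Type} [DecidableEq α] (H : Finset (Finset α)) (S : Finset α) : Prop :=
  ∀ E ∈ H, (E ∩ S).card = 1

/-- `σ` is the cross-cut number of `H`: the minimum size of a cross-cut. -/
def IsCrosscutNumber {α : Type} [DecidableEq α] (H : Finset (Finset α)) (σ : ℕ) : Prop :=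
  IsLeast {m | ∃ S : Finset α, IsCrosscut H S ∧ S.card = m} σ

/-- A hypergraph is `ℓ`-overlapping if any two distinct edges meet in at most `ℓ` vertices. -/
def Overlapping {α : Type} [DecidableEq α] (ℓ : ℕ) (H : Finset (Finset α)) : Prop :=
  ∀ E ∈ H, ∀ F ∈ H, E ≠ F → (E ∩ F).card ≤ ℓ

/-- `K` is (the edge set of) a copy of `H`, i.e. the image of `H` under a map that is
injective on the vertex set of `H`. -/
def IsCopyOf {α : Type} [DecidableEq α] (H : Finset (Finset α)) (K : Finset (Finset ℕ)) : Prop :=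
  ∃ φ : α → ℕ, Set.InjOn φ ↑(vertexSet H) ∧ K = H.image fun E => E.image φ

/-- `F` contains no subgraph isomorphic to `H`. -/
def HFree {α : Type} [DecidableEq α] (H : Finset (Finset α)) (F : Finset (Finset ℕ)) : Prop :=
  ∀ K ⊆ F, ¬ IsCopyOf H K

/-- The collection of copies of `H` in `F` (as distinct subgraphs of `F`). -/
noncomputable def copies {α : Type} [DecidableEq α] (H : Finset (Finset α))
    (F : Finset (Finset ℕ)) : Finset (Finset (Finset ℕ)) :=
  F.powerset.filter (IsCopyOf H)

/-- The number of `H`-free `k`-graphs on the vertex set `[n]`. -/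
noncomputable def forb {α : Type} [DecidableEq α] (n k : ℕ) (H : Finset (Finset α)) : ℕ :=
  (((vtx n).powersetCard k).powerset.filter (HFree H)).card

/-- `H` is a `k`-uniform linear cycle of length `ℓ`. -/
def IsLinearCycle {α : Type} [DecidableEq α] (k ℓ : ℕ) (H : Finset (Finset α)) : Prop :=
  ∃ E : ℕ → Finset α,
    (∀ i < ℓ, (E i).card = k) ∧
    (∀ i < ℓ, ∀ j < ℓ, i ≠ j → E i ≠ E j) ∧
    (∀ i < ℓ, (E i ∩ E ((i + 1) % ℓ)).card = 1) ∧
    (∀ i < ℓ, ∀ j < ℓ, i ≠ j → E i ∩ E ((i + 1) % ℓ) ≠ E j ∩ E ((j + 1) % ℓ)) ∧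
    (∀ i < ℓ, ∀ j < ℓ, i ≠ j → (i + 1) % ℓ ≠ j → (j + 1) % ℓ ≠ i → Disjoint (E i) (E j)) ∧
    H = (Finset.range ℓ).image E

/-- `(X 0, …, X (k-1))` is a `k`-partition of `F`. -/
def IsKPartition (k : ℕ) (F : Finset (Finset ℕ)) (X : Fin k → Finset ℕ) : Prop :=
  (∀ i j, i ≠ j → Disjoint (X i) (X j)) ∧ ∀ E ∈ F, ∀ i, (E ∩ X i).card = 1

/-- The `J`-projection of an edge. -/
def projJ {k : ℕ} (X : Fin k → Finset ℕ) (J : Finset (Fin k)) (E : Finset ℕ) : Finset ℕ :=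
  E ∩ J.sup X

/-- The pattern of a vertex set. -/
def pattern {k : ℕ} (X : Fin k → Finset ℕ) (D : Finset ℕ) : Finset (Fin k) :=
  Finset.univ.filter fun i => (D ∩ X i).Nonempty

/-- `MI(F)`: the patterns of intersections of pairs of distinct edges. -/
noncomputable def MI {k : ℕ} (F : Finset (Finset ℕ)) (X : Fin k → Finset ℕ) :
    Finset (Finset (Fin k)) :=
  ((F ×ˢ F).filter fun p => p.1 ≠ p.2).image fun p => pattern X (p.1 ∩ p.2)

/-- The link of a vertex set `D` in `F`. -/
def link {α : Type} [DecidableEq α] (F : Finset (Finset α)) (D : Finset α) :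
    Finset (Finset α) :=
  (F.filter fun E => D ⊆ E).image fun E => E \ D

/-- The degree of a vertex set `D` in `F`: the size of its link. -/
def setDeg {α : Type} [DecidableEq α] (F : Finset (Finset α)) (D : Finset α) : ℕ :=
  (link F D).card

/-- A nonempty hypergraph is `s`-diverse if every vertex has degree less than `|H|/s`. -/
def SDiverse {α : Type} [DecidableEq α] (s : ℕ) (H : Finset (Finset α)) : Prop :=
  H.Nonempty ∧ ∀ v : α, s * vdeg H v < H.card

/-- `D` is `s`-strong in `F` if its link is `s`-diverse. -/
def SStrong {α : Type} [DecidableEq α] (s : ℕ) (F : Finset (Finset α)) (D : Finset α) : Prop :=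
  SDiverse s (link F D)

/-- `F`, with `k`-partition `X`, is `s`-super-homogeneous: for every `J ∈ MI(F)` and every
edge `E ∈ F`, the projection `E_J` is `s`-strong and `d_F(E_J) ≥ max{s, |F|/(2k·n^|J|)}`. -/
def SuperHomogeneous (n k s : ℕ) (F : Finset (Finset ℕ)) (X : Fin k → Finset ℕ) : Prop :=
  ∀ J ∈ MI F X, ∀ E ∈ F,
    SStrong s F (projJ X J E) ∧
    s ≤ setDeg F (projJ X J E) ∧
    (F.card : ℝ) / (2 * k * (n : ℝ) ^ J.card) ≤ (setDeg F (projJ X J E) : ℝ)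

/-- The rank of a family of subsets of `[k]`: the minimum size of a set `D ⊆ [k]` contained
in no member of the family. -/
noncomputable def rankFam (k : ℕ) (𝒥 : Finset (Finset (Fin k))) : ℕ :=
  sInf {d | ∃ D : Finset (Fin k), D.card = d ∧ ∀ J ∈ 𝒥, ¬ D ⊆ J}

/-- A family of subsets of `[k]` is of type 1 if it contains the full power set of some
`(k-2)`-set `B`. -/
def TypeOne (k : ℕ) (𝒥 : Finset (Finset (Fin k))) : Prop :=
  ∃ B : Finset (Fin k), B.card = k - 2 ∧ ∀ S ⊆ B, S ∈ 𝒥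

/-- The constant `c(k,s) = k!/(k^k·(2s(1+2^k))^(2^k))`. -/
noncomputable def cks (k s : ℕ) : ℝ :=
  (Nat.factorial k : ℝ) / ((k : ℝ) ^ k * (2 * (s : ℝ) * (1 + 2 ^ k)) ^ (2 ^ k))

/-- Degree of a set of vertices in a (uniform) hypergraph `K`: number of edges containing it. -/
def uDeg {α : Type} [DecidableEq α] (K : Finset (Finset α)) (S : Finset α) : ℕ :=
  (K.filter fun e => S ⊆ e).card

/-- A `t`-uniform hypergraph is `d`-graded if `d_K(S) ≤ d^(t-|S|)` for all `S` with
`1 ≤ |S| ≤ t`. -/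
def Graded {α : Type} [DecidableEq α] (t : ℕ) (d : ℝ) (K : Finset (Finset α)) : Prop :=
  ∀ S : Finset α, 1 ≤ S.card → S.card ≤ t → (uDeg K S : ℝ) ≤ d ^ (t - S.card)

/-- `S` is saturated by `K`: `d_K(S) = ⌊d^(t-|S|)⌋`. -/
def Saturated {α : Type} [DecidableEq α] (t : ℕ) (d : ℝ) (K : Finset (Finset α))
    (S : Finset α) : Prop :=
  uDeg K S = ⌊d ^ (t - S.card)⌋₊

/-- `S` is admissible: no nonempty subset of `S` is saturated. -/
def Admissible {α : Type} [DecidableEq α] (t : ℕ) (d : ℝ) (K : Finset (Finset α))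
    (S : Finset α) : Prop :=
  ∀ S' ⊆ S, S'.Nonempty → ¬ Saturated t d K S'

/-- `Z_K(S)`: the vertices `v` such that `S ∪ {v}` is inadmissible and `{v}` is not
saturated. -/
noncomputable def Zset {α : Type} [DecidableEq α] (t : ℕ) (d : ℝ) (K : Finset (Finset α))
    (S : Finset α) : Finset α :=
  (vertexSet K).filter fun v => ¬ Admissible t d K (insert v S) ∧ ¬ Saturated t d K {v}

/-- `ex(G,H)`: the maximum number of edges of an `H`-free subgraph of `G`. -/
noncomputable def exIn {α : Type} [DecidableEq α] (H : Finset (Finset α))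
    (G : Finset (Finset ℕ)) : ℕ :=
  (G.powerset.filter (HFree H)).sup Finset.card

/-- The probability, in the random `k`-graph `G^(k)(n,p)` (each `k`-subset of `[n]` is an
edge independently with probability `p`), of the event `A`. -/
noncomputable def probEvent (k n : ℕ) (p : ℝ) (A : Finset (Finset ℕ) → Prop) : ℝ :=
  ∑ G ∈ ((vtx n).powersetCard k).powerset.filter A,
    p ^ G.card * (1 - p) ^ (((vtx n).powersetCard k).card - G.card)

/-!
Put `t = (ℓ - 1) / 2`. For the lower bound, each vertex lies in at most two edges of the cycle, so
`t` vertices do not meet all `ℓ` of its edges; hence the edges of the random hypergraph that meet a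
fixed set of `t` vertices form a `C`-free hypergraph, with about `t * p * n.choose (k - 1)` edges.

For the upper bound, all 4-sets have small degree in the random hypergraph. The `C`-free hypergraphs
`F` with this property lie, up to few edges, in `n ^ O(n ^ 2)` containers, and a Chernoff bound for
each container is combined with a union bound. A container is given by a graph and boundedly many
*colours* for each pair of vertices. A pair is adjacent if it is robust in `F`, that is, if the
edges of `F` through it cannot be met by boundedly many other vertices; the colours of any other
pair meet almost all edges of `F` through it. So almost every edge of `F` is *good*: each
non-adjacent pair of its vertices has a colour in the edge.

Robust pairs along a cycle of the graph extend greedily to a linear cycle in `F`. Hence the graph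
contains no cycle of length `ℓ`, and likewise a colour of a pair lies on every path with `ℓ`
vertices joining the pair. A graph without a cycle of length `ℓ` has few triangles, so almost every
good edge consists of a centre `c` adjacent to all other vertices and colouring every pair of them.
A pair with more than `t` such colours among the boundedly many vertices that are colours of many
pairs would usually yield a cycle or a path of the forbidden kind. So most pairs have at most `t` of
them, and a good hypergraph has at most `(t + o(1)) * n.choose (k - 1)` edges.
-/

/-! ### Isomorphism of set systems -/

/-- The set of indices of the members of the set system `E` that contain `x`. -/
noncomputable def incidentIndices {ι α : Type*} [Fintype ι] (E : ι → Finset α) (x : α) : Finset ι :=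
  {i | x ∈ E i}

lemma mem_incidentIndices {ι α : Type*} [Fintype ι] {E : ι → Finset α} {x : α} {i : ι} :
    i ∈ incidentIndices E x ↔ x ∈ E i := by
  simp [incidentIndices]

lemma exists_injOn_image_eq_of_card_fiber_eq {α β γ : Type*} [DecidableEq β] [DecidableEq γ]
    [Nonempty β] {s : Finset α} {t : Finset β} {f : α → γ} {g : β → γ}
    (h : ∀ c, #{x ∈ s | f x = c} = #{y ∈ t | g y = c}) :
    ∃ φ : α → β, Set.InjOn φ s ∧ s.image φ = t ∧ ∀ x ∈ s, g (φ x) = f x := by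
  let e := fun c ↦ equivOfCardEq (h c)
  let φ : α → β := fun x ↦
    if hx : x ∈ s then e (f x) ⟨x, mem_filter.2 ⟨hx, rfl⟩⟩ else Classical.arbitrary β
  have φ_eq : ∀ c (x : {x ∈ s | f x = c}), φ x = e c x := by
    rintro c ⟨x, hx⟩
    obtain ⟨hxs, rfl⟩ := mem_filter.1 hx
    simp only [φ, dif_pos hxs]
  have φ_mem : ∀ x ∈ s, φ x ∈ t ∧ g (φ x) = f x := fun x hx ↦ by
    rw [φ_eq (f x) ⟨x, mem_filter.2 ⟨hx, rfl⟩⟩]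
    exact mem_filter.1 (e (f x) _).2
  refine ⟨φ, fun x hx y hy hxy ↦ ?_, ?_, fun x hx ↦ (φ_mem x hx).2⟩
  · have hf : f x = f y := by rw [← (φ_mem x hx).2, ← (φ_mem y hy).2, hxy]
    have := φ_eq (f y) ⟨x, mem_filter.2 ⟨hx, hf⟩⟩
    have := φ_eq (f y) ⟨y, mem_filter.2 ⟨hy, rfl⟩⟩
    simp_all
  · refine Subset.antisymm (image_subset_iff.2 fun x hx ↦ (φ_mem x hx).1) fun y hy ↦ ?_
    obtain ⟨x, hx⟩ := (e (g y)).surjective ⟨y, mem_filter.2 ⟨hy, rfl⟩⟩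
    exact mem_image.2 ⟨x, (mem_filter.1 x.2).1, by rw [φ_eq, hx]⟩

lemma card_inf'_eq_sum_card_incidentIndices {ι α : Type*} [Fintype ι]
    [DecidableEq α] (E : ι → Finset α) {I : Finset ι} (hI : I.Nonempty) :
    #(I.inf' hI E) = ∑ J with I ⊆ J, #{x ∈ univ.biUnion E | incidentIndices E x = J} := by
  have inf'_eq : I.inf' hI E = {x ∈ univ.biUnion E | I ⊆ incidentIndices E x} := by
    ext x
    simp only [mem_inf', mem_filter, mem_biUnion, mem_univ, true_and, subset_iff,
      mem_incidentIndices, iff_and_self]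
    exact fun hx ↦ ⟨_, hx _ hI.choose_spec⟩
  rw [inf'_eq, card_eq_sum_card_fiberwise (f := incidentIndices E) (t := {J | I ⊆ J})
    fun x hx ↦ by simpa using (mem_filter.1 hx).2]
  refine sum_congr rfl fun J hJ ↦ congrArg card ?_
  rw [filter_filter]
  refine filter_congr fun x _ ↦ and_iff_right_of_imp ?_
  rintro rfl
  exact (mem_filter.1 hJ).2

lemma filter_incidentIndices_eq_empty {ι α : Type*} [Fintype ι] [DecidableEq α]
    (E : ι → Finset α) : {x ∈ univ.biUnion E | incidentIndices E x = ∅} = ∅ :=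
  filter_eq_empty_iff.2 fun x hx hx' ↦ by
    obtain ⟨i, -, hi⟩ := mem_biUnion.1 hx
    exact notMem_empty i (hx' ▸ mem_incidentIndices.2 hi)

lemma card_incidentIndices_eq_of_card_inf'_eq {ι α β : Type*} [Fintype ι]
    [DecidableEq α] [DecidableEq β] {E : ι → Finset α} {E' : ι → Finset β}
    (h : ∀ (I : Finset ι) (hI : I.Nonempty), #(I.inf' hI E) = #(I.inf' hI E')) (I : Finset ι) :
    #{x ∈ univ.biUnion E | incidentIndices E x = I} =
      #{x ∈ univ.biUnion E' | incidentIndices E' x = I} := by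
  induction I using Finset.strongDownwardInduction (n := Fintype.card ι) with
  | H I ih =>
    obtain rfl | hI := I.eq_empty_or_nonempty
    · rw [filter_incidentIndices_eq_empty, filter_incidentIndices_eq_empty, card_empty, card_empty]
    · have hIJ : I ∈ ({J | I ⊆ J} : Finset (Finset ι)) := by simp
      have := h I hI
      rw [card_inf'_eq_sum_card_incidentIndices, card_inf'_eq_sum_card_incidentIndices,
        ← add_sum_erase _ _ hIJ, ← add_sum_erase _ _ hIJ, sum_congr rfl fun J hJ ↦ ?_] at this
      · exact Nat.add_right_cancel this
      · obtain ⟨hJI, hJ⟩ := mem_erase.1 hJ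
        exact ih (card_le_univ J) ((mem_filter.1 hJ).2.ssubset_of_ne hJI.symm)
  | _ => exact card_le_univ I

-- The cells of the Venn diagram of `E` have the same sizes as those of `E'`, so the vertices
-- can be matched cell by cell.
lemma exists_injOn_image_eq_of_card_inf'_eq {ι α β : Type*} [Fintype ι] [DecidableEq α]
    [DecidableEq β] [Nonempty β] {E : ι → Finset α} {E' : ι → Finset β}
    (h : ∀ (I : Finset ι) (hI : I.Nonempty), #(I.inf' hI E) = #(I.inf' hI E')) :
    ∃ φ : α → β, Set.InjOn φ (univ.biUnion E) ∧ ∀ i, (E i).image φ = E' i := by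
  obtain ⟨φ, φ_inj, φ_image, hφ⟩ := exists_injOn_image_eq_of_card_fiber_eq
    (card_incidentIndices_eq_of_card_inf'_eq h)
  refine ⟨φ, φ_inj, fun i ↦ ?_⟩
  have mem_iff : ∀ x ∈ univ.biUnion E, (φ x ∈ E' i ↔ x ∈ E i) := fun x hx ↦ by
    rw [← mem_incidentIndices, hφ x hx, mem_incidentIndices]
  ext y
  refine ⟨fun hy ↦ ?_, fun hy ↦ ?_⟩
  · obtain ⟨x, hx, rfl⟩ := mem_image.1 hy
    exact (mem_iff x (subset_biUnion_of_mem E (mem_univ i) hx)).2 hx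
  · obtain ⟨x, hx, rfl⟩ := mem_image.1 (φ_image ▸ subset_biUnion_of_mem E' (mem_univ i) hy)
    exact mem_image_of_mem φ ((mem_iff x hx).1 hy)

/-! ### Linear cycles -/

/-- The sets `E i`, for `i` in the cyclic group `Fin ℓ`, are the consecutive edges of a
`k`-uniform linear cycle; `i + 1` is the cyclic successor, also for the last index. -/
structure IsLinearCycleSeq {α : Type*} [DecidableEq α] {ℓ : ℕ} [NeZero ℓ] (k : ℕ)
    (E : Fin ℓ → Finset α) : Prop where
  card_eq : ∀ i, #(E i) = k
  card_inter_succ : ∀ i, #(E i ∩ E (i + 1)) = 1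
  inter_succ_injective : Function.Injective fun i ↦ E i ∩ E (i + 1)
  disjoint : ∀ i j, i ≠ j → i + 1 ≠ j → j + 1 ≠ i → Disjoint (E i) (E j)

lemma IsLinearCycle.exists_isLinearCycleSeq {α : Type} [DecidableEq α] {k ℓ : ℕ} [NeZero ℓ]
    {C : Finset (Finset α)} (hC : IsLinearCycle k ℓ C) :
    ∃ E : Fin ℓ → Finset α, IsLinearCycleSeq k E ∧ C = univ.image E := by
  obtain ⟨E, card_eq, -, card_inter, inter_ne, disjoint, rfl⟩ := hC
  have val_succ (i : Fin ℓ) : ((i + 1 : Fin ℓ) : ℕ) = (i + 1) % ℓ := by simp [Fin.val_add]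
  refine ⟨fun i ↦ E i, ⟨fun i ↦ card_eq i i.2, fun i ↦ ?_, fun i j hij ↦ ?_,
    fun i j hij hi hj ↦ ?_⟩, ?_⟩
  · rw [val_succ]
    exact card_inter i i.2
  · by_contra hne
    simp only [val_succ] at hij
    exact inter_ne i i.2 j j.2 (Fin.val_ne_of_ne hne) hij
  · refine disjoint i i.2 j j.2 (Fin.val_ne_of_ne hij) ?_ ?_ <;> rw [← val_succ] <;>
      exact Fin.val_ne_of_ne ‹_›
  · ext A
    simp only [mem_image, mem_range, mem_univ, true_and]
    exact ⟨fun ⟨i, hi, hA⟩ ↦ ⟨⟨i, hi⟩, hA⟩, fun ⟨i, hA⟩ ↦ ⟨i, i.2, hA⟩⟩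

namespace IsLinearCycleSeq

variable {α β : Type*} [DecidableEq α] [DecidableEq β] {k ℓ : ℕ} [NeZero ℓ]
  {E : Fin ℓ → Finset α} {E' : Fin ℓ → Finset β} {i j m : Fin ℓ} {x : α}

lemma eq_of_mem_inter_succ (hE : IsLinearCycleSeq k E) (hi : x ∈ E i ∩ E (i + 1))
    (hj : x ∈ E j ∩ E (j + 1)) : i = j := by
  have eq_singleton : ∀ i, x ∈ E i ∩ E (i + 1) → E i ∩ E (i + 1) = {x} := fun i hi ↦
    (eq_of_subset_of_card_le (singleton_subset_iff.2 hi) (hE.card_inter_succ i).le).symm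
  exact hE.inter_succ_injective ((eq_singleton i hi).trans (eq_singleton j hj).symm)

lemma succ_eq_or_succ_eq (hE : IsLinearCycleSeq k E) (hij : i ≠ j) (hi : x ∈ E i)
    (hj : x ∈ E j) : i + 1 = j ∨ j + 1 = i := by
  by_contra! h
  exact disjoint_left.1 (hE.disjoint i j hij h.1 h.2) hi hj

lemma notMem_of_mem_of_mem (hE : IsLinearCycleSeq k E) (hij : i ≠ j) (him : i ≠ m)
    (hjm : j ≠ m) (hi : x ∈ E i) (hj : x ∈ E j) : x ∉ E m := by
  intro hm
  obtain rfl | hji := hE.succ_eq_or_succ_eq hij hi hj <;>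
    obtain rfl | hmi := hE.succ_eq_or_succ_eq him hi hm
  · exact hjm rfl
  · exact him (hE.eq_of_mem_inter_succ (mem_inter.2 ⟨hi, hj⟩) (mem_inter.2 ⟨hm, hmi ▸ hi⟩))
  · exact hij (hE.eq_of_mem_inter_succ (mem_inter.2 ⟨hi, hm⟩) (mem_inter.2 ⟨hj, hji ▸ hi⟩))
  · exact hjm (add_right_cancel (hji.trans hmi.symm))

lemma card_inter (hE : IsLinearCycleSeq k E) (hij : i ≠ j) :
    #(E i ∩ E j) = if i + 1 = j ∨ j + 1 = i then 1 else 0 := by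
  split_ifs with h
  · obtain rfl | rfl := h
    · exact hE.card_inter_succ i
    · rw [inter_comm, hE.card_inter_succ j]
  · push Not at h
    rw [disjoint_iff_inter_eq_empty.1 (hE.disjoint i j hij h.1 h.2), card_empty]

lemma inf'_eq_empty (hE : IsLinearCycleSeq k E) {I : Finset (Fin ℓ)} (hI : I.Nonempty)
    (h : 2 < #I) : I.inf' hI E = ∅ := by
  obtain ⟨i, hi, j, hj, m, hm, hij, him, hjm⟩ := two_lt_card.1 h
  refine eq_empty_of_forall_notMem fun x hx ↦ ?_
  rw [mem_inf'] at hx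
  exact hE.notMem_of_mem_of_mem hij him hjm (hx i hi) (hx j hj) (hx m hm)

lemma card_inf'_eq (hE : IsLinearCycleSeq k E) (hE' : IsLinearCycleSeq k E')
    (I : Finset (Fin ℓ)) (hI : I.Nonempty) : #(I.inf' hI E) = #(I.inf' hI E') := by
  obtain h | h := le_or_gt #I 2
  · obtain h1 | h2 : #I = 1 ∨ #I = 2 := by have := hI.card_pos; omega
    · obtain ⟨i, rfl⟩ := card_eq_one.1 h1
      rw [inf'_singleton, inf'_singleton, hE.card_eq, hE'.card_eq]
    · obtain ⟨i, j, hij, rfl⟩ := card_eq_two.1 h2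
      rw [inf'_insert (singleton_nonempty j), inf'_insert (singleton_nonempty j), inf'_singleton,
        inf'_singleton, inf_eq_inter, inf_eq_inter, hE.card_inter hij, hE'.card_inter hij]
  · rw [hE.inf'_eq_empty hI h, hE'.inf'_eq_empty hI h, card_empty, card_empty]

lemma isCopyOf {α : Type} [DecidableEq α] {E : Fin ℓ → Finset α} {E' : Fin ℓ → Finset ℕ}
    (hE : IsLinearCycleSeq k E) (hE' : IsLinearCycleSeq k E') :
    IsCopyOf (univ.image E) (univ.image E') := by
  obtain ⟨φ, φ_inj, hφ⟩ := exists_injOn_image_eq_of_card_inf'_eq (hE.card_inf'_eq hE')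
  refine ⟨φ, ?_, ?_⟩
  · rwa [vertexSet, sup_image, Function.id_comp, sup_eq_biUnion]
  · rw [image_image]
    exact image_congr fun i _ ↦ (hφ i).symm

end IsLinearCycleSeq

/-- `B` lies in members of `F` that avoid any prescribed set of at most `s` points outside `B`;
such members can be chosen greedily, each avoiding the earlier ones. -/
def IsRobust {α : Type*} (s : ℕ) (F : Finset (Finset α)) (B : Finset α) : Prop :=
  ∀ S : Finset α, #S ≤ s → Disjoint S B → ∃ E ∈ F, B ⊆ E ∧ Disjoint E S

section Greedy

variable {ι α : Type*} [Fintype ι] [DecidableEq α] {F : Finset (Finset α)} {k b s : ℕ}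
  {B : ι → Finset α}

lemma exists_superset_inter_subset_of_isRobust (hF : ∀ E ∈ F, #E ≤ k) (hb : ∀ i, #(B i) ≤ b)
    (hs : (k + b) * Fintype.card ι ≤ s) (hB : ∀ i, IsRobust s F (B i)) (J : Finset ι) :
    ∃ E : ι → Finset α, (∀ i ∈ J, E i ∈ F ∧ B i ⊆ E i ∧ E i ∩ univ.biUnion B ⊆ B i) ∧
      ∀ i ∈ J, ∀ j ∈ J, i ≠ j → E i ∩ E j ⊆ B i := by
  induction J using Finset.induction with
  | empty => exact ⟨B, by simp, by simp⟩
  | insert i₀ J hi₀ ih =>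
    obtain ⟨E, hE, E_inter⟩ := ih
    obtain ⟨E₀, hE₀, B_subset, E₀_disj⟩ := hB i₀ ((J.biUnion E ∪ univ.biUnion B) \ B i₀) (by
      calc #((J.biUnion E ∪ univ.biUnion B) \ B i₀)
          ≤ #(J.biUnion E) + #(univ.biUnion B) :=
            (card_le_card sdiff_subset).trans (card_union_le _ _)
        _ ≤ #J * k + Fintype.card ι * b :=
            add_le_add (card_biUnion_le_card_mul _ _ _ fun i hi ↦ hF _ (hE i hi).1)
              (card_biUnion_le_card_mul _ _ _ fun i _ ↦ hb i)
        _ ≤ Fintype.card ι * k + Fintype.card ι * b := by gcongr; exact card_le_univ J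
        _ ≤ s := by linarith) sdiff_disjoint
    have E₀_inter : ∀ x ∈ E₀, x ∈ J.biUnion E ∪ univ.biUnion B → x ∈ B i₀ := fun x hx hx' ↦ by
      by_contra hxB
      exact disjoint_left.1 E₀_disj hx (mem_sdiff.2 ⟨hx', hxB⟩)
    have E₀_inter_E : ∀ j ∈ J, E₀ ∩ E j ⊆ B i₀ := fun j hj x hx ↦
      E₀_inter x (mem_inter.1 hx).1 <| mem_union_left _ <| mem_biUnion.2 ⟨j, hj, (mem_inter.1 hx).2⟩
    have E_ne : ∀ j ∈ J, Function.update E i₀ E₀ j = E j := fun j hj ↦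
      Function.update_of_ne (fun h : j = i₀ ↦ hi₀ (h ▸ hj)) _ _
    refine ⟨Function.update E i₀ E₀, fun i hi ↦ ?_, fun i hi j hj hij ↦ ?_⟩
    · obtain rfl | hi := mem_insert.1 hi
      · rw [Function.update_self]
        exact ⟨hE₀, B_subset, fun x hx ↦
          E₀_inter x (mem_inter.1 hx).1 (mem_union_right _ (mem_inter.1 hx).2)⟩
      · rw [E_ne i hi]
        exact hE i hi
    · obtain rfl | hiJ := mem_insert.1 hi <;> obtain rfl | hjJ := mem_insert.1 hj
      · exact absurd rfl hij
      · rw [Function.update_self, E_ne j hjJ]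
        exact E₀_inter_E j hjJ
      · rw [Function.update_self, E_ne i hiJ, inter_comm]
        exact fun x hx ↦ (hE i hiJ).2.2 <| mem_inter.2
          ⟨(mem_inter.1 hx).2, mem_biUnion.2 ⟨j, mem_univ j, E₀_inter_E i hiJ hx⟩⟩
      · rw [E_ne i hiJ, E_ne j hjJ]
        exact E_inter i hiJ j hjJ hij

lemma exists_superset_inter_eq_of_isRobust (hF : ∀ E ∈ F, #E ≤ k) (hb : ∀ i, #(B i) ≤ b)
    (hs : (k + b) * Fintype.card ι ≤ s) (hB : ∀ i, IsRobust s F (B i)) :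
    ∃ E : ι → Finset α, (∀ i, E i ∈ F) ∧ ∀ i j, i ≠ j → E i ∩ E j = B i ∩ B j := by
  obtain ⟨E, hE, E_inter⟩ := exists_superset_inter_subset_of_isRobust hF hb hs hB univ
  simp only [mem_univ, true_implies] at hE E_inter
  exact ⟨E, fun i ↦ (hE i).1, fun i j hij ↦ Subset.antisymm
    (subset_inter (E_inter i j hij) (inter_comm (E i) (E j) ▸ E_inter j i hij.symm))
    (inter_subset_inter (hE i).2.1 (hE j).2.1)⟩

end Greedy

section Embedding

variable {α : Type*} [DecidableEq α] {F : Finset (Finset α)} {k ℓ : ℕ} [NeZero ℓ]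
  {v : Fin ℓ → α} {U : Fin ℓ → Finset α}

lemma inter_union_pair_eq_singleton (hℓ : 3 ≤ ℓ) (hv : v.Injective)
    (hU : Pairwise fun i j ↦ Disjoint (U i) (U j)) (hvU : ∀ i j, v j ∉ U i) (i : Fin ℓ) :
    (U i ∪ {v i, v (i + 1)}) ∩ (U (i + 1) ∪ {v (i + 1), v (i + 1 + 1)}) = {v (i + 1)} := by
  have ne_succ : i ≠ i + 1 := by
    obtain ⟨n, rfl⟩ := Nat.exists_eq_add_of_le' hℓ
    simp
  have ne_succ_succ : i ≠ i + 1 + 1 := by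
    obtain ⟨n, rfl⟩ := Nat.exists_eq_add_of_le' hℓ
    rw [add_assoc, ne_eq, left_eq_add, Fin.ext_iff, Fin.val_add]
    simp [Nat.mod_eq_of_lt (show 2 < n + 3 by lia)]
  ext x
  have hU_disj : x ∈ U i → x ∉ U (i + 1) := fun h ↦ disjoint_left.1 (hU ne_succ) h
  simp only [mem_inter, mem_union, mem_insert, mem_singleton]
  grind [Function.Injective]

lemma disjoint_union_pair (hv : v.Injective) (hU : Pairwise fun i j ↦ Disjoint (U i) (U j))
    (hvU : ∀ i j, v j ∉ U i) {i j : Fin ℓ} (hij : i ≠ j) (hi : i + 1 ≠ j) (hj : j + 1 ≠ i) :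
    Disjoint (U i ∪ {v i, v (i + 1)}) (U j ∪ {v j, v (j + 1)}) := by
  have : i + 1 ≠ j + 1 := fun h ↦ hij (add_right_cancel h)
  refine disjoint_left.2 fun x ↦ ?_
  have hU_disj : x ∈ U i → x ∉ U j := fun h ↦ disjoint_left.1 (hU hij) h
  simp only [mem_union, mem_insert, mem_singleton]
  grind [Function.Injective]

lemma exists_isLinearCycleSeq_of_isRobust (hℓ : 3 ≤ ℓ) (hF : ∀ E ∈ F, #E = k) (hv : v.Injective)
    (hU : Pairwise fun i j ↦ Disjoint (U i) (U j)) (hvU : ∀ i j, v j ∉ U i)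
    (hU_card : ∀ i, #(U i) ≤ 1)
    (hrobust : ∀ i, IsRobust ((k + 3) * ℓ) F (U i ∪ {v i, v (i + 1)})) :
    ∃ E : Fin ℓ → Finset α, IsLinearCycleSeq k E ∧ ∀ i, E i ∈ F := by
  obtain ⟨E, hE, E_inter⟩ := exists_superset_inter_eq_of_isRobust (fun E h ↦ (hF E h).le)
    (fun i ↦ (card_union_le _ _).trans (add_le_add (hU_card i) card_le_two))
    (by rw [Fintype.card_fin]) hrobust
  have ne_succ (i : Fin ℓ) : i ≠ i + 1 := by
    obtain ⟨n, rfl⟩ := Nat.exists_eq_add_of_le' hℓ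
    simp
  have inter_succ (i : Fin ℓ) : E i ∩ E (i + 1) = {v (i + 1)} := by
    rw [E_inter i _ (ne_succ i), inter_union_pair_eq_singleton hℓ hv hU hvU]
  refine ⟨E, ⟨fun i ↦ hF _ (hE i), fun i ↦ ?_, fun i j hij ↦ ?_, fun i j hij hi hj ↦ ?_⟩, hE⟩
  · rw [inter_succ, card_singleton]
  · simp only [inter_succ, singleton_inj] at hij
    exact add_right_cancel (hv hij)
  · rw [disjoint_iff_inter_eq_empty, E_inter i j hij, ← disjoint_iff_inter_eq_empty]
    exact disjoint_union_pair hv hU hvU hij hi hj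

end Embedding

-- The pairs `{v i, v (i + 1)}` trace a cycle of the shadow graph, and `U i` prescribes an
-- additional vertex for some of the edges.
lemma IsLinearCycle.not_hFree_of_isRobust {α : Type} [DecidableEq α] {k ℓ : ℕ} [NeZero ℓ]
    {C : Finset (Finset α)} (hC : IsLinearCycle k ℓ C) (hℓ : 3 ≤ ℓ) {F : Finset (Finset ℕ)}
    (hF : ∀ E ∈ F, #E = k) {v : Fin ℓ → ℕ} {U : Fin ℓ → Finset ℕ} (hv : v.Injective)
    (hU : Pairwise fun i j ↦ Disjoint (U i) (U j)) (hvU : ∀ i j, v j ∉ U i)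
    (hU_card : ∀ i, #(U i) ≤ 1)
    (hrobust : ∀ i, IsRobust ((k + 3) * ℓ) F (U i ∪ {v i, v (i + 1)})) : ¬ HFree C F := by
  obtain ⟨E, hE, rfl⟩ := hC.exists_isLinearCycleSeq
  obtain ⟨E', hE', E'_mem⟩ := exists_isLinearCycleSeq_of_isRobust hℓ hF hv hU hvU hU_card hrobust
  exact fun hfree ↦ hfree _ (image_subset_iff.2 fun i _ ↦ E'_mem i) (hE.isCopyOf hE')

/-! ### Dense relations contain large complete bipartite pairs -/

section Biclique

variable {α β : Type*} {r : α → β → Prop} {A : Finset α} {B : Finset β} {δ : ℝ} {R : ℕ}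

lemma half_mul_card_le_card_filter_highDegree (hδ : 0 ≤ δ) (hB : B.Nonempty)
    (h : δ * #A * #B ≤ #{q ∈ A ×ˢ B | r q.1 q.2}) :
    δ / 2 * #A ≤ #{a ∈ A | δ / 2 * #B ≤ #{b ∈ B | r a b}} := by
  have card_pairs : (#{q ∈ A ×ˢ B | r q.1 q.2} : ℝ) = ∑ a ∈ A, (#{b ∈ B | r a b} : ℝ) := by
    simp only [card_filter, sum_product, Nat.cast_sum]
  have card_row_le : ∀ a ∈ A, (#{b ∈ B | r a b} : ℝ) ≤
      (if δ / 2 * #B ≤ #{b ∈ B | r a b} then (#B : ℝ) else 0) + δ / 2 * #B := by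
    intro a _
    have row_le : (#{b ∈ B | r a b} : ℝ) ≤ #B := by exact_mod_cast card_filter_le _ _
    have : 0 ≤ δ / 2 * #B := by positivity
    split_ifs <;> linarith
  have sum_le := (h.trans_eq card_pairs).trans (sum_le_sum card_row_le)
  rw [sum_add_distrib, ← sum_filter, sum_const, sum_const, nsmul_eq_mul, nsmul_eq_mul] at sum_le
  have : (0 : ℝ) < #B := by exact_mod_cast hB.card_pos
  nlinarith

lemma exists_le_card_fiber_of_sum_le (hR : 0 < R) (hB : #A * (2 ^ #A * R) < #B * R)
    (h : 2 * R * #B ≤ ∑ b ∈ B, #{a ∈ A | r a b}) :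
    ∃ X ⊆ A, R ≤ #X ∧ R ≤ #{b ∈ B | {a ∈ A | r a b} = X} := by
  by_contra! few
  have card_col_le : ∀ b ∈ B, #{a ∈ A | r a b} ≤
      R + if R ≤ #{a ∈ A | r a b} then #A else 0 := by
    intro b _
    have := card_filter_le A (r · b)
    split_ifs <;> lia
  have card_rich_le : #{b ∈ B | R ≤ #{a ∈ A | r a b}} ≤ 2 ^ #A * R := by
    have maps : ∀ b ∈ ({b ∈ B | R ≤ #{a ∈ A | r a b}} : Finset β),
        ({a ∈ A | r a b} : Finset α) ∈ A.powerset := fun b _ ↦ mem_powerset.2 (filter_subset _ _)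
    rw [card_eq_sum_card_fiberwise maps, ← card_powerset, ← smul_eq_mul]
    refine sum_le_card_nsmul _ _ _ fun X hX ↦ ?_
    obtain hXR | hXR := le_or_gt R #X
    · exact (card_le_card (filter_subset_filter _ (filter_subset _ _))).trans
        (few X (mem_powerset.1 hX) hXR).le
    · rw [filter_filter, filter_false_of_mem, card_empty]
      · exact Nat.zero_le R
      · rintro b - ⟨hb, rfl⟩
        exact hXR.not_ge hb
  have := calc 2 * R * #B
      ≤ ∑ b ∈ B, (R + if R ≤ #{a ∈ A | r a b} then #A else 0) := h.trans (sum_le_sum card_col_le)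
    _ = #B * R + #{b ∈ B | R ≤ #{a ∈ A | r a b}} * #A := by
        rw [sum_add_distrib, ← sum_filter, sum_const, sum_const, smul_eq_mul, smul_eq_mul]
    _ ≤ #B * R + 2 ^ #A * R * #A := by gcongr
  nlinarith

-- Among boundedly many rows of large degree, averaging over the columns finds `R` columns with
-- the same large set of neighbours among these rows.
theorem exists_biclique_of_dense (hδ : 0 < δ) (hR : 0 < R) :
    ∃ n₀ : ℕ, ∀ (A : Finset α) (B : Finset β) (r : α → β → Prop), n₀ ≤ #A → n₀ ≤ #B →
      δ * #A * #B ≤ #{q ∈ A ×ˢ B | r q.1 q.2} →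
        ∃ X ⊆ A, ∃ Y ⊆ B, R ≤ #X ∧ R ≤ #Y ∧ ∀ x ∈ X, ∀ y ∈ Y, r x y := by
  obtain ⟨M, hM⟩ := exists_nat_ge (4 * R / δ)
  obtain ⟨N, hN⟩ := exists_nat_ge (2 * M / δ)
  rw [div_le_iff₀ hδ] at hM hN
  refine ⟨max N (M * 2 ^ M + 1), fun A B r hA hB hdense ↦ ?_⟩
  have B_large : M * 2 ^ M < #B := (le_max_right _ _).trans hB
  have high_card := half_mul_card_le_card_filter_highDegree hδ.le
    (card_pos.1 (B_large.trans_le' (Nat.zero_le _))) hdense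
  obtain ⟨A', hA', rfl⟩ := exists_subset_card_eq (n := M) (by
    have : (N : ℝ) ≤ #A := by exact_mod_cast (le_max_left _ _).trans hA
    exact_mod_cast (show (M : ℝ) ≤ _ by nlinarith).trans high_card)
  have sum_ge : 2 * R * #B ≤ ∑ b ∈ B, #{a ∈ A' | r a b} := by
    have : (∑ b ∈ B, #{a ∈ A' | r a b}) = ∑ a ∈ A', #{b ∈ B | r a b} :=
      (sum_card_bipartiteAbove_eq_sum_card_bipartiteBelow r).symm
    rw [this]
    have : (#A' : ℝ) * (δ / 2 * #B) ≤ ∑ a ∈ A', (#{b ∈ B | r a b} : ℝ) := by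
      rw [← nsmul_eq_mul]
      exact card_nsmul_le_sum _ _ _ fun a ha ↦ (mem_filter.1 (hA' ha)).2
    have : (2 * R * #B : ℝ) ≤ ∑ a ∈ A', (#{b ∈ B | r a b} : ℝ) := by
      nlinarith [(Nat.cast_nonneg #B : (0 : ℝ) ≤ _)]
    exact_mod_cast this
  obtain ⟨X, hX, hX_card, hY_card⟩ := exists_le_card_fiber_of_sum_le hR
    (by rw [← mul_assoc]; exact Nat.mul_lt_mul_of_pos_right B_large hR) sum_ge
  refine ⟨X, hX.trans (hA'.trans (filter_subset _ _)), _, filter_subset _ _, hX_card, hY_card, ?_⟩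
  rintro x hx y hy
  rw [← (mem_filter.1 hy).2] at hx
  exact (mem_filter.1 hx).2

end Biclique

/-! ### Triangles in graphs without a cycle of given length -/

section Cycles

open scoped FinsetFamily
open SimpleGraph

variable {α : Type*} {G : SimpleGraph α} {ℓ : ℕ}

lemma cycleGraph_isContained_of_isPath (hℓ : 3 ≤ ℓ) {a b : α} {w : G.Walk a b} (hw : w.IsPath)
    (hlen : w.length + 1 = ℓ) (hab : G.Adj a b) : cycleGraph ℓ ⊑ G := by
  refine (cycleGraph_isContained_iff (by lia)).2 ⟨b, .cons hab.symm w, ?_, by simpa using hlen⟩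
  refine (Walk.cons_isCycle_iff w hab.symm).2 ⟨hw, fun hmem ↦ ?_⟩
  have := hw.length_eq_one_of_mem_edges (Sym2.eq_swap ▸ hmem)
  lia

lemma exists_isPath_of_biclique [DecidableEq α] {X Y : Finset α}
    (hXY : ∀ x ∈ X, ∀ y ∈ Y, G.Adj x y) {i : ℕ} (hX : i + 1 ≤ #X) (hY : i + 1 ≤ #Y)
    {x y : α} (hx : x ∈ X) (hy : y ∈ Y) :
    ∃ w : G.Walk x y, w.IsPath ∧ w.length = 2 * i + 1 ∧ ∀ z ∈ w.support, z ∈ X ∪ Y := by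
  induction i generalizing X Y x y with
  | zero =>
    refine ⟨(hXY x hx y hy).toWalk, Walk.IsPath.of_adj _, by simp, fun z hz ↦ ?_⟩
    simp only [Adj.support_toWalk, List.mem_cons, List.not_mem_nil, or_false] at hz
    obtain rfl | rfl := hz <;> simp [hx, hy]
  | succ i ih =>
    have X_card : i + 1 ≤ #(X.erase x) := by rw [card_erase_of_mem hx]; lia
    have Y_card : i + 1 ≤ #(Y.erase y) := by rw [card_erase_of_mem hy]; lia
    obtain ⟨x', hx'⟩ : (X.erase x).Nonempty := card_pos.1 (by lia)
    obtain ⟨y', hy'⟩ : (Y.erase y).Nonempty := card_pos.1 (by lia)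
    obtain ⟨w, hw, w_len, w_support⟩ := ih
      (fun a ha b hb ↦ hXY a (mem_of_mem_erase ha) b (mem_of_mem_erase hb)) X_card Y_card hx' hy'
    have x_notMem : x ∉ Y := fun h ↦ (hXY x hx x h).ne rfl
    have y_notMem : y ∉ X := fun h ↦ (hXY y h y hy).ne rfl
    have x_notMem_w : x ∉ w.reverse.support := fun h ↦ by
      have := w_support x (by simpa using h); simp_all
    have y_notMem_w : y ∉ (Walk.cons (hXY x hx y' (mem_of_mem_erase hy')) w.reverse).support := by
      have := w_support y; have := (hXY x hx y hy).ne'; simp_all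
    refine ⟨_, (hw.reverse.cons x_notMem_w).concat y_notMem_w (hXY x' (mem_of_mem_erase hx') y hy),
      by simp [w_len]; ring, fun z hz ↦ ?_⟩
    have := w_support z
    simp only [Walk.support_concat, Walk.support_cons, Walk.support_reverse] at hz
    simp at hz this ⊢
    grind

lemma card_le_mul_card_shadow [DecidableEq α] {d : ℕ} (𝒯 : Finset (Finset α))
    (h : ∀ 𝒮 ⊆ 𝒯, 𝒮.Nonempty → ∃ e ∈ ∂ 𝒮, #{T ∈ 𝒮 | e ⊆ T} ≤ d) : #𝒯 ≤ d * #(∂ 𝒯) := by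
  induction 𝒯 using Finset.strongInduction with
  | H 𝒯 ih =>
    obtain rfl | h𝒯 := 𝒯.eq_empty_or_nonempty
    · simp
    obtain ⟨e, he, he_card⟩ := h 𝒯 Subset.rfl h𝒯
    set 𝒯' : Finset (Finset α) := {T ∈ 𝒯 | ¬ e ⊆ T}
    have 𝒯'_subset : 𝒯' ⊆ 𝒯 := filter_subset _ _
    have 𝒯'_ssubset : 𝒯' ⊂ 𝒯 := by
      obtain ⟨T, hT, heT⟩ := exists_subset_of_mem_shadow he
      exact filter_ssubset.2 ⟨T, hT, not_not.2 heT⟩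
    have shadow_subset : ∂ 𝒯' ⊆ (∂ 𝒯).erase e := fun f hf ↦ by
      refine mem_erase.2 ⟨?_, shadow_mono 𝒯'_subset hf⟩
      rintro rfl
      obtain ⟨T, hT, hfT⟩ := exists_subset_of_mem_shadow hf
      exact (mem_filter.1 hT).2 hfT
    calc #𝒯 = #{T ∈ 𝒯 | e ⊆ T} + #𝒯' := (card_filter_add_card_filter_not _).symm
      _ ≤ d + d * #((∂ 𝒯).erase e) := by
          gcongr
          exact (ih 𝒯' 𝒯'_ssubset fun 𝒮 h𝒮 ↦ h 𝒮 (h𝒮.trans 𝒯'_subset)).trans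
            (Nat.mul_le_mul_left d (card_le_card shadow_subset))
      _ = d * #(∂ 𝒯) := by rw [← card_erase_add_one he]; ring

lemma exists_insert_mem_notMem_of_card_lt [DecidableEq α] {𝒮 : Finset (Finset α)} {e S : Finset α}
    (h𝒮 : ∀ T ∈ 𝒮, #T = #e + 1) (h : #S < #{T ∈ 𝒮 | e ⊆ T}) : ∃ c ∉ S, c ∉ e ∧ insert c e ∈ 𝒮 := by
  by_contra! hS
  refine h.not_ge ((card_le_card fun T hT ↦ ?_).trans (card_image_le (s := S) (f := (insert · e))))
  obtain ⟨hT𝒮, heT⟩ := mem_filter.1 hT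
  obtain ⟨c, hc, rfl⟩ := exists_eq_insert_iff.2 ⟨heT, (h𝒮 T hT𝒮).symm⟩
  exact mem_image.2 ⟨c, not_imp_comm.1 (hS c) fun h ↦ h hc hT𝒮, rfl⟩

lemma exists_isPath_of_lt_card_filter_subset [DecidableEq α] {𝒮 : Finset (Finset α)}
    (h𝒮 : 𝒮.Nonempty) (hclique : ∀ T ∈ 𝒮, G.IsNClique 3 T)
    (hdeg : ∀ e ∈ ∂ 𝒮, ℓ ≤ #{T ∈ 𝒮 | e ⊆ T}) {m : ℕ} (hm : 1 ≤ m) (hmℓ : m < ℓ) :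
    ∃ (a b : α) (w : G.Walk a b), w.IsPath ∧ w.length = m ∧ G.Adj a b ∧ {a, b} ∈ ∂ 𝒮 := by
  induction m, hm using Nat.le_induction with
  | base =>
    obtain ⟨T, hT⟩ := h𝒮
    obtain ⟨a, b, c, hab, hac, hbc, rfl⟩ := is3Clique_iff.1 (hclique T hT)
    refine ⟨a, b, hab.toWalk, Walk.IsPath.of_adj hab, by simp, hab,
      mem_shadow_iff_insert_mem.2 ⟨c, by simp [hac.ne', hbc.ne'], ?_⟩⟩
    rwa [insert_comm c a, pair_comm c b]
  | succ m _ ih =>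
    obtain ⟨a, b, w, hw, w_len, hab, hab_shadow⟩ := ih (by lia)
    obtain ⟨c, hc, -, hcT⟩ := exists_insert_mem_notMem_of_card_lt (S := w.support.toFinset)
      (fun T hT ↦ by rw [(hclique T hT).card_eq, card_pair hab.ne]) (by
        refine (List.toFinset_card_le _).trans_lt ?_
        rw [Walk.length_support, w_len]
        exact hmℓ.trans_le (hdeg _ hab_shadow))
    rw [List.mem_toFinset] at hc
    obtain ⟨hca, hcb, -⟩ := is3Clique_triple_iff.1 (hclique _ hcT)
    refine ⟨a, c, _, hw.concat hc hcb.symm, by rw [Walk.length_concat, w_len],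
      hca.symm, mem_shadow_iff_insert_mem.2 ⟨b, by simp [hab.ne', hcb.ne'], ?_⟩⟩
    rwa [insert_comm b a, pair_comm b c, insert_comm a c]

lemma card_triangles_le_mul_card_shadow [DecidableEq α] (hℓ : 3 ≤ ℓ) (hG : (cycleGraph ℓ).Free G)
    {𝒯 : Finset (Finset α)} (h𝒯 : ∀ T ∈ 𝒯, G.IsNClique 3 T) : #𝒯 ≤ ℓ * #(∂ 𝒯) := by
  refine card_le_mul_card_shadow 𝒯 fun 𝒮 h𝒮 𝒮_ne ↦ ?_
  by_contra! hdeg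
  obtain ⟨a, b, w, hw, w_len, hab, -⟩ := exists_isPath_of_lt_card_filter_subset 𝒮_ne
    (fun T hT ↦ h𝒯 T (h𝒮 hT)) (fun e he ↦ (hdeg e he).le) (m := ℓ - 1) (by lia) (by lia)
  exact hG (cycleGraph_isContained_of_isPath hℓ hw (by lia) hab)

lemma cycleGraph_isContained_of_biclique {X Y : Finset α} {m : ℕ} (hm : 2 ≤ m) (hX : m ≤ #X)
    (hY : m ≤ #Y) (hXY : ∀ x ∈ X, ∀ y ∈ Y, G.Adj x y) : cycleGraph (2 * m) ⊑ G := by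
  obtain ⟨x, hx⟩ : X.Nonempty := card_pos.1 (by lia)
  obtain ⟨y, hy⟩ : Y.Nonempty := card_pos.1 (by lia)
  obtain ⟨w, hw, w_len, -⟩ := exists_isPath_of_biclique hXY (i := m - 1) (by lia) (by lia) hx hy
  exact cycleGraph_isContained_of_isPath (by lia) hw (by lia) (hXY x hx y hy)

lemma cycleGraph_isContained_of_biclique_of_adj {X Y : Finset α} (hℓ : 3 ≤ ℓ) (hX : ℓ ≤ #X)
    (hY : ℓ ≤ #Y) (hXY : ∀ x ∈ X, ∀ y ∈ Y, G.Adj x y) {x y z : α} (hx : x ∈ X) (hy : y ∈ Y)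
    (hzx : G.Adj z x) (hzy : G.Adj z y) : cycleGraph ℓ ⊑ G := by
  obtain ⟨m, rfl | rfl⟩ := ℓ.even_or_odd'
  · exact cycleGraph_isContained_of_biclique (by lia) (by lia) (by lia) hXY
  · have X_card := pred_card_le_card_erase (s := X) (a := z)
    have Y_card := pred_card_le_card_erase (s := Y) (a := z)
    obtain ⟨w, hw, w_len, w_support⟩ := exists_isPath_of_biclique (X := X.erase z)
      (Y := Y.erase z) (fun a ha b hb ↦ hXY a (mem_of_mem_erase ha) b (mem_of_mem_erase hb))
      (i := m - 1) (by lia) (by lia) (mem_erase.2 ⟨hzx.ne', hx⟩) (mem_erase.2 ⟨hzy.ne', hy⟩)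
    have hz : z ∉ w.support := fun h ↦ by simpa using w_support z h
    refine cycleGraph_isContained_of_isPath hℓ (hw.cons hz (h := hzx)) ?_ hzy
    rw [Walk.length_cons, w_len]
    lia

lemma card_le_card_filter_pair_mem [DecidableEq α] {𝒜 : Finset (Finset α)} {V : Finset α}
    (h𝒜 : 𝒜 ⊆ V.powersetCard 2) : #𝒜 ≤ #{q ∈ V ×ˢ V | {q.1, q.2} ∈ 𝒜} := by
  have subset_image : 𝒜 ⊆ image (fun q ↦ {q.1, q.2}) {q ∈ V ×ˢ V | {q.1, q.2} ∈ 𝒜} := by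
    intro e he
    obtain ⟨heV, he_card⟩ := mem_powersetCard.1 (h𝒜 he)
    obtain ⟨x, y, -, rfl⟩ := card_eq_two.1 he_card
    simp only [insert_subset_iff, singleton_subset_iff] at heV
    exact mem_image.2 ⟨(x, y), mem_filter.2 ⟨mem_product.2 heV, he⟩, rfl⟩
  exact (card_le_card subset_image).trans card_image_le

lemma exists_biclique_of_dense_pairs [DecidableEq α] {δ : ℝ} (hδ : 0 < δ) {R : ℕ} (hR : 0 < R) :
    ∃ n₀ : ℕ, ∀ (V : Finset α), n₀ ≤ #V → ∀ 𝒜 ⊆ V.powersetCard 2, δ * #V ^ 2 ≤ #𝒜 →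
      ∃ X Y : Finset α, R ≤ #X ∧ R ≤ #Y ∧ ∀ x ∈ X, ∀ y ∈ Y, {x, y} ∈ 𝒜 := by
  obtain ⟨n₀, hn₀⟩ := exists_biclique_of_dense (α := α) (β := α) hδ hR
  refine ⟨n₀, fun V hV 𝒜 h𝒜 h𝒜_card ↦ ?_⟩
  have dense : δ * #V * #V ≤ #{q ∈ V ×ˢ V | {q.1, q.2} ∈ 𝒜} := by
    rw [mul_assoc, ← sq]
    exact h𝒜_card.trans (by exact_mod_cast card_le_card_filter_pair_mem h𝒜)
  obtain ⟨X, -, Y, -, hX, hY, hXY⟩ :=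
    hn₀ V V (fun x y ↦ {x, y} ∈ 𝒜) hV hV (by convert dense)
  exact ⟨X, Y, hX, hY, hXY⟩

-- If there are many triangles, then so many pairs lie in a triangle that two large sets of
-- vertices have all pairs between them in triangles; these sets contain cycles of every length.
theorem exists_forall_card_triangles_le [DecidableEq α] (hℓ : 3 ≤ ℓ) {ε : ℝ} (hε : 0 < ε) :
    ∃ n₀ : ℕ, ∀ (V : Finset α) (G : SimpleGraph α), n₀ ≤ #V → (cycleGraph ℓ).Free G →
      (#{T ∈ V.powersetCard 3 | G.IsNClique 3 T} : ℝ) ≤ ε * #V ^ 2 := by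
  obtain ⟨n₀, hn₀⟩ := exists_biclique_of_dense_pairs (α := α) (δ := ε / ℓ) (R := ℓ)
    (by positivity) (by lia)
  refine ⟨n₀, fun V G hV hG ↦ ?_⟩
  by_contra! hmany
  set 𝒯 : Finset (Finset α) := {T ∈ V.powersetCard 3 | G.IsNClique 3 T}
  have h𝒯 : ∀ T ∈ 𝒯, G.IsNClique 3 T := fun T hT ↦ (mem_filter.1 hT).2
  have shadow_subset : ∂ 𝒯 ⊆ V.powersetCard 2 := fun e he ↦ by
    obtain ⟨T, hT, heT, hcard⟩ := mem_shadow_iff_exists_mem_card_add_one.1 he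
    obtain ⟨hTV, hT_card⟩ := mem_powersetCard.1 (mem_filter.1 hT).1
    exact mem_powersetCard.2 ⟨heT.trans hTV, by lia⟩
  have shadow_card : ε / ℓ * #V ^ 2 ≤ #(∂ 𝒯) := by
    have card_𝒯 : (#𝒯 : ℝ) ≤ ℓ * #(∂ 𝒯) := by
      exact_mod_cast card_triangles_le_mul_card_shadow hℓ hG h𝒯
    have : (0 : ℝ) < ℓ := by positivity
    rw [div_mul_eq_mul_div, div_le_iff₀' this]
    exact hmany.le.trans card_𝒯
  obtain ⟨X, Y, hX, hY, hXY⟩ := hn₀ V hV (∂ 𝒯) shadow_subset shadow_card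
  have common_neighbor : ∀ x ∈ X, ∀ y ∈ Y, G.Adj x y ∧ ∃ z, G.Adj z x ∧ G.Adj z y :=
    fun x hx y hy ↦ by
      obtain ⟨z, -, hT⟩ := mem_shadow_iff_insert_mem.1 (hXY x hx y hy)
      obtain ⟨hzx, hzy, hxy⟩ := is3Clique_triple_iff.1 (h𝒯 _ hT)
      exact ⟨hxy, z, hzx, hzy⟩
  obtain ⟨x, hx⟩ : X.Nonempty := card_pos.1 (by lia)
  obtain ⟨y, hy⟩ : Y.Nonempty := card_pos.1 (by lia)
  obtain ⟨-, z, hzx, hzy⟩ := common_neighbor x hx y hy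
  exact hG <| cycleGraph_isContained_of_biclique_of_adj hℓ hX hY
    (fun x hx y hy ↦ (common_neighbor x hx y hy).1) hx hy hzx hzy

end Cycles

/-! ### Edges in a coloured graph -/

section Colorings

variable {α : Type*} {G : SimpleGraph α} {A : Finset α}

lemma exists_not_adj_of_forall_not_isNClique_three (hA : 3 ≤ #A)
    (hG : ∀ T ⊆ A, ¬ G.IsNClique 3 T) : ∃ a ∈ A, ∃ b ∈ A, a ≠ b ∧ ¬ G.Adj a b := by
  obtain ⟨T, hTA, hT_card⟩ := exists_subset_card_eq hA
  by_contra! h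
  exact hG T hTA ⟨fun a ha b hb hab ↦ h a (hTA ha) b (hTA hb) hab, hT_card⟩

variable [DecidableEq α] {W : Finset α → Finset α} {V E : Finset α} {k s b : ℕ} {c : α}

lemma card_filter_subset_powersetCard_le (V B : Finset α) (k : ℕ) :
    #{E ∈ V.powersetCard k | B ⊆ E} ≤ (#(V \ B)).choose (k - #B) := by
  rw [← card_powersetCard]
  refine card_le_card_of_injOn (· \ B) (fun E hE ↦ ?_) fun E hE E' hE' h ↦ ?_
  · obtain ⟨hE, hBE⟩ := mem_filter.1 hE
    obtain ⟨hEV, hE_card⟩ := mem_powersetCard.1 hE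
    exact mem_powersetCard.2
      ⟨sdiff_subset_sdiff hEV subset_rfl, by rw [card_sdiff_of_subset hBE, hE_card]⟩
  · rw [← sdiff_union_of_subset (mem_filter.1 hE).2, ← sdiff_union_of_subset (mem_filter.1 hE').2]
    exact congrArg (· ∪ B) h

lemma card_filter_exists_subset_le {𝓑 : Finset (Finset α)} (h𝓑 : ∀ B ∈ 𝓑, #B = b)
    (V : Finset α) (k : ℕ) :
    #{E ∈ V.powersetCard k | ∃ B ∈ 𝓑, B ⊆ E} ≤ #𝓑 * #V ^ (k - b) := by
  have subset_biUnion : {E ∈ V.powersetCard k | ∃ B ∈ 𝓑, B ⊆ E} ⊆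
      𝓑.biUnion fun B ↦ {E ∈ V.powersetCard k | B ⊆ E} := by
    intro E hE
    obtain ⟨hE, B, hB, hBE⟩ := mem_filter.1 hE
    exact mem_biUnion.2 ⟨B, hB, mem_filter.2 ⟨hE, hBE⟩⟩
  refine (card_le_card subset_biUnion).trans (card_biUnion_le_card_mul _ _ _ fun B hB ↦ ?_)
  calc #{E ∈ V.powersetCard k | B ⊆ E} ≤ (#(V \ B)).choose (k - #B) :=
        card_filter_subset_powersetCard_le V B k
    _ ≤ #(V \ B) ^ (k - #B) := Nat.choose_le_pow _ _
    _ ≤ #V ^ (k - b) := by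
        rw [h𝓑 B hB]
        exact Nat.pow_le_pow_left (card_le_card sdiff_subset) _

/-- An edge is *good* for a graph `G` and an assignment `W` of colours to pairs if each
non-adjacent pair of its vertices has one of its colours in the edge. The colours of a pair are
themselves vertices. -/
def IsGood (G : SimpleGraph α) (W : Finset α → Finset α) (E : Finset α) : Prop :=
  ∀ a ∈ E, ∀ b ∈ E, a ≠ b → ¬ G.Adj a b → (W {a, b} ∩ E).Nonempty

/-- An edge is *two-coloured* if it contains distinct colours `c` and `z` of pairs `q` and `r` of
its vertices, with `c` outside `r`. Such an edge is determined by `E \ {c, z}` up to boundedly many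
choices. -/
def IsTwoColored (W : Finset α → Finset α) (E : Finset α) : Prop :=
  ∃ q ∈ E.powersetCard 2, ∃ r ∈ E.powersetCard 2, ∃ c ∈ W q ∩ E, ∃ z ∈ W r ∩ E, c ≠ z ∧ c ∉ r

/-- The vertex `c` is a *centre* of the edge `E` if it is adjacent to all other vertices of `E` and
is a colour of every pair of them. -/
def IsCenter (G : SimpleGraph α) (W : Finset α → Finset α) (E : Finset α) (c : α) : Prop :=
  (∀ x ∈ E.erase c, G.Adj c x) ∧ ∀ q ∈ (E.erase c).powersetCard 2, c ∈ W q

/-- The sets obtained from `A` by adding a colour of a pair contained in `A`. -/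
def colorExtensions (W : Finset α → Finset α) (A : Finset α) : Finset (Finset α) :=
  ((A.powersetCard 2).biUnion W).image (insert · A)

/-- The pairs contained in `V` that have the colour `c`. -/
def colorClass (W : Finset α → Finset α) (V : Finset α) (c : α) : Finset (Finset α) :=
  {q ∈ V.powersetCard 2 | c ∈ W q}

lemma pair_mem_powersetCard_two {a b : α} (ha : a ∈ A) (hb : b ∈ A) (hab : a ≠ b) :
    {a, b} ∈ A.powersetCard 2 :=
  mem_powersetCard.2 ⟨by simp [insert_subset_iff, ha, hb], card_pair hab⟩

lemma card_colorExtensions_le (hW : ∀ q, #(W q) ≤ s) (hA : #A ≤ k) :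
    #(colorExtensions W A) ≤ k ^ 2 * s := by
  calc #(colorExtensions W A) ≤ #((A.powersetCard 2).biUnion W) := card_image_le
    _ ≤ #(A.powersetCard 2) * s := card_biUnion_le_card_mul _ _ _ fun q _ ↦ hW q
    _ ≤ k ^ 2 * s := by
        rw [card_powersetCard]
        gcongr
        exact (Nat.choose_le_pow _ _).trans (Nat.pow_le_pow_left hA 2)

lemma card_le_of_mem_colorExtensions (hE : E ∈ colorExtensions W A) : #E ≤ #A + 1 := by
  obtain ⟨z, -, rfl⟩ := mem_image.1 hE
  exact card_insert_le _ _

lemma IsTwoColored.exists_mem_colorExtensions (hWq : ∀ q, Disjoint (W q) q)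
    (hE : IsTwoColored W E) :
    ∃ A ⊆ E, #A + 2 = #E ∧ ∃ A' ∈ colorExtensions W A, E ∈ colorExtensions W A' := by
  obtain ⟨q, hq, q', hq', c, hc, z, hz, hcz, hcq'⟩ := hE
  obtain ⟨hqE, hq_card⟩ := mem_powersetCard.1 hq
  obtain ⟨hq'E, hq'_card⟩ := mem_powersetCard.1 hq'
  obtain ⟨hcq, hcE⟩ := mem_inter.1 hc
  obtain ⟨hzq', hzE⟩ := mem_inter.1 hz
  have hz_erase : z ∈ E.erase c := mem_erase.2 ⟨hcz.symm, hzE⟩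
  have hq_erase : q ⊆ E.erase c :=
    subset_erase.2 ⟨hqE, fun h ↦ disjoint_left.1 (hWq q) hcq h⟩
  have hq'_erase : q' ⊆ (E.erase c).erase z :=
    subset_erase.2 ⟨subset_erase.2 ⟨hq'E, hcq'⟩, fun h ↦ disjoint_left.1 (hWq q') hzq' h⟩
  refine ⟨(E.erase c).erase z, (erase_subset _ _).trans (erase_subset _ _), ?_, E.erase c, ?_, ?_⟩
  · rw [← card_erase_add_one hcE, ← card_erase_add_one hz_erase]
  · exact mem_image.2 ⟨z, mem_biUnion.2 ⟨q', mem_powersetCard.2 ⟨hq'_erase, hq'_card⟩, hzq'⟩,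
      insert_erase hz_erase⟩
  · exact mem_image.2 ⟨c, mem_biUnion.2 ⟨q, mem_powersetCard.2 ⟨hq_erase, hq_card⟩, hcq⟩,
      insert_erase hcE⟩

lemma card_filter_isTwoColored_le (hk : 2 ≤ k) (hW : ∀ q, #(W q) ≤ s)
    (hWq : ∀ q, Disjoint (W q) q) (V : Finset α) :
    #{E ∈ V.powersetCard k | IsTwoColored W E} ≤ #V ^ (k - 2) * (k ^ 2 * s) ^ 2 := by
  have subset_biUnion : {E ∈ V.powersetCard k | IsTwoColored W E} ⊆
      (V.powersetCard (k - 2)).biUnion fun A ↦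
        (colorExtensions W A).biUnion (colorExtensions W) := by
    intro E hE
    obtain ⟨hE, hE_two⟩ := mem_filter.1 hE
    obtain ⟨hEV, hE_card⟩ := mem_powersetCard.1 hE
    obtain ⟨A, hAE, hA_card, hA⟩ := hE_two.exists_mem_colorExtensions hWq
    exact mem_biUnion.2
      ⟨A, mem_powersetCard.2 ⟨hAE.trans hEV, by lia⟩, mem_biUnion.2 hA⟩
  refine (card_le_card subset_biUnion).trans <|
    (card_biUnion_le_card_mul _ _ ((k ^ 2 * s) ^ 2) fun A hA ↦ ?_).trans ?_
  · have hA_card := (mem_powersetCard.1 hA).2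
    refine (card_biUnion_le_card_mul _ _ (k ^ 2 * s) fun A' hA' ↦ ?_).trans ?_
    · exact card_colorExtensions_le hW ((card_le_of_mem_colorExtensions hA').trans (by lia))
    · rw [sq (k ^ 2 * s)]
      exact Nat.mul_le_mul_right _ (card_colorExtensions_le hW (by lia))
  · rw [card_powersetCard]
    exact Nat.mul_le_mul_right _ (Nat.choose_le_pow _ _)

-- A second colour `z ≠ c` inside the edge would leave a triangle on `E \ {c, z}`.
lemma IsGood.exists_forall_not_adj_mem (hgood : IsGood G W E) (hE : 5 ≤ #E)
    (htwo : ¬ IsTwoColored W E) (hG : ∀ T ⊆ E, ¬ G.IsNClique 3 T) :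
    ∃ c ∈ E, ∀ x ∈ E, ∀ y ∈ E, x ≠ y → ¬ G.Adj x y → c ∈ W {x, y} := by
  obtain ⟨a, ha, b, hb, hab, hab_adj⟩ :=
    exists_not_adj_of_forall_not_isNClique_three (by lia) hG
  obtain ⟨c, hc⟩ := hgood a ha b hb hab hab_adj
  refine ⟨c, (mem_inter.1 hc).2, fun x hx y hy hxy hxy_adj ↦ ?_⟩
  obtain ⟨z, hz⟩ := hgood x hx y hy hxy hxy_adj
  obtain rfl | hzc := eq_or_ne z c
  · exact (mem_inter.1 hz).1
  have hrest : E \ {c, z} ⊆ E := sdiff_subset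
  have hrest_card : 3 ≤ #(E \ {c, z}) := by
    have := le_card_sdiff {c, z} E
    have := card_le_two (a := c) (b := z)
    lia
  obtain ⟨u, hu, w, hw, huw, huw_adj⟩ := exists_not_adj_of_forall_not_isNClique_three hrest_card
    fun T hT ↦ hG T (hT.trans hrest)
  obtain ⟨r, hr⟩ := hgood u (hrest hu) w (hrest hw) huw huw_adj
  have huw_mem := pair_mem_powersetCard_two (hrest hu) (hrest hw) huw
  simp only [Finset.mem_sdiff, mem_insert, mem_singleton, not_or] at hu hw
  refine absurd ?_ htwo
  obtain rfl | hrc := eq_or_ne r c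
  · exact ⟨_, pair_mem_powersetCard_two hx hy hxy, _, huw_mem, z, hz, r, hr, hzc,
      by simp [Ne.symm hu.2.2, Ne.symm hw.2.2]⟩
  · exact ⟨_, pair_mem_powersetCard_two ha hb hab, _, huw_mem, c, hc, r, hr, hrc.symm,
      by simp [Ne.symm hu.2.1, Ne.symm hw.2.1]⟩

theorem IsGood.exists_isCenter (hgood : IsGood G W E) (hE : 5 ≤ #E)
    (hWq : ∀ q, Disjoint (W q) q) (htwo : ¬ IsTwoColored W E)
    (hG : ∀ T ⊆ E, ¬ G.IsNClique 3 T) : ∃ c ∈ E, IsCenter G W E c := by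
  obtain ⟨c, hc, hcW⟩ := hgood.exists_forall_not_adj_mem hE htwo hG
  have adj_center : ∀ x ∈ E.erase c, G.Adj c x := by
    intro x hx
    obtain ⟨hxc, hxE⟩ := mem_erase.1 hx
    by_contra hcx
    exact disjoint_left.1 (hWq {c, x}) (hcW c hc x hxE hxc.symm hcx) (mem_insert_self _ _)
  refine ⟨c, hc, adj_center, fun q hq ↦ ?_⟩
  obtain ⟨hqE, hq_card⟩ := mem_powersetCard.1 hq
  obtain ⟨x, y, hxy, rfl⟩ := card_eq_two.1 hq_card
  have hx : x ∈ E.erase c := hqE (mem_insert_self _ _)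
  have hy : y ∈ E.erase c := hqE (mem_insert_of_mem (mem_singleton_self _))
  refine hcW x (mem_of_mem_erase hx) y (mem_of_mem_erase hy) hxy fun hadj ↦ hG {c, x, y} ?_
    (SimpleGraph.is3Clique_triple_iff.2 ⟨adj_center x hx, adj_center y hy, hadj⟩)
  simp [insert_subset_iff, hc, mem_of_mem_erase hx, mem_of_mem_erase hy]

lemma sum_card_colorClass_le (hW : ∀ q, #(W q) ≤ s) (V L : Finset α) :
    ∑ c ∈ L, #(colorClass W V c) ≤ s * #V ^ 2 := by
  calc ∑ c ∈ L, #(colorClass W V c) = ∑ q ∈ V.powersetCard 2, #{c ∈ L | c ∈ W q} :=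
        sum_card_bipartiteAbove_eq_sum_card_bipartiteBelow fun c q ↦ c ∈ W q
    _ ≤ #(V.powersetCard 2) • s := sum_le_card_nsmul _ _ _ fun q _ ↦
        (card_le_card fun c hc ↦ (mem_filter.1 hc).2).trans (hW q)
    _ ≤ s * #V ^ 2 := by
        rw [card_powersetCard, smul_eq_mul, mul_comm]
        exact Nat.mul_le_mul_left _ (Nat.choose_le_pow _ _)

lemma IsCenter.exists_disjoint_mem_colorClass (hEV : E ⊆ V) (hE : 5 ≤ #E)
    (hc : c ∈ E) (hcE : IsCenter G W E c) :
    ∃ q ∈ colorClass W V c, ∃ q' ∈ colorClass W V c, insert c (q ∪ q') ⊆ E ∧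
      #(insert c (q ∪ q')) = 5 := by
  have hE_erase := card_erase_add_one hc
  have mem_colorClass : ∀ q ⊆ E.erase c, #q = 2 → q ∈ colorClass W V c := fun q hq hq_card ↦
    mem_filter.2 ⟨mem_powersetCard.2 ⟨(hq.trans (erase_subset _ _)).trans hEV, hq_card⟩,
      hcE.2 q (mem_powersetCard.2 ⟨hq, hq_card⟩)⟩
  obtain ⟨q, hq, hq_card⟩ := exists_subset_card_eq (s := E.erase c) (n := 2) (by lia)
  obtain ⟨q', hq', hq'_card⟩ := exists_subset_card_eq (s := E.erase c \ q) (n := 2)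
    (by rw [card_sdiff_of_subset hq]; lia)
  obtain ⟨hq'E, hqq'⟩ := subset_sdiff.1 hq'
  have hunion := union_subset hq hq'E
  refine ⟨q, mem_colorClass q hq hq_card, q', mem_colorClass q' hq'E hq'_card,
    insert_subset hc (hunion.trans (erase_subset _ _)), ?_⟩
  rw [card_insert_of_notMem fun h ↦ (mem_erase.1 (hunion h)).1 rfl,
    card_union_of_disjoint hqq'.symm, hq_card, hq'_card]

-- An edge with centre `c` contains `c` together with two disjoint pairs of colour `c`.
theorem card_filter_exists_isCenter_le (hk : 5 ≤ k) (hW : ∀ q, #(W q) ≤ s) {L : Finset α} {m : ℝ}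
    (hm : 0 ≤ m) (hL : ∀ c ∈ L, (#(colorClass W V c) : ℝ) ≤ m) :
    (#{E ∈ V.powersetCard k | ∃ c ∈ L, c ∈ E ∧ IsCenter G W E c} : ℝ) ≤
      m * (s * #V ^ 2) * #V ^ (k - 5) := by
  set 𝓑 : Finset (Finset α) := {B ∈ L.biUnion fun c ↦ (colorClass W V c ×ˢ colorClass W V c).image
    fun q ↦ insert c (q.1 ∪ q.2) | #B = 5}
  have subset_filter : {E ∈ V.powersetCard k | ∃ c ∈ L, c ∈ E ∧ IsCenter G W E c} ⊆
      {E ∈ V.powersetCard k | ∃ B ∈ 𝓑, B ⊆ E} := by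
    intro E hE
    obtain ⟨hE, c, hcL, hcE, hc⟩ := mem_filter.1 hE
    obtain ⟨hEV, hE_card⟩ := mem_powersetCard.1 hE
    obtain ⟨q, hq, q', hq', hsub, hcard⟩ :=
      hc.exists_disjoint_mem_colorClass hEV (by lia) hcE
    exact mem_filter.2 ⟨hE, _, mem_filter.2 ⟨mem_biUnion.2 ⟨c, hcL, mem_image_of_mem _
      (mem_product.2 ⟨hq, hq'⟩ : (q, q') ∈ _)⟩, hcard⟩, hsub⟩
  have card_𝓑 : (#𝓑 : ℝ) ≤ m * (s * #V ^ 2) := calc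
    (#𝓑 : ℝ) ≤ ∑ c ∈ L, (#(colorClass W V c) : ℝ) * #(colorClass W V c) := by
      exact_mod_cast (card_filter_le _ _).trans <| card_biUnion_le.trans <|
        sum_le_sum fun c _ ↦ card_image_le.trans (card_product _ _).le
    _ ≤ ∑ c ∈ L, m * #(colorClass W V c) :=
      sum_le_sum fun c hc ↦ mul_le_mul_of_nonneg_right (hL c hc) (Nat.cast_nonneg _)
    _ ≤ m * (s * #V ^ 2) := by
      rw [← mul_sum]
      exact mul_le_mul_of_nonneg_left (by exact_mod_cast sum_card_colorClass_le hW V L) hm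
  calc (#{E ∈ V.powersetCard k | ∃ c ∈ L, c ∈ E ∧ IsCenter G W E c} : ℝ)
      ≤ #𝓑 * #V ^ (k - 5) := by
        exact_mod_cast (card_le_card subset_filter).trans
          (card_filter_exists_subset_le (fun B hB ↦ (mem_filter.1 hB).2) V k)
    _ ≤ m * (s * #V ^ 2) * #V ^ (k - 5) := by gcongr

end Colorings

section HeavyColors

variable {α : Type*} [DecidableEq α] {G : SimpleGraph α} {W : Finset α → Finset α}
  {V S : Finset α} {k ℓ : ℕ}

/-- The colour `c` of the pair `q` is *proper* if `c` is adjacent to both elements of `q`. -/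
def IsProperColor (G : SimpleGraph α) (W : Finset α → Finset α) (q : Finset α) (c : α) : Prop :=
  (∀ x ∈ q, G.Adj c x) ∧ c ∈ W q

/-- Every colour of a pair joined by a path with `ℓ` vertices lies on that path. In the application
the coloured pair would otherwise close the path to a linear cycle of length `ℓ`. -/
def NoClosingColor (ℓ : ℕ) (G : SimpleGraph α) (W : Finset α → Finset α) : Prop :=
  ∀ ⦃a b⦄ (w : G.Walk a b), w.IsPath → w.length + 1 = ℓ → ∀ u ∈ W {a, b}, u ∈ w.support

-- Otherwise the pairs and `S` span a biclique containing a cycle of length `ℓ` if `ℓ` is even, and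
-- a path with `ℓ` vertices joining a pair and avoiding one of its colours if `ℓ` is odd.
lemma card_biUnion_le_of_forall_isProperColor (hℓ : 3 ≤ ℓ) (hG : (SimpleGraph.cycleGraph ℓ).Free G)
    (hW : NoClosingColor ℓ G W) (hS : #S = (ℓ - 1) / 2 + 1) {M : Finset (Finset α)}
    (hM_card : ∀ q ∈ M, #q = 2) (hM : ∀ q ∈ M, ∀ c ∈ S, IsProperColor G W q c) :
    #(M.biUnion id) ≤ (ℓ - 1) / 2 := by
  set X := M.biUnion id
  by_contra! hX
  have adj : ∀ x ∈ X, ∀ c ∈ S, G.Adj x c := by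
    intro x hx c hc
    obtain ⟨q, hq, hxq⟩ := mem_biUnion.1 hx
    exact ((hM q hq c hc).1 x hxq).symm
  obtain heven | hodd : ℓ = 2 * ((ℓ - 1) / 2 + 1) ∨ ℓ = 2 * ((ℓ - 1) / 2) + 1 := by lia
  · refine hG ?_
    rw [heven]
    exact cycleGraph_isContained_of_biclique (by lia) hX hS.ge adj
  obtain ⟨x, hx⟩ : X.Nonempty := card_pos.1 (by lia)
  obtain ⟨q, hq, hxq : x ∈ q⟩ := mem_biUnion.1 hx
  obtain ⟨y, hyx, hq_eq⟩ : ∃ y, y ≠ x ∧ q = {x, y} := by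
    obtain ⟨y, hy⟩ := card_eq_one.1 (show #(q.erase x) = 1 by
      rw [card_erase_of_mem hxq, hM_card q hq])
    exact ⟨y, (mem_erase.1 (hy ▸ mem_singleton_self y)).1, by rw [← hy, insert_erase hxq]⟩
  have hy : y ∈ X := mem_biUnion.2 ⟨q, hq, by simp [hq_eq]⟩
  obtain ⟨c, hc, c', hc', hcc'⟩ := one_lt_card.1 (show 1 < #S by lia)
  obtain ⟨w, hw, hw_length, hw_support⟩ := exists_isPath_of_biclique (G := G)
    (X := X.erase y) (Y := S.erase c) (i := (ℓ - 1) / 2 - 1)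
    (fun x hx z hz ↦ adj x (mem_of_mem_erase hx) z (mem_of_mem_erase hz))
    (by rw [card_erase_of_mem hy]; lia) (by rw [card_erase_of_mem hc]; lia)
    (mem_erase.2 ⟨hyx.symm, hx⟩) (mem_erase.2 ⟨hcc'.symm, hc'⟩)
  have hy_support : y ∉ w.support := fun h ↦ by
    obtain h | h := mem_union.1 (hw_support y h)
    · exact (mem_erase.1 h).1 rfl
    · exact (adj y hy y (mem_of_mem_erase h)).ne rfl
  have hc_support : c ∉ w.support := fun h ↦ by
    obtain h | h := mem_union.1 (hw_support c h)
    · exact (adj c (mem_of_mem_erase h) c hc).ne rfl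
    · exact (mem_erase.1 h).1 rfl
  have := hW (w.concat (adj y hy c' hc').symm) (hw.concat hy_support _)
    (by rw [SimpleGraph.Walk.length_concat]; lia) c (hq_eq ▸ (hM q hq c hc).2)
  rw [SimpleGraph.Walk.support_concat, List.mem_append,
    List.mem_singleton] at this
  exact this.elim hc_support (adj y hy c hc).ne'

lemma card_filter_forall_isProperColor_le (hℓ : 3 ≤ ℓ) (hG : (SimpleGraph.cycleGraph ℓ).Free G)
    (hW : NoClosingColor ℓ G W) (hS : #S = (ℓ - 1) / 2 + 1) (V : Finset α) :
    #{q ∈ V.powersetCard 2 | ∀ c ∈ S, IsProperColor G W q c} ≤ 2 ^ ((ℓ - 1) / 2) := by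
  set M := {q ∈ V.powersetCard 2 | ∀ c ∈ S, IsProperColor G W q c}
  calc #M ≤ #(M.biUnion id).powerset :=
        card_le_card fun q hq ↦ mem_powerset.2 (subset_biUnion_of_mem id hq)
    _ = 2 ^ #(M.biUnion id) := card_powerset _
    _ ≤ 2 ^ ((ℓ - 1) / 2) := Nat.pow_le_pow_right two_pos <|
        card_biUnion_le_of_forall_isProperColor hℓ hG hW hS
          (fun q hq ↦ (mem_powersetCard.1 (mem_filter.1 hq).1).2) fun q hq ↦ (mem_filter.1 hq).2

lemma card_filter_lt_card_isProperColor_le (hℓ : 3 ≤ ℓ) (hG : (SimpleGraph.cycleGraph ℓ).Free G)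
    (hW : NoClosingColor ℓ G W) (V H : Finset α) :
    #{q ∈ V.powersetCard 2 | (ℓ - 1) / 2 < #{c ∈ H | IsProperColor G W q c}} ≤
      2 ^ #H * 2 ^ ((ℓ - 1) / 2) := by
  set t := (ℓ - 1) / 2
  calc #{q ∈ V.powersetCard 2 | t < #{c ∈ H | IsProperColor G W q c}}
      ≤ #((H.powersetCard (t + 1)).biUnion fun S ↦
          {q ∈ V.powersetCard 2 | ∀ c ∈ S, IsProperColor G W q c}) := by
        refine card_le_card fun q hq ↦ ?_
        obtain ⟨hqV, hq⟩ := mem_filter.1 hq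
        obtain ⟨S, hSH, hS_card⟩ := exists_subset_card_eq (Nat.succ_le_of_lt hq)
        exact mem_biUnion.2 ⟨S, mem_powersetCard.2 ⟨hSH.trans (filter_subset _ _), hS_card⟩,
          mem_filter.2 ⟨hqV, fun c hc ↦ (mem_filter.1 (hSH hc)).2⟩⟩
    _ ≤ #(H.powersetCard (t + 1)) * 2 ^ t := card_biUnion_le_card_mul _ _ _ fun S hS ↦
        card_filter_forall_isProperColor_le hℓ hG hW (mem_powersetCard.1 hS).2 V
    _ ≤ 2 ^ #H * 2 ^ t := by
        rw [card_powersetCard]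
        gcongr
        exact Nat.choose_le_two_pow _ _

lemma sum_card_isProperColor_le (hℓ : 3 ≤ ℓ) (hG : (SimpleGraph.cycleGraph ℓ).Free G)
    (hW : NoClosingColor ℓ G W) (V H : Finset α) :
    ∑ q ∈ V.powersetCard 2, #{c ∈ H | IsProperColor G W q c} ≤
      (ℓ - 1) / 2 * (#V).choose 2 + 2 ^ #H * 2 ^ ((ℓ - 1) / 2) * #H := by
  set t := (ℓ - 1) / 2
  calc ∑ q ∈ V.powersetCard 2, #{c ∈ H | IsProperColor G W q c}
      ≤ ∑ q ∈ V.powersetCard 2,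
          (t + if t < #{c ∈ H | IsProperColor G W q c} then #H else 0) := by
        refine sum_le_sum fun q _ ↦ ?_
        have := card_filter_le H (IsProperColor G W q)
        split_ifs <;> lia
    _ = t * (#V).choose 2 +
          #{q ∈ V.powersetCard 2 | t < #{c ∈ H | IsProperColor G W q c}} * #H := by
        rw [sum_add_distrib, ← sum_filter, sum_const, sum_const, card_powersetCard, smul_eq_mul,
          smul_eq_mul, mul_comm t]
    _ ≤ t * (#V).choose 2 + 2 ^ #H * 2 ^ t * #H := by
        gcongr
        exact card_filter_lt_card_isProperColor_le hℓ hG hW V H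

lemma card_mul_choose_two_le_sum_card_isProperColor (H : Finset α) :
    #{E ∈ V.powersetCard k | ∃ c ∈ H, c ∈ E ∧ IsCenter G W E c} * (k - 1).choose 2 ≤
      (∑ q ∈ V.powersetCard 2, #{c ∈ H | IsProperColor G W q c}) * (#V - 2).choose (k - 3) := by
  set 𝓔 := {E ∈ V.powersetCard k | ∃ c ∈ H, c ∈ E ∧ IsCenter G W E c}
  let r (E q : Finset α) : Prop := ∃ c ∈ H, IsProperColor G W q c ∧ insert c q ⊆ E
  have pairs_of_edge : ∀ E ∈ 𝓔, (k - 1).choose 2 ≤ #{q ∈ V.powersetCard 2 | r E q} := by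
    intro E hE
    obtain ⟨hE, c, hcH, hcE, hc⟩ := mem_filter.1 hE
    obtain ⟨hEV, hE_card⟩ := mem_powersetCard.1 hE
    rw [← hE_card, ← card_erase_of_mem hcE, ← card_powersetCard]
    refine card_le_card fun q hq ↦ ?_
    obtain ⟨hqE, hq_card⟩ := mem_powersetCard.1 hq
    have hqE' := hqE.trans (erase_subset _ _)
    exact mem_filter.2 ⟨mem_powersetCard.2 ⟨hqE'.trans hEV, hq_card⟩, c, hcH,
      ⟨fun x hx ↦ hc.1 x (hqE hx), hc.2 q hq⟩, insert_subset hcE hqE'⟩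
  have edges_of_pair : ∀ q ∈ V.powersetCard 2, #{E ∈ 𝓔 | r E q} ≤
      #{c ∈ H | IsProperColor G W q c} * (#V - 2).choose (k - 3) := by
    intro q hq
    obtain ⟨hqV, hq_card⟩ := mem_powersetCard.1 hq
    have subset_biUnion : {E ∈ 𝓔 | r E q} ⊆ {c ∈ H | IsProperColor G W q c}.biUnion fun c ↦
        {E ∈ V.powersetCard k | insert c q ⊆ E} := by
      intro E hE
      obtain ⟨hE, c, hcH, hc, hcE⟩ := mem_filter.1 hE
      exact mem_biUnion.2
        ⟨c, mem_filter.2 ⟨hcH, hc⟩, mem_filter.2 ⟨(mem_filter.1 hE).1, hcE⟩⟩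
    refine (card_le_card subset_biUnion).trans (card_biUnion_le_card_mul _ _ _ fun c hc ↦ ?_)
    have hcq : c ∉ q := fun h ↦ ((mem_filter.1 hc).2.1 c h).ne rfl
    have hcard : #(insert c q) = 3 := by rw [card_insert_of_notMem hcq, hq_card]
    refine (card_filter_subset_powersetCard_le V (insert c q) k).trans ?_
    rw [hcard, ← hq_card, ← card_sdiff_of_subset hqV]
    exact Nat.choose_le_choose _ (card_le_card (sdiff_subset_sdiff subset_rfl (subset_insert _ _)))
  calc #𝓔 * (k - 1).choose 2 ≤ ∑ E ∈ 𝓔, #{q ∈ V.powersetCard 2 | r E q} :=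
        card_nsmul_le_sum _ _ _ pairs_of_edge
    _ = ∑ q ∈ V.powersetCard 2, #{E ∈ 𝓔 | r E q} :=
        sum_card_bipartiteAbove_eq_sum_card_bipartiteBelow r
    _ ≤ _ := (sum_le_sum edges_of_pair).trans_eq (sum_mul _ _ _).symm

-- Most pairs have at most `(ℓ - 1) / 2` proper colours in `H`, and an edge with centre in `H`
-- contains `(k - 1).choose 2` pairs properly coloured by its centre.
theorem card_filter_exists_isCenter_le_choose (hℓ : 3 ≤ ℓ) (hk : 3 ≤ k)
    (hG : (SimpleGraph.cycleGraph ℓ).Free G) (hW : NoClosingColor ℓ G W) (V H : Finset α) :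
    #{E ∈ V.powersetCard k | ∃ c ∈ H, c ∈ E ∧ IsCenter G W E c} ≤
      (ℓ - 1) / 2 * (#V).choose (k - 1) + 2 ^ #H * 2 ^ ((ℓ - 1) / 2) * #H * #V ^ (k - 3) := by
  have hchoose : 0 < (k - 1).choose 2 := Nat.choose_pos (by lia)
  refine Nat.le_of_mul_le_mul_right ?_ hchoose
  set t := (ℓ - 1) / 2
  calc #{E ∈ V.powersetCard k | ∃ c ∈ H, c ∈ E ∧ IsCenter G W E c} * (k - 1).choose 2
      ≤ (t * (#V).choose 2 + 2 ^ #H * 2 ^ t * #H) * (#V - 2).choose (k - 3) :=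
        (card_mul_choose_two_le_sum_card_isProperColor H).trans <|
          Nat.mul_le_mul_right _ (sum_card_isProperColor_le hℓ hG hW V H)
    _ = t * (#V).choose (k - 1) * (k - 1).choose 2 +
          2 ^ #H * 2 ^ t * #H * (#V - 2).choose (k - 3) := by
        rw [mul_assoc t, Nat.choose_mul (by lia), show k - 1 - 2 = k - 3 by lia]
        ring
    _ ≤ t * (#V).choose (k - 1) * (k - 1).choose 2 +
          2 ^ #H * 2 ^ t * #H * #V ^ (k - 3) * (k - 1).choose 2 := by
        rw [mul_assoc (_ * #H)]
        refine Nat.add_le_add_left (Nat.mul_le_mul_left _ ((Nat.choose_le_pow _ _).trans ?_)) _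
        exact (Nat.pow_le_pow_left (Nat.sub_le _ _) _).trans (Nat.le_mul_of_pos_right _ hchoose)
    _ = _ := (add_mul _ _ _).symm

end HeavyColors

section GoodEdges

variable {α : Type*} [DecidableEq α] {G : SimpleGraph α} {W : Finset α → Finset α} {V : Finset α}
  {k ℓ s : ℕ}

lemma card_filter_lt_card_colorClass_le (hW : ∀ q, #(W q) ≤ s) (V : Finset α) {γ : ℝ}
    (hγ : 0 < γ) : #{c ∈ V | γ * #V ^ 2 < #(colorClass W V c)} ≤ ⌊s / γ⌋₊ := by
  set H := {c ∈ V | γ * #V ^ 2 < #(colorClass W V c)}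
  obtain rfl | hV := V.eq_empty_or_nonempty
  · simp [H]
  have hV : (0 : ℝ) < #V ^ 2 := by have := hV.card_pos; positivity
  refine Nat.le_floor ((le_div_iff₀ hγ).2 (le_of_mul_le_mul_right ?_ hV))
  calc #H * γ * #V ^ 2 = ∑ _ ∈ H, γ * #V ^ 2 := by rw [sum_const, nsmul_eq_mul, mul_assoc]
    _ ≤ ∑ c ∈ H, (#(colorClass W V c) : ℝ) := sum_le_sum fun _ hc ↦ (mem_filter.1 hc).2.le
    _ ≤ s * #V ^ 2 := by exact_mod_cast sum_card_colorClass_le hW V H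

lemma filter_isGood_subset (hk : 5 ≤ k) (hWq : ∀ q, Disjoint (W q) q) (P : α → Prop) :
    {E ∈ V.powersetCard k | IsGood G W E} ⊆
      ({E ∈ V.powersetCard k | ∃ T ∈ {T ∈ V.powersetCard 3 | G.IsNClique 3 T}, T ⊆ E} ∪
        {E ∈ V.powersetCard k | IsTwoColored W E}) ∪
      ({E ∈ V.powersetCard k | ∃ c ∈ {c ∈ V | ¬ P c}, c ∈ E ∧ IsCenter G W E c} ∪
        {E ∈ V.powersetCard k | ∃ c ∈ {c ∈ V | P c}, c ∈ E ∧ IsCenter G W E c}) := by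
  intro E hE
  obtain ⟨hE, hgood⟩ := mem_filter.1 hE
  obtain ⟨hEV, hE_card⟩ := mem_powersetCard.1 hE
  simp only [mem_union, mem_filter, hE, true_and]
  by_contra! h
  obtain ⟨⟨htri, htwo⟩, hlight, hheavy⟩ := h
  obtain ⟨c, hcE, hc⟩ := hgood.exists_isCenter (by lia) hWq htwo fun T hTE hT ↦
    htri T ⟨mem_powersetCard.2 ⟨hTE.trans hEV, hT.card_eq⟩, hT⟩ hTE
  by_cases hP : P c
  · exact hheavy c ⟨hEV hcE, hP⟩ hcE hc
  · exact hlight c ⟨hEV hcE, hP⟩ hcE hc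

lemma card_filter_isGood_le (hk : 5 ≤ k) (hℓ : 3 ≤ ℓ) (hW : ∀ q, #(W q) ≤ s)
    (hWq : ∀ q, Disjoint (W q) q) (hG : (SimpleGraph.cycleGraph ℓ).Free G)
    (hclose : NoClosingColor ℓ G W) (hV : V.Nonempty) {γ : ℝ} (hγ : 0 < γ) :
    (#{E ∈ V.powersetCard k | IsGood G W E} : ℝ) ≤
      ((ℓ - 1) / 2 : ℕ) * (#V).choose (k - 1) +
        #{T ∈ V.powersetCard 3 | G.IsNClique 3 T} * #V ^ (k - 3) + γ * s * #V ^ (k - 1) +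
        ((k ^ 2 * s) ^ 2 + 2 ^ ⌊s / γ⌋₊ * 2 ^ ((ℓ - 1) / 2) * ⌊s / γ⌋₊) * #V ^ (k - 2) := by
  set H := {c ∈ V | γ * #V ^ 2 < #(colorClass W V c)}
  have hV : (1 : ℝ) ≤ #V := by exact_mod_cast hV.card_pos
  have subset := filter_isGood_subset (G := G) (V := V) hk hWq
    fun c ↦ γ * #V ^ 2 < #(colorClass W V c)
  have triangles := card_filter_exists_subset_le (b := 3)
    (𝓑 := {T ∈ V.powersetCard 3 | G.IsNClique 3 T}) (fun T hT ↦ (mem_filter.1 hT).2.card_eq) V k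
  have twoColored := card_filter_isTwoColored_le (k := k) (by lia) hW hWq V
  have light := card_filter_exists_isCenter_le (G := G) (V := V)
    (L := {c ∈ V | ¬ γ * #V ^ 2 < #(colorClass W V c)}) (m := γ * #V ^ 2) hk hW (by positivity)
    fun c hc ↦ not_lt.1 (mem_filter.1 hc).2
  have heavy : (#{E ∈ V.powersetCard k | ∃ c ∈ H, c ∈ E ∧ IsCenter G W E c} : ℝ) ≤
      ((ℓ - 1) / 2 : ℕ) * (#V).choose (k - 1) +
        2 ^ ⌊s / γ⌋₊ * 2 ^ ((ℓ - 1) / 2) * ⌊s / γ⌋₊ * #V ^ (k - 2) := by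
    have hH : #H ≤ ⌊s / γ⌋₊ := card_filter_lt_card_colorClass_le hW V hγ
    have := card_filter_exists_isCenter_le_choose hℓ (k := k) (by lia) hG hclose V H
    calc (#{E ∈ V.powersetCard k | ∃ c ∈ H, c ∈ E ∧ IsCenter G W E c} : ℝ)
        ≤ ((ℓ - 1) / 2 : ℕ) * (#V).choose (k - 1) +
          2 ^ #H * 2 ^ ((ℓ - 1) / 2) * #H * #V ^ (k - 3) := by exact_mod_cast this
      _ ≤ _ := by
        gcongr
        all_goals norm_num
  have light_eq : γ * #V ^ 2 * (s * #V ^ 2) * (#V : ℝ) ^ (k - 5) = γ * s * #V ^ (k - 1) := by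
    rw [show k - 1 = 2 + 2 + (k - 5) by lia]
    ring
  have union := (card_le_card subset).trans <| (card_union_le _ _).trans <|
    add_le_add (card_union_le _ _) (card_union_le _ _)
  calc (#{E ∈ V.powersetCard k | IsGood G W E} : ℝ)
      ≤ (#{T ∈ V.powersetCard 3 | G.IsNClique 3 T} * #V ^ (k - 3) +
          #V ^ (k - 2) * (k ^ 2 * s) ^ 2) + (γ * s * #V ^ (k - 1) +
          (((ℓ - 1) / 2 : ℕ) * (#V).choose (k - 1) +
            2 ^ ⌊s / γ⌋₊ * 2 ^ ((ℓ - 1) / 2) * ⌊s / γ⌋₊ * #V ^ (k - 2))) := by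
        refine (Nat.cast_le.2 union).trans ?_
        push_cast
        rw [light_eq] at light
        gcongr
        · exact_mod_cast triangles
        · exact_mod_cast twoColored
    _ = _ := by ring

lemma exists_pow_le_mul_choose (r : ℕ) :
    ∃ K : ℝ, 0 < K ∧ ∀ n : ℕ, 2 * r ≤ n → (n : ℝ) ^ r ≤ K * n.choose r := by
  refine ⟨2 ^ r * r.factorial, by positivity, fun n hn ↦ ?_⟩
  have : n ^ r ≤ 2 ^ r * r.factorial * n.choose r :=
    calc n ^ r ≤ (2 * (n + 1 - r)) ^ r := Nat.pow_le_pow_left (by lia) r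
      _ = 2 ^ r * (n + 1 - r) ^ r := mul_pow _ _ _
      _ ≤ 2 ^ r * n.descFactorial r := Nat.mul_le_mul_left _ (Nat.pow_sub_le_descFactorial n r)
      _ = 2 ^ r * r.factorial * n.choose r := by
          rw [Nat.descFactorial_eq_factorial_mul_choose, mul_assoc]
  exact_mod_cast this

theorem exists_forall_card_isGood_le (hk : 5 ≤ k) (hℓ : 3 ≤ ℓ) (s : ℕ) {ε : ℝ} (hε : 0 < ε) :
    ∃ n₀ : ℕ, ∀ (V : Finset α) (G : SimpleGraph α) (W : Finset α → Finset α), n₀ ≤ #V →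
      (∀ q, #(W q) ≤ s) → (∀ q, Disjoint (W q) q) → (SimpleGraph.cycleGraph ℓ).Free G →
      NoClosingColor ℓ G W →
        (#{E ∈ V.powersetCard k | IsGood G W E} : ℝ) ≤
          (((ℓ - 1) / 2 : ℕ) + ε) * (#V).choose (k - 1) := by
  obtain ⟨K, hK, hpow⟩ := exists_pow_le_mul_choose (k - 1)
  obtain ⟨δ, hδ, hδK⟩ : ∃ δ : ℝ, 0 < δ ∧ 3 * δ * K = ε :=
    ⟨ε / (3 * K), by positivity, by field_simp⟩
  obtain ⟨n₁, hn₁⟩ := exists_forall_card_triangles_le (α := α) hℓ hδ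
  obtain ⟨γ, hγ, hγs⟩ : ∃ γ : ℝ, 0 < γ ∧ γ * s ≤ δ := by
    refine ⟨δ / (s + 1), by positivity, ?_⟩
    rw [div_mul_eq_mul_div, div_le_iff₀ (by positivity)]
    gcongr
    linarith
  set A : ℝ := (k ^ 2 * s) ^ 2 + 2 ^ ⌊s / γ⌋₊ * 2 ^ ((ℓ - 1) / 2) * ⌊s / γ⌋₊
  refine ⟨n₁ + ⌈A / δ⌉₊ + 2 * k, fun V G W hV hW hWq hG hclose ↦ ?_⟩
  have hA : A ≤ δ * #V := by
    rw [← div_le_iff₀' hδ]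
    exact (Nat.le_ceil _).trans (by exact_mod_cast show ⌈A / δ⌉₊ ≤ #V by lia)
  calc (#{E ∈ V.powersetCard k | IsGood G W E} : ℝ)
      ≤ ((ℓ - 1) / 2 : ℕ) * (#V).choose (k - 1) + δ * #V ^ 2 * #V ^ (k - 3) +
          δ * #V ^ (k - 1) + δ * #V * #V ^ (k - 2) := by
        have := card_filter_isGood_le hk hℓ hW hWq hG hclose (card_pos.1 (by lia : 0 < #V)) hγ
        refine this.trans ?_
        gcongr
        exact hn₁ V G (by lia) hG
    _ = ((ℓ - 1) / 2 : ℕ) * (#V).choose (k - 1) + 3 * δ * #V ^ (k - 1) := by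
        rw [show k - 1 = 2 + (k - 3) by lia, show k - 2 = 1 + (k - 3) by lia]
        ring
    _ ≤ ((ℓ - 1) / 2 : ℕ) * (#V).choose (k - 1) + 3 * δ * (K * (#V).choose (k - 1)) := by
        gcongr
        exact hpow _ (by lia)
    _ = (((ℓ - 1) / 2 : ℕ) + ε) * (#V).choose (k - 1) := by rw [← hδK]; ring

end GoodEdges

/-! ### Fingerprints -/

section Fingerprints

variable {α : Type} [DecidableEq α] {F : Finset (Finset α)} {V q T : Finset α} {s : ℕ} {m : ℝ}

lemma isRobust_of_le_uDeg (hm : 0 < m) (hF : ∀ w ∉ T, s * (uDeg F (insert w T) : ℝ) < m)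
    (hT : m ≤ uDeg F T) : IsRobust s F T := by
  intro S hS hST
  by_contra! h
  have subset_biUnion : {E ∈ F | T ⊆ E} ⊆ S.biUnion fun w ↦ {E ∈ F | insert w T ⊆ E} := by
    intro E hE
    obtain ⟨hE, hTE⟩ := mem_filter.1 hE
    obtain ⟨w, hwE, hwS⟩ := not_disjoint_iff.1 (h E hE hTE)
    exact mem_biUnion.2 ⟨w, hwS, mem_filter.2 ⟨hE, insert_subset hwE hTE⟩⟩
  have hT_le : uDeg F T ≤ ∑ w ∈ S, uDeg F (insert w T) :=
    (card_le_card subset_biUnion).trans card_biUnion_le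
  have hS_pos : S.Nonempty := by
    by_contra! hS
    rw [hS, sum_empty] at hT_le
    exact absurd (hm.trans_le hT) (by simpa using hT_le)
  have hs : (0 : ℝ) < s := by exact_mod_cast hS_pos.card_pos.trans_le hS
  have : s * m < s * m :=
    calc s * m ≤ s * (uDeg F T : ℝ) := by gcongr
      _ ≤ ∑ w ∈ S, s * (uDeg F (insert w T) : ℝ) := by
          rw [← mul_sum]
          gcongr
          exact_mod_cast hT_le
      _ < ∑ _ ∈ S, m := sum_lt_sum_of_nonempty hS_pos fun w hw ↦ hF w (disjoint_left.1 hST hw)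
      _ = #S * m := by rw [sum_const, nsmul_eq_mul]
      _ ≤ s * m := by gcongr
  exact this.false

/-- `A` is a *fingerprint* in `V` of the family `F` at `q`. Robustness of `q` is recorded by
`A = q`. Otherwise `A \ q` consists of vertices that extend `q` to a set of degree at least `m`, and
meets all but `s * m` of the edges through `q`. -/
structure IsFingerprintAt (s : ℕ) (m : ℝ) (V : Finset α) (F : Finset (Finset α)) (q A : Finset α) :
    Prop where
  subset : A ⊆ V
  card_le : #A ≤ s
  isRobust : A = q → IsRobust s F q
  le_uDeg : ∀ u ∈ A \ q, m ≤ uDeg F (insert u q)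
  card_filter_le : A ≠ q → (#{E ∈ F | q ⊆ E ∧ Disjoint (A \ q) E} : ℝ) ≤ s * m

lemma card_filter_disjoint_le_of_forall_not_disjoint {S : Finset α} (hF : ∀ E ∈ F, E ⊆ V)
    (hm : 0 ≤ m) (hS : #S ≤ s) (hblock : ∀ E ∈ F, q ⊆ E → ¬ Disjoint E S) :
    (#{E ∈ F | q ⊆ E ∧ Disjoint {w ∈ S ∩ V | m ≤ uDeg F (insert w q)} E} : ℝ) ≤ s * m := by
  have subset_biUnion : {E ∈ F | q ⊆ E ∧ Disjoint {w ∈ S ∩ V | m ≤ uDeg F (insert w q)} E} ⊆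
      {w ∈ S | (uDeg F (insert w q) : ℝ) < m}.biUnion fun w ↦ {E ∈ F | insert w q ⊆ E} := by
    intro E hE
    obtain ⟨hE, hqE, hdisj⟩ := mem_filter.1 hE
    obtain ⟨w, hwE, hwS⟩ := not_disjoint_iff.1 (hblock E hE hqE)
    refine mem_biUnion.2 ⟨w, mem_filter.2 ⟨hwS, ?_⟩, mem_filter.2 ⟨hE, insert_subset hwE hqE⟩⟩
    by_contra! h
    exact disjoint_left.1 hdisj (mem_filter.2 ⟨mem_inter.2 ⟨hwS, hF E hE hwE⟩, h⟩) hwE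
  have card_le := (card_le_card subset_biUnion).trans card_biUnion_le
  calc (#{E ∈ F | q ⊆ E ∧ Disjoint {w ∈ S ∩ V | m ≤ uDeg F (insert w q)} E} : ℝ)
      ≤ ∑ w ∈ S with (uDeg F (insert w q) : ℝ) < m, (uDeg F (insert w q) : ℝ) := by
        exact_mod_cast card_le
    _ ≤ ∑ w ∈ S with (uDeg F (insert w q) : ℝ) < m, m :=
        sum_le_sum fun w hw ↦ (mem_filter.1 hw).2.le
    _ ≤ s * m := by
        rw [sum_const, nsmul_eq_mul]
        gcongr
        exact (card_filter_le _ _).trans hS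

lemma exists_isFingerprintAt (hF : ∀ E ∈ F, E ⊆ V) (hm : 0 ≤ m) (hq : q.Nonempty) (hqV : q ⊆ V)
    (hqs : #q ≤ s) : ∃ A, IsFingerprintAt s m V F q A := by
  by_cases hrobust : IsRobust s F q
  · exact ⟨q, hqV, hqs, fun _ ↦ hrobust, by simp, fun h ↦ absurd rfl h⟩
  obtain ⟨S, hS, hSq, hblock⟩ :
      ∃ S, #S ≤ s ∧ Disjoint S q ∧ ∀ E ∈ F, q ⊆ E → ¬ Disjoint E S := by
    simpa only [IsRobust, not_forall, not_exists, not_and, exists_prop] using hrobust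
  have subset_S : {w ∈ S ∩ V | m ≤ uDeg F (insert w q)} ⊆ S :=
    (filter_subset _ _).trans inter_subset_left
  have disjoint_q : Disjoint {w ∈ S ∩ V | m ≤ uDeg F (insert w q)} q := hSq.mono_left subset_S
  refine ⟨{w ∈ S ∩ V | m ≤ uDeg F (insert w q)}, (filter_subset _ _).trans inter_subset_right,
    (card_le_card subset_S).trans hS, fun h ↦ ?_, fun u hu ↦ ?_, fun _ ↦ ?_⟩
  · rw [h, disjoint_self_iff_empty] at disjoint_q
    exact absurd disjoint_q hq.ne_empty
  · exact (mem_filter.1 (Finset.mem_sdiff.1 hu).1).2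
  · rw [sdiff_eq_self_of_disjoint disjoint_q]
    exact card_filter_disjoint_le_of_forall_not_disjoint hF hm hS hblock

/-- `f` records a fingerprint of `F` at every pair of vertices in `V`, and nothing elsewhere. -/
def IsFingerprint (s : ℕ) (m : ℝ) (V : Finset α) (F : Finset (Finset α))
    (f : Finset α → Finset α) : Prop :=
  ∀ q, if q ∈ V.powersetCard 2 then IsFingerprintAt s m V F q (f q) else f q = ∅

lemma exists_isFingerprint (hF : ∀ E ∈ F, E ⊆ V) (hm : 0 ≤ m) (hs : 2 ≤ s) :
    ∃ f, IsFingerprint s m V F f := by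
  choose f hf using fun q ↦ show ∃ A : Finset α,
      if q ∈ V.powersetCard 2 then IsFingerprintAt s m V F q A else A = ∅ by
    split_ifs with hq
    · obtain ⟨hqV, hq⟩ := mem_powersetCard.1 hq
      exact exists_isFingerprintAt hF hm (card_pos.1 (by lia)) hqV (by lia)
    · exact ⟨∅, rfl⟩
  exact ⟨f, hf⟩

/-- The graph of the pairs recorded as robust by `f`. -/
def fingerprintGraph (f : Finset α → Finset α) : SimpleGraph α where
  Adj a b := a ≠ b ∧ f {a, b} = {a, b}
  symm := ⟨fun _ _ h ↦ ⟨h.1.symm, by rw [pair_comm, h.2]⟩⟩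
  loopless := ⟨fun _ h ↦ h.1 rfl⟩

/-- The vertices recorded by `f` as the colours of a pair; robust pairs have none. -/
def fingerprintColors (f : Finset α → Finset α) (q : Finset α) : Finset α := f q \ q

variable {f : Finset α → Finset α} {a b u : α}

namespace IsFingerprint

lemma isFingerprintAt (hf : IsFingerprint s m V F f) (hq : q ∈ V.powersetCard 2) :
    IsFingerprintAt s m V F q (f q) := by
  simpa only [if_pos hq] using hf q

lemma eq_empty (hf : IsFingerprint s m V F f) (hq : q ∉ V.powersetCard 2) : f q = ∅ := by
  simpa only [if_neg hq] using hf q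

lemma isRobust_of_adj (hf : IsFingerprint s m V F f) (hab : (fingerprintGraph f).Adj a b) :
    IsRobust s F {a, b} := by
  by_cases hq : {a, b} ∈ V.powersetCard 2
  · exact (hf.isFingerprintAt hq).isRobust hab.2
  · exact absurd ((hf.eq_empty hq).symm.trans hab.2) (insert_ne_empty _ _).symm

lemma isRobust_insert (hf : IsFingerprint s m V F f) (hm : 0 < m)
    (hF : ∀ B : Finset α, #B = 4 → s * (uDeg F B : ℝ) < m) (hu : u ∈ fingerprintColors f q) :
    IsRobust s F (insert u q) := by
  have hq : q ∈ V.powersetCard 2 := by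
    by_contra hq
    simp [fingerprintColors, hf.eq_empty hq] at hu
  refine isRobust_of_le_uDeg hm (fun w hw ↦ hF _ ?_) ((hf.isFingerprintAt hq).le_uDeg u hu)
  rw [card_insert_of_notMem hw, card_insert_of_notMem (Finset.mem_sdiff.1 hu).2,
    (mem_powersetCard.1 hq).2]

lemma card_filter_not_isGood_le (hf : IsFingerprint s m V F f) (hm : 0 ≤ m)
    (hF : ∀ E ∈ F, E ⊆ V) :
    (#{E ∈ F | ¬ IsGood (fingerprintGraph f) (fingerprintColors f) E} : ℝ) ≤
      #V ^ 2 * (s * m) := by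
  have subset_biUnion : {E ∈ F | ¬ IsGood (fingerprintGraph f) (fingerprintColors f) E} ⊆
      {q ∈ V.powersetCard 2 | f q ≠ q}.biUnion
        fun q ↦ {E ∈ F | q ⊆ E ∧ Disjoint (f q \ q) E} := by
    intro E hE
    obtain ⟨hE, hgood⟩ := mem_filter.1 hE
    simp only [IsGood, not_forall, not_nonempty_iff_eq_empty, exists_prop] at hgood
    obtain ⟨a, ha, b, hb, hab, hadj, hdisj⟩ := hgood
    exact mem_biUnion.2 ⟨{a, b}, mem_filter.2
      ⟨pair_mem_powersetCard_two (hF E hE ha) (hF E hE hb) hab, fun h ↦ hadj ⟨hab, h⟩⟩,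
      mem_filter.2 ⟨hE, insert_subset ha (singleton_subset_iff.2 hb),
        disjoint_iff_inter_eq_empty.2 hdisj⟩⟩
  have card_pairs : #{q ∈ V.powersetCard 2 | f q ≠ q} ≤ #V ^ 2 :=
    (card_filter_le _ _).trans (card_powersetCard 2 V ▸ Nat.choose_le_pow _ _)
  have card_le := (card_le_card subset_biUnion).trans card_biUnion_le
  calc (#{E ∈ F | ¬ IsGood (fingerprintGraph f) (fingerprintColors f) E} : ℝ)
      ≤ ∑ q ∈ V.powersetCard 2 with f q ≠ q, (#{E ∈ F | q ⊆ E ∧ Disjoint (f q \ q) E} : ℝ) := by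
        exact_mod_cast card_le
    _ ≤ ∑ q ∈ V.powersetCard 2 with f q ≠ q, s * m := sum_le_sum fun q hq ↦
        (hf.isFingerprintAt (mem_filter.1 hq).1).card_filter_le (mem_filter.1 hq).2
    _ ≤ #V ^ 2 * (s * m) := by
        rw [sum_const, nsmul_eq_mul]
        gcongr
        exact_mod_cast card_pairs

end IsFingerprint

lemma card_filter_powerset_card_le {β : Type*} {V : Finset β} (hV : s + 1 ≤ #V) :
    #{A ∈ V.powerset | #A ≤ s} ≤ #V ^ (s + 1) := by
  have subset_biUnion : {A ∈ V.powerset | #A ≤ s} ⊆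
      (range (s + 1)).biUnion fun i ↦ V.powersetCard i := by
    intro A hA
    obtain ⟨hAV, hAs⟩ := mem_filter.1 hA
    exact mem_biUnion.2 ⟨#A, by simpa using hAs, mem_powersetCard.2 ⟨mem_powerset.1 hAV, rfl⟩⟩
  calc #{A ∈ V.powerset | #A ≤ s} ≤ #(range (s + 1)) * #V ^ s := by
        refine (card_le_card subset_biUnion).trans (card_biUnion_le_card_mul _ _ _ fun i hi ↦ ?_)
        rw [card_powersetCard]
        have : i ≤ s := by simpa using hi
        exact (Nat.choose_le_pow _ _).trans (Nat.pow_le_pow_right (by lia) this)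
    _ ≤ #V * #V ^ s := by rw [card_range]; gcongr
    _ = #V ^ (s + 1) := (pow_succ' _ s).symm

/-- The functions assigning a subset of `V` of size at most `s` to every pair in `V`, and `∅` to
all other sets. -/
noncomputable def fingerprintFunctions (s : ℕ) (V : Finset α) : Finset (Finset α → Finset α) :=
  ((V.powersetCard 2).pi fun _ ↦ {A ∈ V.powerset | #A ≤ s}).image
    fun g q ↦ if hq : q ∈ V.powersetCard 2 then g q hq else ∅

lemma card_fingerprintFunctions_le (hV : s + 1 ≤ #V) :
    #(fingerprintFunctions s V) ≤ (#V ^ (s + 1)) ^ #V ^ 2 := by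
  refine card_image_le.trans ?_
  rw [card_pi, prod_const, card_powersetCard]
  calc #{A ∈ V.powerset | #A ≤ s} ^ (#V).choose 2 ≤ (#V ^ (s + 1)) ^ (#V).choose 2 :=
        Nat.pow_le_pow_left (card_filter_powerset_card_le hV) _
    _ ≤ (#V ^ (s + 1)) ^ #V ^ 2 :=
        Nat.pow_le_pow_right (Nat.pow_pos (by lia)) (Nat.choose_le_pow _ 2)

lemma card_le_of_mem_fingerprintFunctions (hf : f ∈ fingerprintFunctions s V) (q : Finset α) :
    #(f q) ≤ s := by
  obtain ⟨g, hg, rfl⟩ := mem_image.1 hf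
  beta_reduce
  split_ifs with hq
  · exact (mem_filter.1 (mem_pi.1 hg q hq)).2
  · simp

lemma IsFingerprint.mem_fingerprintFunctions (hf : IsFingerprint s m V F f) :
    f ∈ fingerprintFunctions s V := by
  refine mem_image.2 ⟨fun q _ ↦ f q, mem_pi.2 fun q hq ↦ ?_, funext fun q ↦ ?_⟩
  · exact mem_filter.2
      ⟨mem_powerset.2 (hf.isFingerprintAt hq).subset, (hf.isFingerprintAt hq).card_le⟩
  · split_ifs with hq
    · rfl
    · exact (hf.eq_empty hq).symm

end Fingerprints

section Containers

variable {α : Type} [DecidableEq α] {C : Finset (Finset α)} {F : Finset (Finset ℕ)} {V : Finset ℕ}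
  {f : Finset ℕ → Finset ℕ} {k ℓ : ℕ} {m : ℝ}

namespace IsFingerprint

lemma free_cycleGraph (hf : IsFingerprint ((k + 3) * ℓ) m V F f) (hℓ : 3 ≤ ℓ)
    (hC : IsLinearCycle k ℓ C) (hF : ∀ E ∈ F, #E = k) (hfree : HFree C F) :
    (SimpleGraph.cycleGraph ℓ).Free (fingerprintGraph f) := by
  obtain ⟨n, rfl⟩ : ∃ n, ℓ = n + 2 := ⟨ℓ - 2, by lia⟩
  rintro ⟨v⟩
  refine hC.not_hFree_of_isRobust hℓ hF v.injective (U := fun _ ↦ ∅)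
    (fun _ _ _ ↦ disjoint_empty_left _) (by simp) (by simp) (fun i ↦ ?_) hfree
  rw [empty_union]
  exact hf.isRobust_of_adj (v.toHom.map_adj (SimpleGraph.cycleGraph_adj.2 (by simp)))

lemma noClosingColor (hf : IsFingerprint ((k + 3) * ℓ) m V F f) (hm : 0 < m) (hℓ : 3 ≤ ℓ)
    (hC : IsLinearCycle k ℓ C) (hF : ∀ E ∈ F, #E = k)
    (hF_deg : ∀ B : Finset ℕ, #B = 4 → ((k + 3) * ℓ : ℕ) * (uDeg F B : ℝ) < m)
    (hfree : HFree C F) : NoClosingColor ℓ (fingerprintGraph f) (fingerprintColors f) := by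
  intro a b w hw hlen u hu
  subst hlen
  by_contra hu_support
  set v : Fin (w.length + 1) → ℕ := fun i ↦ w.getVert i
  have hv : v.Injective := fun i j h ↦
    Fin.ext (hw.getVert_injOn (Nat.lt_succ_iff.1 i.2) (Nat.lt_succ_iff.1 j.2) h)
  have hvu : ∀ i, v i ≠ u := fun i h ↦ hu_support (h ▸ w.getVert_mem_support i)
  refine hC.not_hFree_of_isRobust hℓ hF hv
    (U := fun i ↦ if i = Fin.last w.length then {u} else ∅) ?_ ?_ ?_ ?_ hfree
  · intro i j hij
    split_ifs with hi hj <;> simp_all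
  · intro i j
    split_ifs <;> simp [hvu j]
  · intro i
    split_ifs <;> simp
  · intro i
    induction i using Fin.lastCases with
    | last =>
      have := hf.isRobust_insert hm hF_deg hu
      simpa [v, insert_comm u a, pair_comm b a, ← insert_eq] using this
    | cast i =>
      have := hf.isRobust_of_adj (w.adj_getVert_succ i.2)
      simpa [v, Fin.coeSucc_eq_succ, i.castSucc_lt_last.ne] using this

end IsFingerprint

lemma card_vtx (n : ℕ) : #(vtx n) = n := by simp [vtx]

-- Each container consists of the edges that are good for one fingerprint.
theorem exists_containers (hk : 5 ≤ k) (hℓ : 3 ≤ ℓ) (hC : IsLinearCycle k ℓ C) {ε : ℝ}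
    (hε : 0 < ε) :
    ∃ n₀ : ℕ, ∀ n, n₀ ≤ n → ∃ 𝓒 : Finset (Finset (Finset ℕ)),
      #𝓒 ≤ (n ^ ((k + 3) * ℓ + 1)) ^ n ^ 2 ∧
      (∀ 𝒢 ∈ 𝓒, 𝒢 ⊆ (vtx n).powersetCard k ∧
        (#𝒢 : ℝ) ≤ (((ℓ - 1) / 2 : ℕ) + ε) * n.choose (k - 1)) ∧
      ∀ F ⊆ (vtx n).powersetCard k, HFree C F → ∀ d : ℝ, 0 < d →
        (∀ B : Finset ℕ, #B = 4 → (uDeg F B : ℝ) < d) →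
        ∃ 𝒢 ∈ 𝓒, (#F : ℝ) ≤ #(F ∩ 𝒢) + (n * ((k + 3) * ℓ : ℕ)) ^ 2 * d := by
  set s := (k + 3) * ℓ
  have hs : 2 ≤ s := by nlinarith [show s = (k + 3) * ℓ from rfl]
  obtain ⟨n₀, hn₀⟩ := exists_forall_card_isGood_le (α := ℕ) hk hℓ s hε
  refine ⟨n₀ + s + 1, fun n hn ↦ ⟨{f ∈ fingerprintFunctions s (vtx n) |
    (SimpleGraph.cycleGraph ℓ).Free (fingerprintGraph f) ∧
      NoClosingColor ℓ (fingerprintGraph f) (fingerprintColors f)}.image fun f ↦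
        {E ∈ (vtx n).powersetCard k | IsGood (fingerprintGraph f) (fingerprintColors f) E},
    card_image_le.trans ((card_filter_le _ _).trans ?_), fun 𝒢 h𝒢 ↦ ?_,
    fun F hF hfree d hd hd_deg ↦ ?_⟩⟩
  · simpa only [card_vtx] using
      card_fingerprintFunctions_le (V := vtx n) (show s + 1 ≤ #(vtx n) by rw [card_vtx]; lia)
  · obtain ⟨f, hf, rfl⟩ := mem_image.1 h𝒢
    obtain ⟨hf, hcycle, hclose⟩ := mem_filter.1 hf
    refine ⟨filter_subset _ _, ?_⟩
    have := hn₀ (vtx n) (fingerprintGraph f) (fingerprintColors f) (by rw [card_vtx]; lia)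
      (fun q ↦ (card_le_card sdiff_subset).trans (card_le_of_mem_fingerprintFunctions hf q))
      (fun q ↦ sdiff_disjoint) hcycle hclose
    rwa [card_vtx] at this
  · have hF_sub : ∀ E ∈ F, E ⊆ vtx n := fun E hE ↦ (mem_powersetCard.1 (hF hE)).1
    have hF_card : ∀ E ∈ F, #E = k := fun E hE ↦ (mem_powersetCard.1 (hF hE)).2
    have hm : 0 < s * d := by positivity
    have hF_deg : ∀ B : Finset ℕ, #B = 4 → s * (uDeg F B : ℝ) < s * d := fun B hB ↦ by
      gcongr
      exact hd_deg B hB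
    obtain ⟨f, hf⟩ := exists_isFingerprint hF_sub hm.le hs
    refine ⟨_, mem_image_of_mem _ (mem_filter.2 ⟨hf.mem_fingerprintFunctions,
      hf.free_cycleGraph hℓ hC hF_card hfree,
      hf.noClosingColor hm hℓ hC hF_card hF_deg hfree⟩), ?_⟩
    have bad := hf.card_filter_not_isGood_le hm.le hF_sub
    rw [card_vtx] at bad
    rw [inter_filter, inter_eq_left.2 hF]
    have card_add := card_filter_add_card_filter_not (s := F)
      (IsGood (fingerprintGraph f) (fingerprintColors f))
    rify at card_add
    linarith

end Containers

/-! ### The star construction -/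

section Star

variable {α : Type} [DecidableEq α] {C : Finset (Finset α)} {k ℓ : ℕ}

-- Each vertex of `S` lies in at most two edges of the cycle, so `S` meets at most `2 * #S` of them.
lemma IsLinearCycle.hFree_of_forall_not_disjoint (hC : IsLinearCycle k ℓ C) {S : Finset ℕ}
    (hS : 2 * #S < ℓ) {F : Finset (Finset ℕ)} (hF : ∀ E ∈ F, ¬ Disjoint E S) : HFree C F := by
  rintro K hK ⟨φ, hφ, rfl⟩
  have : NeZero ℓ := ⟨by lia⟩
  obtain ⟨E, hE, rfl⟩ := hC.exists_isLinearCycleSeq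
  have mem_vertexSet : ∀ i, E i ⊆ vertexSet (univ.image E) := fun i ↦
    le_sup (f := id) (mem_image_of_mem E (mem_univ i))
  have meets : ∀ i, ∃ x ∈ E i, φ x ∈ S := by
    intro i
    have := hF _ (hK (mem_image_of_mem _ (mem_image_of_mem E (mem_univ i))))
    simpa [not_disjoint_iff] using this
  choose x hx hxS using meets
  obtain ⟨z, -, hz⟩ := exists_lt_card_fiber_of_mul_lt_card_of_maps_to (s := univ) (t := S)
    (f := fun i ↦ φ (x i)) (n := 2) (fun i _ ↦ hxS i) (by simpa [mul_comm] using hS)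
  obtain ⟨i, j, m, hi, hj, hm, hij, him, hjm⟩ := two_lt_card_iff.1 hz
  simp only [mem_filter, mem_univ, true_and] at hi hj hm
  have eq_ij := hφ (mem_vertexSet i (hx i)) (mem_vertexSet j (hx j)) (hi.trans hj.symm)
  have eq_im := hφ (mem_vertexSet i (hx i)) (mem_vertexSet m (hx m)) (hi.trans hm.symm)
  exact hE.notMem_of_mem_of_mem hij him hjm (hx i) (eq_ij ▸ hx j) (eq_im ▸ hx m)

lemma choose_succ_add_mul_choose_le (n t r : ℕ) :
    n.choose (r + 1) + t * n.choose r ≤ (n + t).choose (r + 1) := by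
  induction t with
  | zero => simp
  | succ t ih =>
    have := Nat.choose_le_choose r (Nat.le_add_right n t)
    rw [← add_assoc n, Nat.choose_succ_succ', add_one_mul]
    lia

lemma choose_add_succ_le (n t r : ℕ) :
    (n + t).choose (r + 1) ≤ n.choose (r + 1) + t * (n + t) ^ r := by
  induction t with
  | zero => simp
  | succ t ih =>
    have hpow : (n + t) ^ r ≤ (n + t + 1) ^ r := Nat.pow_le_pow_left (by lia) r
    have hmul := Nat.mul_le_mul_left t hpow
    have := Nat.choose_le_pow (n + t) r
    rw [← add_assoc n, Nat.choose_succ_succ', add_one_mul]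
    lia

lemma mul_choose_le_card_filter_not_disjoint (n t r : ℕ) :
    t * n.choose r ≤
      #{E ∈ (vtx (n + t)).powersetCard (r + 1) | ¬ Disjoint E (vtx t)} := by
  have card_disjoint : #{E ∈ (vtx (n + t)).powersetCard (r + 1) | Disjoint E (vtx t)} =
      n.choose (r + 1) := by
    have : {E ∈ (vtx (n + t)).powersetCard (r + 1) | Disjoint E (vtx t)} =
        (vtx (n + t) \ vtx t).powersetCard (r + 1) := by
      ext E
      simp only [mem_filter, mem_powersetCard, subset_sdiff]
      tauto
    have hsub : vtx t ⊆ vtx (n + t) := Icc_subset_Icc_right (Nat.le_add_left t n)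
    rw [this, card_powersetCard, card_sdiff_of_subset hsub, card_vtx, card_vtx,
      Nat.add_sub_cancel]
  have card_add := card_filter_add_card_filter_not (s := (vtx (n + t)).powersetCard (r + 1))
    (Disjoint · (vtx t))
  have := choose_succ_add_mul_choose_le n t r
  rw [card_disjoint, card_powersetCard, card_vtx] at card_add
  lia

theorem exists_forall_le_card_filter_not_disjoint (t r : ℕ) {ε : ℝ} (hε : 0 < ε) :
    ∃ n₀ : ℕ, ∀ n, n₀ ≤ n → (t - ε) * n.choose (r + 1) ≤
      #{E ∈ (vtx n).powersetCard (r + 2) | ¬ Disjoint E (vtx t)} := by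
  obtain ⟨K, hK, hpow⟩ := exists_pow_le_mul_choose (r + 1)
  refine ⟨⌈t ^ 2 * K / ε⌉₊ + t + 2 * (r + 1), fun n hn ↦ ?_⟩
  obtain ⟨n, rfl⟩ : ∃ m, n = m + t := ⟨n - t, by lia⟩
  set N := n + t
  have hN : t ^ 2 * K ≤ N * ε := (div_le_iff₀ hε).1 (Nat.ceil_le.1 (by lia))
  have error_le : (t : ℝ) ^ 2 * N ^ r ≤ ε * N.choose (r + 1) := by
    refine le_of_mul_le_mul_left ?_ hK
    calc K * (t ^ 2 * N ^ r) = t ^ 2 * K * (N : ℝ) ^ r := by ring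
      _ ≤ N * ε * N ^ r := by gcongr
      _ = ε * N ^ (r + 1) := by ring
      _ ≤ ε * (K * N.choose (r + 1)) := by gcongr; exact hpow N (by lia)
      _ = K * (ε * N.choose (r + 1)) := by ring
  have choose_le : (N.choose (r + 1) : ℝ) ≤ n.choose (r + 1) + t * N ^ r :=
    mod_cast choose_add_succ_le n t r
  have star_ge : (t : ℝ) * n.choose (r + 1) ≤
      #{E ∈ (vtx N).powersetCard (r + 2) | ¬ Disjoint E (vtx t)} :=
    mod_cast mul_choose_le_card_filter_not_disjoint n t (r + 1)
  nlinarith [mul_le_mul_of_nonneg_left choose_le t.cast_nonneg]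

end Star

/-! ### Random hypergraphs -/

section Probability

/-- The probability that the random `k`-graph `G^(k)(n,p)` equals `G`. -/
noncomputable def graphProb (k n : ℕ) (p : ℝ) (G : Finset (Finset ℕ)) : ℝ :=
  p ^ #G * (1 - p) ^ (#((vtx n).powersetCard k) - #G)

variable {k n : ℕ} {p : ℝ} {A B : Finset (Finset ℕ) → Prop} {𝒢 : Finset (Finset ℕ)}

lemma probEvent_eq_sum_graphProb (k n : ℕ) (p : ℝ) (A : Finset (Finset ℕ) → Prop) :
    probEvent k n p A = ∑ G ∈ ((vtx n).powersetCard k).powerset with A G, graphProb k n p G :=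
  rfl

lemma graphProb_nonneg (hp : p ∈ Set.Icc 0 1) (G : Finset (Finset ℕ)) :
    0 ≤ graphProb k n p G :=
  mul_nonneg (pow_nonneg hp.1 _) (pow_nonneg (sub_nonneg.2 hp.2) _)

lemma sum_graphProb_mul_pow_card_inter (h𝒢 : 𝒢 ⊆ (vtx n).powersetCard k) (p x : ℝ) :
    ∑ G ∈ ((vtx n).powersetCard k).powerset, graphProb k n p G * x ^ #(G ∩ 𝒢) =
      (p * x + (1 - p)) ^ #𝒢 := by
  set U := (vtx n).powersetCard k
  have factor : ∀ E, p * (if E ∈ 𝒢 then x else 1) + (1 - p) =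
      if E ∈ 𝒢 then p * x + (1 - p) else 1 := by
    intro E
    split_ifs <;> ring
  calc ∑ G ∈ U.powerset, graphProb k n p G * x ^ #(G ∩ 𝒢)
      = ∑ G ∈ U.powerset,
          (∏ E ∈ G, p * (if E ∈ 𝒢 then x else 1)) * ∏ E ∈ U \ G, (1 - p) := by
        refine sum_congr rfl fun G hG ↦ ?_
        rw [prod_mul_distrib, prod_const, prod_const, ← prod_filter, prod_const,
          filter_mem_eq_inter, card_sdiff_of_subset (mem_powerset.1 hG), graphProb]
        ring
    _ = ∏ E ∈ U, (p * (if E ∈ 𝒢 then x else 1) + (1 - p)) := (prod_add _ _ U).symm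
    _ = (p * x + (1 - p)) ^ #𝒢 := by
        rw [prod_congr rfl fun E _ ↦ factor E, ← prod_filter, prod_const, filter_mem_eq_inter,
          inter_eq_right.2 h𝒢]

lemma probEvent_add_probEvent_not (k n : ℕ) (p : ℝ) (A : Finset (Finset ℕ) → Prop) :
    probEvent k n p A + probEvent k n p (fun G ↦ ¬ A G) = 1 := by
  rw [probEvent_eq_sum_graphProb, probEvent_eq_sum_graphProb, sum_filter_add_sum_filter_not]
  simpa using sum_graphProb_mul_pow_card_inter (empty_subset ((vtx n).powersetCard k)) p 1

lemma probEvent_nonneg (hp : p ∈ Set.Icc 0 1) : 0 ≤ probEvent k n p A :=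
  sum_nonneg fun G _ ↦ graphProb_nonneg hp G

lemma probEvent_le_one (hp : p ∈ Set.Icc 0 1) : probEvent k n p A ≤ 1 := by
  rw [← probEvent_add_probEvent_not k n p A]
  exact le_add_of_nonneg_right (probEvent_nonneg hp)

lemma probEvent_mono (hp : p ∈ Set.Icc 0 1) (h : ∀ G ⊆ (vtx n).powersetCard k, A G → B G) :
    probEvent k n p A ≤ probEvent k n p B := by
  refine sum_le_sum_of_subset_of_nonneg (fun G hG ↦ ?_) fun G _ _ ↦ graphProb_nonneg hp G
  obtain ⟨hG, hAG⟩ := mem_filter.1 hG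
  exact mem_filter.2 ⟨hG, h G (mem_powerset.1 hG) hAG⟩

lemma probEvent_or_le (hp : p ∈ Set.Icc 0 1) :
    probEvent k n p (fun G ↦ A G ∨ B G) ≤ probEvent k n p A + probEvent k n p B := by
  simp only [probEvent_eq_sum_graphProb]
  rw [← sum_union_inter]
  refine le_add_of_le_of_nonneg (sum_le_sum_of_subset_of_nonneg (fun G hG ↦ ?_)
    fun G _ _ ↦ graphProb_nonneg hp G) (sum_nonneg fun G _ ↦ graphProb_nonneg hp G)
  simpa [and_or_left] using hG

lemma one_sub_le_probEvent_and (hp : p ∈ Set.Icc 0 1) :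
    1 - (probEvent k n p (fun G ↦ ¬ A G) + probEvent k n p (fun G ↦ ¬ B G)) ≤
      probEvent k n p (fun G ↦ A G ∧ B G) := by
  have fail := (probEvent_mono (k := k) (n := n) (A := fun G ↦ ¬ (A G ∧ B G)) hp
    fun G _ h ↦ not_and_or.1 h).trans (probEvent_or_le hp)
  linarith [probEvent_add_probEvent_not k n p fun G ↦ A G ∧ B G]

lemma probEvent_exists_le {ι : Type*} {I : Finset ι} {A : ι → Finset (Finset ℕ) → Prop} {b : ℝ}
    (hp : p ∈ Set.Icc 0 1) (h : ∀ i ∈ I, probEvent k n p (A i) ≤ b) :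
    probEvent k n p (fun G ↦ ∃ i ∈ I, A i G) ≤ #I * b := by
  induction I using Finset.cons_induction with
  | empty => simp [probEvent]
  | cons i I hi ih =>
    simp only [mem_cons, exists_eq_or_imp, card_cons, Nat.cast_succ, add_one_mul]
    refine (probEvent_or_le hp).trans ?_
    rw [add_comm (_ * b)]
    exact add_le_add (h i (mem_cons_self i I)) (ih fun j hj ↦ h j (mem_cons_of_mem hj))

-- Markov's inequality for `x ^ #(G ∩ 𝒢)`.
lemma probEvent_le_exp_sub (hp : p ∈ Set.Icc 0 1) {x c : ℝ} (hx : 0 < x)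
    (h𝒢 : 𝒢 ⊆ (vtx n).powersetCard k)
    (hA : ∀ G ⊆ (vtx n).powersetCard k, A G → c ≤ #(G ∩ 𝒢) * Real.log x) :
    probEvent k n p A ≤ Real.exp (p * (x - 1) * #𝒢 - c) := by
  set U := (vtx n).powersetCard k
  have markov : Real.exp c * probEvent k n p A ≤ (p * x + (1 - p)) ^ #𝒢 := by
    rw [← sum_graphProb_mul_pow_card_inter h𝒢, probEvent_eq_sum_graphProb, mul_sum]
    calc ∑ G ∈ U.powerset with A G, Real.exp c * graphProb k n p G
        ≤ ∑ G ∈ U.powerset with A G, graphProb k n p G * x ^ #(G ∩ 𝒢) := by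
          refine sum_le_sum fun G hG ↦ ?_
          obtain ⟨hG, hAG⟩ := mem_filter.1 hG
          rw [mul_comm, ← Real.exp_log (pow_pos hx #(G ∩ 𝒢)), Real.log_pow]
          exact mul_le_mul_of_nonneg_left (Real.exp_le_exp.2 (hA G (mem_powerset.1 hG) hAG))
            (graphProb_nonneg hp G)
      _ ≤ ∑ G ∈ U.powerset, graphProb k n p G * x ^ #(G ∩ 𝒢) :=
          sum_le_sum_of_subset_of_nonneg (filter_subset _ _) fun G _ _ ↦
            mul_nonneg (graphProb_nonneg hp G) (pow_pos hx _).le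
  have mgf_le : (p * x + (1 - p)) ^ #𝒢 ≤ Real.exp (p * (x - 1) * #𝒢) := by
    rw [mul_comm (p * (x - 1)), Real.exp_nat_mul]
    refine pow_le_pow_left₀ (add_nonneg (mul_nonneg hp.1 hx.le) (sub_nonneg.2 hp.2)) ?_ _
    linarith [Real.add_one_le_exp (p * (x - 1))]
  rw [Real.exp_sub, le_div_iff₀ (Real.exp_pos c), mul_comm]
  exact markov.trans mgf_le

-- The choice `x = 2b / (a + b)` in the exponential Markov inequality serves both tails.
lemma chernoff_exponent_le {a b μ : ℝ} (ha : 0 ≤ a) (hb : 0 < b) (hμ : 0 ≤ μ) :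
    (2 * b / (a + b) - 1) * (a * μ) - b * μ * Real.log (2 * b / (a + b)) ≤
      -((b - a) ^ 2 / (2 * (a + b)) * μ) := by
  have log_ge := mul_le_mul_of_nonneg_left
    (Real.one_sub_inv_le_log_of_pos (show 0 < 2 * b / (a + b) by positivity))
    (mul_nonneg hb.le hμ)
  have : (2 * b / (a + b) - 1) * (a * μ) - b * μ * (1 - (2 * b / (a + b))⁻¹) =
      -((b - a) ^ 2 / (2 * (a + b)) * μ) := by
    field_simp
    ring
  linarith

lemma probEvent_le_card_inter_le {a b M : ℝ} (hp : p ∈ Set.Icc 0 1) (hM : 0 ≤ M) (ha : 0 < a)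
    (hab : a < b) (h𝒢 : 𝒢 ⊆ (vtx n).powersetCard k) (hcard : #𝒢 ≤ a * M) :
    probEvent k n p (fun G ↦ b * (p * M) ≤ #(G ∩ 𝒢)) ≤
      Real.exp (-((b - a) ^ 2 / (2 * (a + b)) * (p * M))) := by
  have hx : 1 ≤ 2 * b / (a + b) := by rw [le_div_iff₀ (by linarith)]; linarith
  refine (probEvent_le_exp_sub hp (by linarith) h𝒢 fun G _ hG ↦
    mul_le_mul_of_nonneg_right hG (Real.log_nonneg hx)).trans (Real.exp_le_exp.2 ?_)
  have := mul_le_mul_of_nonneg_left hcard (mul_nonneg hp.1 (sub_nonneg.2 hx))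
  linarith [chernoff_exponent_le ha.le (ha.trans hab) (mul_nonneg hp.1 hM)]

lemma probEvent_card_inter_le_le {a b M : ℝ} (hp : p ∈ Set.Icc 0 1) (hM : 0 ≤ M) (hb : 0 < b)
    (hab : b < a) (h𝒢 : 𝒢 ⊆ (vtx n).powersetCard k) (hcard : a * M ≤ #𝒢) :
    probEvent k n p (fun G ↦ #(G ∩ 𝒢) ≤ b * (p * M)) ≤
      Real.exp (-((b - a) ^ 2 / (2 * (a + b)) * (p * M))) := by
  have hx : 2 * b / (a + b) ≤ 1 := by rw [div_le_iff₀ (by linarith)]; linarith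
  have hx_pos : 0 < 2 * b / (a + b) := div_pos (by linarith) (by linarith)
  refine (probEvent_le_exp_sub hp hx_pos h𝒢 fun G _ hG ↦
    mul_le_mul_of_nonpos_right hG (Real.log_nonpos hx_pos.le hx)).trans (Real.exp_le_exp.2 ?_)
  have := mul_le_mul_of_nonneg_left hcard (mul_nonneg hp.1 (sub_nonneg.2 hx))
  linarith [chernoff_exponent_le (hb.trans hab).le hb (mul_nonneg hp.1 hM)]

lemma probEvent_exists_le_uDeg_le (hp : p ∈ Set.Icc 0 1) (hn : 1 ≤ n) (b : ℕ) {y : ℝ}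
    (hy : p * n ^ (k - b + 1) + (b + 1) * Real.log n ≤ y * Real.log n) :
    probEvent k n p (fun G ↦ ∃ B ∈ (vtx n).powersetCard b, y ≤ uDeg G B) ≤
      Real.exp (-Real.log n) := by
  have hn_pos : (0 : ℝ) < n := by exact_mod_cast hn
  have bound_one : ∀ B ∈ (vtx n).powersetCard b,
      probEvent k n p (fun G ↦ y ≤ uDeg G B) ≤ Real.exp (-((b + 1) * Real.log n)) := by
    intro B hB
    set 𝒢 := {E ∈ (vtx n).powersetCard k | B ⊆ E} with h𝒢
    have card_le : (#𝒢 : ℝ) ≤ n ^ (k - b) := by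
      have := card_filter_subset_powersetCard_le (vtx n) B k
      have hsdiff : #(vtx n \ B) ≤ n := (card_le_card sdiff_subset).trans_eq (card_vtx n)
      rw [(mem_powersetCard.1 hB).2] at this
      exact_mod_cast this.trans ((Nat.choose_le_pow _ _).trans (Nat.pow_le_pow_left hsdiff _))
    refine (probEvent_le_exp_sub hp hn_pos (filter_subset _ _) (c := y * Real.log n) (𝒢 := 𝒢)
      fun G hG hGB ↦ ?_).trans (Real.exp_le_exp.2 ?_)
    · rw [h𝒢, inter_filter, inter_eq_left.2 hG]
      exact mul_le_mul_of_nonneg_right hGB (Real.log_natCast_nonneg n)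
    · have : p * (n - 1) * #𝒢 ≤ p * n ^ (k - b + 1) := by
        have hp0 := hp.1
        calc p * (n - 1) * #𝒢 ≤ p * n * n ^ (k - b) := by gcongr; linarith
          _ = p * n ^ (k - b + 1) := by ring
      linarith
  calc probEvent k n p (fun G ↦ ∃ B ∈ (vtx n).powersetCard b, y ≤ uDeg G B)
      ≤ #((vtx n).powersetCard b) * Real.exp (-((b + 1) * Real.log n)) :=
        probEvent_exists_le hp bound_one
    _ ≤ n ^ b * Real.exp (-((b + 1) * Real.log n)) := by
        gcongr
        rw [card_powersetCard, card_vtx]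
        exact_mod_cast Nat.choose_le_pow n b
    _ = Real.exp (-Real.log n) := by
        rw [← Real.exp_log (pow_pos hn_pos b), ← Real.exp_add, Real.log_pow]
        ring_nf

end Probability

/-! ### Extremal numbers of random hypergraphs -/

section Threshold

variable {α : Type} [DecidableEq α] {C : Finset (Finset α)} {F G : Finset (Finset ℕ)}
  {𝓒 : Finset (Finset (Finset ℕ))} {k ℓ n s : ℕ}

lemma card_le_exIn (hFG : F ⊆ G) (hF : HFree C F) : #F ≤ exIn C G :=
  le_sup (f := card) (mem_filter.2 ⟨mem_powerset.2 hFG, hF⟩)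

lemma IsLinearCycle.exists_card_eq_exIn (hC : IsLinearCycle k ℓ C) (hℓ : 0 < ℓ)
    (G : Finset (Finset ℕ)) : ∃ F ⊆ G, HFree C F ∧ #F = exIn C G := by
  have empty_free : HFree C ∅ := hC.hFree_of_forall_not_disjoint (S := ∅) (by simpa) (by simp)
  obtain ⟨F, hF, h⟩ := exists_mem_eq_sup (G.powerset.filter (HFree C))
    ⟨∅, mem_filter.2 ⟨empty_mem_powerset G, empty_free⟩⟩ card
  obtain ⟨hFG, hfree⟩ := mem_filter.1 hF
  exact ⟨F, mem_powerset.1 hFG, hfree, h.symm⟩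

lemma IsLinearCycle.exIn_le_of_containers (hC : IsLinearCycle k ℓ C) (hℓ : 0 < ℓ) {d e : ℝ}
    (hd : 0 < d) (h𝓒 : ∀ F ⊆ (vtx n).powersetCard k, HFree C F →
      (∀ B : Finset ℕ, #B = 4 → (uDeg F B : ℝ) < d) → ∃ 𝒢 ∈ 𝓒, (#F : ℝ) ≤ #(F ∩ 𝒢) + e)
    (hG : G ⊆ (vtx n).powersetCard k)
    (hdeg : ∀ B ∈ (vtx n).powersetCard 4, (uDeg G B : ℝ) < d) :
    ∃ 𝒢 ∈ 𝓒, (exIn C G : ℝ) ≤ #(G ∩ 𝒢) + e := by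
  obtain ⟨F, hFG, hfree, hF⟩ := hC.exists_card_eq_exIn hℓ G
  have hF_deg : ∀ B : Finset ℕ, #B = 4 → (uDeg F B : ℝ) < d := by
    intro B hB
    by_cases hBn : B ⊆ vtx n
    · have : (uDeg F B : ℝ) ≤ uDeg G B := mod_cast card_le_card (filter_subset_filter _ hFG)
      exact this.trans_lt (hdeg B (mem_powersetCard.2 ⟨hBn, hB⟩))
    · have : uDeg F B = 0 := card_eq_zero.2 (filter_eq_empty_iff.2 fun E hE hBE ↦
        hBn (hBE.trans (mem_powersetCard.1 (hG (hFG hE))).1))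
      simpa [this] using hd
  obtain ⟨𝒢, h𝒢, hle⟩ := h𝓒 F (hFG.trans hG) hfree hF_deg
  have : (#(F ∩ 𝒢) : ℝ) ≤ #(G ∩ 𝒢) := mod_cast card_le_card (inter_subset_inter_right hFG)
  exact ⟨𝒢, h𝒢, by rw [← hF]; linarith⟩

lemma IsLinearCycle.probEvent_lt_exIn_le (hC : IsLinearCycle k ℓ C) (hℓ : 0 < ℓ) {p d e y z : ℝ}
    (hp : p ∈ Set.Icc 0 1) (hd : 0 < d) (h𝓒 : ∀ F ⊆ (vtx n).powersetCard k, HFree C F →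
      (∀ B : Finset ℕ, #B = 4 → (uDeg F B : ℝ) < d) → ∃ 𝒢 ∈ 𝓒, (#F : ℝ) ≤ #(F ∩ 𝒢) + e)
    (hyz : y + e ≤ z) :
    probEvent k n p (fun G ↦ z < exIn C G) ≤
      probEvent k n p (fun G ↦ ∃ B ∈ (vtx n).powersetCard 4, d ≤ uDeg G B) +
        probEvent k n p (fun G ↦ ∃ 𝒢 ∈ 𝓒, y ≤ #(G ∩ 𝒢)) := by
  refine (probEvent_mono hp fun G hG hlt ↦ ?_).trans (probEvent_or_le hp)
  refine or_iff_not_imp_left.2 fun hdeg ↦ ?_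
  push Not at hdeg
  obtain ⟨𝒢, h𝒢, hle⟩ := hC.exIn_le_of_containers hℓ hd h𝓒 hG hdeg
  exact ⟨𝒢, h𝒢, by linarith⟩

lemma probEvent_exists_le_card_inter_le {a b p M : ℝ} (hp : p ∈ Set.Icc 0 1) (hn : 1 ≤ n)
    (hM : 0 ≤ M) (ha : 0 < a) (hab : a < b) (h𝓒 : #𝓒 ≤ (n ^ s) ^ n ^ 2)
    (hsub : ∀ 𝒢 ∈ 𝓒, 𝒢 ⊆ (vtx n).powersetCard k) (hcard : ∀ 𝒢 ∈ 𝓒, #𝒢 ≤ a * M)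
    (hpM : (s + 1) * (n ^ 2 * Real.log n) ≤ (b - a) ^ 2 / (2 * (a + b)) * (p * M)) :
    probEvent k n p (fun G ↦ ∃ 𝒢 ∈ 𝓒, b * (p * M) ≤ #(G ∩ 𝒢)) ≤ Real.exp (-Real.log n) := by
  have hn_real : (1 : ℝ) ≤ n := by exact_mod_cast hn
  have card_containers : (#𝓒 : ℝ) ≤ Real.exp (s * (n ^ 2 * Real.log n)) := by
    have : (#𝓒 : ℝ) ≤ (n ^ s) ^ n ^ 2 := by exact_mod_cast h𝓒
    refine this.trans_eq ?_
    rw [← Real.exp_log (show (0 : ℝ) < (n ^ s) ^ n ^ 2 by positivity), Real.log_pow, Real.log_pow]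
    push_cast
    ring_nf
  calc probEvent k n p (fun G ↦ ∃ 𝒢 ∈ 𝓒, b * (p * M) ≤ #(G ∩ 𝒢))
      ≤ #𝓒 * Real.exp (-((b - a) ^ 2 / (2 * (a + b)) * (p * M))) :=
        probEvent_exists_le hp fun 𝒢 h𝒢 ↦
          probEvent_le_card_inter_le hp hM ha hab (hsub 𝒢 h𝒢) (hcard 𝒢 h𝒢)
    _ ≤ Real.exp (s * (n ^ 2 * Real.log n)) * Real.exp (-((s + 1) * (n ^ 2 * Real.log n))) := by
        gcongr
    _ = Real.exp (-(n ^ 2 * Real.log n)) := by rw [← Real.exp_add]; ring_nf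
    _ ≤ Real.exp (-Real.log n) := by
        gcongr
        exact le_mul_of_one_le_left (Real.log_nonneg hn_real) (one_le_pow₀ hn_real)

variable {p : ℕ → ℝ}

lemma exists_sq_mul_le_mul_choose (hk : 3 ≤ k) : ∃ K : ℝ, 0 < K ∧ ∀ n : ℕ, 2 * k ≤ n →
    ∀ p : ℝ, 0 ≤ p → n ^ 2 * (p * n ^ (k - 3)) ≤ K * (p * n.choose (k - 1)) := by
  obtain ⟨K, hK, hpow⟩ := exists_pow_le_mul_choose (k - 1)
  refine ⟨K, hK, fun n hn p hp ↦ ?_⟩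
  calc n ^ 2 * (p * n ^ (k - 3)) = p * (n : ℝ) ^ (k - 1) := by
        rw [show k - 1 = 2 + (k - 3) by lia, pow_add]
        ring
    _ ≤ p * (K * n.choose (k - 1)) := by gcongr; exact hpow n (by lia)
    _ = K * (p * n.choose (k - 1)) := by ring

lemma exists_mul_sq_mul_le_mul_choose (hk : 3 ≤ k) {x η : ℝ} (hx : 0 < x) (hη : 0 < η) :
    ∃ δ : ℝ, 0 < δ ∧ ∀ n : ℕ, 2 * k ≤ n → ∀ p : ℝ, 0 ≤ p →
      (n * x) ^ 2 * (δ * (p * n ^ (k - 3))) ≤ η * (p * n.choose (k - 1)) := by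
  obtain ⟨K, hK, hchoose⟩ := exists_sq_mul_le_mul_choose hk
  refine ⟨η / (x ^ 2 * K), by positivity, fun n hn p hp ↦ ?_⟩
  calc (n * x) ^ 2 * (η / (x ^ 2 * K) * (p * n ^ (k - 3)))
      = η / K * (n ^ 2 * (p * n ^ (k - 3))) := by field_simp
    _ ≤ η / K * (K * (p * n.choose (k - 1))) :=
        mul_le_mul_of_nonneg_left (hchoose n hn p hp) (by positivity)
    _ = η * (p * n.choose (k - 1)) := by field_simp

lemma eventually_le_log (R : ℝ) : ∀ᶠ n : ℕ in atTop, R ≤ Real.log n :=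
  (Real.tendsto_log_atTop.comp tendsto_natCast_atTop_atTop).eventually_ge_atTop R

lemma eventually_mul_log_le {D : ℕ → ℝ} (hD : Tendsto (fun n : ℕ ↦ D n / Real.log n) atTop atTop)
    (R : ℝ) : ∀ᶠ n : ℕ in atTop, R * Real.log n ≤ D n := by
  filter_upwards [hD.eventually_ge_atTop R, eventually_le_log 1] with n hR hlog
  exact (le_div_iff₀ (by linarith)).1 hR

lemma eventually_mul_sq_mul_log_le_choose (hk : 3 ≤ k) (hp : ∀ n, 0 ≤ p n)
    (hgrow : Tendsto (fun n : ℕ ↦ p n * (n : ℝ) ^ (k - 3) / Real.log n) atTop atTop) (R : ℝ) :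
    ∀ᶠ n : ℕ in atTop, R * (n ^ 2 * Real.log n) ≤ p n * n.choose (k - 1) := by
  obtain ⟨K, hK, hchoose⟩ := exists_sq_mul_le_mul_choose hk
  filter_upwards [eventually_mul_log_le hgrow (K * R), eventually_ge_atTop (2 * k)] with n hlog hn
  refine le_of_mul_le_mul_left ?_ hK
  calc K * (R * (n ^ 2 * Real.log n)) = n ^ 2 * (K * R * Real.log n) := by ring
    _ ≤ n ^ 2 * (p n * n ^ (k - 3)) := by gcongr
    _ ≤ K * (p n * n.choose (k - 1)) := hchoose n hn (p n) (hp n)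

-- The subgraph of `G^(k)(n,p)` of edges meeting `[t]` is `C`-free.
lemma eventually_probEvent_exIn_lt_le (hk : 3 ≤ k) (hC : IsLinearCycle k ℓ C)
    (hp : ∀ n, p n ∈ Set.Icc 0 1)
    (hgrow : Tendsto (fun n : ℕ ↦ p n * (n : ℝ) ^ (k - 3) / Real.log n) atTop atTop)
    {t : ℕ} (ht : 0 < t) (htℓ : 2 * t < ℓ) {ε : ℝ} (hε : 0 < ε) :
    ∀ᶠ n : ℕ in atTop, probEvent k n (p n)
      (fun G ↦ exIn C G < (t - ε) * (p n * n.choose (k - 1))) ≤ Real.exp (-Real.log n) := by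
  have ht_pos : (0 : ℝ) < t := by exact_mod_cast ht
  obtain ⟨b, hb_max, hbt⟩ := exists_between (max_lt ht_pos (sub_lt_self _ hε))
  obtain ⟨hb, hεb⟩ := max_lt_iff.1 hb_max
  obtain ⟨a, hba, hat⟩ := exists_between hbt
  obtain ⟨r, rfl⟩ : ∃ r, k = r + 2 := ⟨k - 2, by lia⟩
  obtain ⟨n₀, hstar⟩ := exists_forall_le_card_filter_not_disjoint t r (sub_pos.2 hat)
  have rate_pos : 0 < (b - a) ^ 2 / (2 * (a + b)) :=
    div_pos (sq_pos_of_neg (by linarith)) (by linarith)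
  set c := (b - a) ^ 2 / (2 * (a + b)) with hc
  filter_upwards [eventually_mul_sq_mul_log_le_choose hk (fun n ↦ (hp n).1) hgrow c⁻¹,
    eventually_ge_atTop (max n₀ 1)] with n hrate hn
  set 𝒢 := {E ∈ (vtx n).powersetCard (r + 2) | ¬ Disjoint E (vtx t)}
  have star_ge : a * n.choose (r + 1) ≤ (#𝒢 : ℝ) := by
    simpa using hstar n (le_of_max_le_left hn)
  have few_star_edges : ∀ G ⊆ (vtx n).powersetCard (r + 2),
      exIn C G < (t - ε) * (p n * n.choose (r + 1)) →
      (#(G ∩ 𝒢) : ℝ) ≤ b * (p n * n.choose (r + 1)) := by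
    intro G _ hlt
    have hfree : HFree C (G ∩ 𝒢) := hC.hFree_of_forall_not_disjoint (S := vtx t)
      (by rwa [card_vtx]) fun E hE ↦ (mem_filter.1 (mem_inter.1 hE).2).2
    have : (#(G ∩ 𝒢) : ℝ) ≤ exIn C G := mod_cast card_le_exIn inter_subset_left hfree
    have := mul_le_mul_of_nonneg_right hεb.le
      (mul_nonneg (hp n).1 (Nat.cast_nonneg (n.choose (r + 1))))
    linarith
  refine (probEvent_mono (hp n) few_star_edges).trans ((probEvent_card_inter_le_le (hp n)
    (Nat.cast_nonneg _) hb hba (filter_subset _ _) star_ge).trans (Real.exp_le_exp.2 ?_))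
  have hn_real : (1 : ℝ) ≤ n := by exact_mod_cast le_of_max_le_right hn
  have log_le := le_mul_of_one_le_left (Real.log_nonneg hn_real) (one_le_pow₀ hn_real (n := 2))
  have := (inv_mul_le_iff₀ rate_pos).1 hrate
  rw [← hc]
  exact neg_le_neg (log_le.trans this)

-- A 4-set has expected degree of order at most `p * n ^ (k - 4)`, which is below the threshold by
-- a factor `n`; this compensates for the `n ^ 4` sets in the union bound.
lemma eventually_probEvent_exists_le_uDeg_le (hk : 5 ≤ k) (hp : ∀ n, p n ∈ Set.Icc 0 1)
    (hgrow : Tendsto (fun n : ℕ ↦ p n * (n : ℝ) ^ (k - 3) / Real.log n) atTop atTop)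
    {δ : ℝ} (hδ : 0 < δ) :
    ∀ᶠ n : ℕ in atTop, probEvent k n (p n) (fun G ↦ ∃ B ∈ (vtx n).powersetCard 4,
      δ * (p n * n ^ (k - 3)) ≤ uDeg G B) ≤ Real.exp (-Real.log n) := by
  filter_upwards [eventually_mul_log_le hgrow (10 / δ), eventually_le_log (max 1 (2 / δ)),
    eventually_ge_atTop 1] with n hD hlog hn
  refine probEvent_exists_le_uDeg_le (hp n) hn 4 ?_
  rw [show k - 4 + 1 = k - 3 by lia]
  set D := p n * (n : ℝ) ^ (k - 3)
  have log_ge_one : 1 ≤ Real.log n := le_of_max_le_left hlog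
  have two_le : 2 ≤ Real.log n * δ := (div_le_iff₀ hδ).1 (le_of_max_le_right hlog)
  have ten_le : 10 * Real.log n ≤ δ * D := by
    rwa [div_mul_eq_mul_div, div_le_iff₀' hδ] at hD
  have D_nonneg : 0 ≤ D := mul_nonneg (hp n).1 (by positivity)
  have : 10 * Real.log n ≤ δ * D * Real.log n :=
    ten_le.trans (le_mul_of_one_le_right (mul_nonneg hδ.le D_nonneg) log_ge_one)
  have := mul_le_mul_of_nonneg_left two_le D_nonneg
  push_cast
  linarith

lemma eventually_probEvent_lt_exIn_le (hk : 5 ≤ k) (hℓ : 3 ≤ ℓ) (hC : IsLinearCycle k ℓ C)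
    (hp : ∀ n, p n ∈ Set.Icc 0 1)
    (hgrow : Tendsto (fun n : ℕ ↦ p n * (n : ℝ) ^ (k - 3) / Real.log n) atTop atTop)
    {ε : ℝ} (hε : 0 < ε) :
    ∀ᶠ n : ℕ in atTop, probEvent k n (p n) (fun G ↦
      (((ℓ - 1) / 2 : ℕ) + ε) * (p n * n.choose (k - 1)) < exIn C G) ≤
        2 * Real.exp (-Real.log n) := by
  obtain ⟨η, hη, rfl⟩ : ∃ η : ℝ, 0 < η ∧ ε = 3 * η := ⟨ε / 3, by positivity, by ring⟩
  set t : ℝ := (((ℓ - 1) / 2 : ℕ) : ℝ)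
  have : 0 ≤ t := Nat.cast_nonneg _
  obtain ⟨n₀, hcontainers⟩ := exists_containers hk hℓ hC hη
  set s := (k + 3) * ℓ
  obtain ⟨δ, hδ, lost_le⟩ := exists_mul_sq_mul_le_mul_choose (k := k) (by lia)
    (show (0 : ℝ) < s by positivity) hη
  obtain ⟨c, hc, hc_pos⟩ : ∃ c : ℝ, c = (t + 2 * η - (t + η)) ^ 2 /
      (2 * (t + η + (t + 2 * η))) ∧ 0 < c :=
    ⟨_, rfl, by ring_nf; positivity⟩
  filter_upwards [eventually_mul_sq_mul_log_le_choose (by lia) (fun n ↦ (hp n).1) hgrow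
      (c⁻¹ * (s + 2)), eventually_probEvent_exists_le_uDeg_le hk hp hgrow hδ,
    eventually_mul_log_le hgrow 1, eventually_le_log 1, eventually_ge_atTop (n₀ + 2 * k)]
    with n hrate hdeg hD hlog hn
  obtain ⟨𝓒, h𝓒_card, h𝓒, hcover⟩ := hcontainers n (by lia)
  set D := p n * (n : ℝ) ^ (k - 3)
  set M : ℝ := (n.choose (k - 1) : ℝ)
  have D_pos : 0 < D := by linarith
  have lost_le : (n * s) ^ 2 * (δ * D) ≤ η * (p n * M) := lost_le n (by lia) (p n) (hp n).1
  refine (hC.probEvent_lt_exIn_le (by lia) (hp n) (mul_pos hδ D_pos)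
    (fun F hF hfree ↦ hcover F hF hfree _ (mul_pos hδ D_pos))
    (show (t + 2 * η) * (p n * M) + _ ≤ _ by linarith)).trans ?_
  rw [two_mul (Real.exp _)]
  refine add_le_add hdeg (probEvent_exists_le_card_inter_le (hp n)
    (by lia) (Nat.cast_nonneg _) (by positivity) (by linarith) h𝓒_card
    (fun 𝒢 h𝒢 ↦ (h𝓒 𝒢 h𝒢).1) (fun 𝒢 h𝒢 ↦ (h𝓒 𝒢 h𝒢).2) ?_)
  rw [mul_assoc, inv_mul_le_iff₀ hc_pos] at hrate
  rw [← hc]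
  push_cast
  linarith

end Threshold

lemma tendsto_exp_neg_log_atTop :
    Tendsto (fun n : ℕ ↦ Real.exp (-Real.log n)) atTop (nhds 0) :=
  Real.tendsto_exp_neg_atTop_nhds_zero.comp
    (Real.tendsto_log_atTop.comp tendsto_natCast_atTop_atTop)

theorem stmt_3_general {α : Type} [DecidableEq α] (k ℓ : ℕ) (hk : 5 ≤ k) (hℓ : 3 ≤ ℓ)
    (C : Finset (Finset α)) (hC : IsLinearCycle k ℓ C)
    (p : ℕ → ℝ) (hp : ∀ n, p n ∈ Set.Icc (0 : ℝ) 1)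
    (hgrow : Tendsto (fun n : ℕ => p n * (n : ℝ) ^ (k - 3) / Real.log n) atTop atTop) :
    ∀ ε : ℝ, 0 < ε →
      Tendsto (fun n : ℕ => probEvent k n (p n) (fun G =>
          ((((ℓ - 1) / 2 : ℕ)) - ε : ℝ) * p n * (n.choose (k - 1) : ℝ) ≤ (exIn C G : ℝ) ∧
          (exIn C G : ℝ) ≤ ((((ℓ - 1) / 2 : ℕ)) + ε : ℝ) * p n * (n.choose (k - 1) : ℝ)))
        atTop (nhds 1) := by
  intro ε hε
  have lower := eventually_probEvent_exIn_lt_le (t := (ℓ - 1) / 2) (by lia) hC hp hgrow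
    (by lia) (by lia) hε
  have upper := eventually_probEvent_lt_exIn_le hk hℓ hC hp hgrow hε
  have hlim : Tendsto (fun n : ℕ ↦ 1 - 3 * Real.exp (-Real.log n)) atTop (nhds 1) := by
    simpa using (tendsto_exp_neg_log_atTop.const_mul 3).const_sub 1
  refine tendsto_of_tendsto_of_tendsto_of_le_of_le' hlim tendsto_const_nhds ?_
    (.of_forall fun n ↦ probEvent_le_one (hp n))
  filter_upwards [lower, upper] with n hlower hupper
  simp only [← not_le, ← mul_assoc] at hlower hupper
  exact le_trans (by linarith) (one_sub_le_probEvent_and (hp n))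

/-- random Turán for linear cycles: for `k ≥ 5`, `ℓ ≥ 3` and
`p·n^{k−3}/(log n)² → ∞`, whp `ex(G^(k)(n,p), C^(k)_ℓ) = (⌊(ℓ−1)/2⌋+o(1))·p·C(n,k−1)`. -/
theorem stmt_3 {α : Type} [DecidableEq α] (k ℓ : ℕ) (hk : 5 ≤ k) (hℓ : 3 ≤ ℓ)
    (C : Finset (Finset α)) (hC : IsLinearCycle k ℓ C)
    (p : ℕ → ℝ) (hp : ∀ n, p n ∈ Set.Icc (0 : ℝ) 1)
    (hgrow : Tendsto (fun n : ℕ => p n * (n : ℝ) ^ (k - 3) / (Real.log n) ^ 2)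
      atTop atTop) :
    ∀ ε : ℝ, 0 < ε →
      Tendsto (fun n : ℕ => probEvent k n (p n) (fun G =>
          ((((ℓ - 1) / 2 : ℕ)) - ε : ℝ) * p n * (n.choose (k - 1) : ℝ) ≤ (exIn C G : ℝ) ∧
          (exIn C G : ℝ) ≤ ((((ℓ - 1) / 2 : ℕ)) + ε : ℝ) * p n * (n.choose (k - 1) : ℝ)))
        atTop (nhds 1) := by
  refine stmt_3_general k ℓ hk hℓ C hC p hp (tendsto_atTop_mono' atTop ?_ hgrow)
  filter_upwards [eventually_le_log 1] with n hlog
  have := (hp n).1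
  gcongr
  exact le_self_pow₀ hlog two_ne_zero
end

section
/- (Super-homogeneous Subfamily Lemma) Let s, k ≥ 2 be integers with s ≥ 2k, and let c(k,s) = k!/(k^k·(2s(1+2^k))^{2^k}). Let F be a k-graph on [n]. Then there exists a k-partite subgraph F' ⊆ F with some k-partition (X_1,...,X_k) such that: (1) |F'| ≥ c(k,s)·|F|; (2) for every J ∈ MI(F') and every edge E ∈ F', the projection E_J is s-strong in F'; and (3) for every edge E ∈ F' and every J ∈ MI(F'), d_{F'}(E_J) ≥ max{s, |F'|/(2k·n^{|J|})}. (Such an F', with its k-partition, is called s-super-homogeneous.) -/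
open Finset Filter

attribute [local instance] Classical.propDecidable

/-! A random colouring of the vertices with `k` colours makes a fraction `k! / k^k` of the edges
rainbow, which gives a `k`-partite `G ⊆ F`. From `G`, repeatedly delete all edges through a
projection `E_J`, `J ∈ MI(G)`, that is not `s`-strong or has too small a degree.

* If `E_J` is not `s`-strong, a fraction `1/s` of the edges through it share a further vertex, so
  no two of these meet exactly in the pattern `J`. Such pieces for different projections can be
  united into a family that still avoids `J`; hence at most `s` times the size of the largest
  `J`-avoiding subfamily of `G` is deleted for this reason.
* The number of `J`-projections is at most `∏_{i ∈ J} |X_i|`, and `∏ (1 + |X_i|/n) ≤ 1 + k`, so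
  the deletions caused by low degrees amount to at most half of `G`.

So either a large part of `G` survives and is super-homogeneous, or some `J`-avoiding subfamily
with `J ∈ MI(G)` is large. In the latter case, start again from that subfamily: `MI` has lost `J`,
so this happens fewer than `2^k` times. -/

section Coloring

theorem card_filter_injOn {V C : Type*} [Fintype V] [Fintype C] [DecidableEq V] (E : Finset V)
    [DecidablePred fun f : V → C => Set.InjOn f E] :
    #{f : V → C | Set.InjOn f E} =
      (Fintype.card C).descFactorial #E * Fintype.card C ^ (Fintype.card V - #E) := by
  have restrict : {f : V → C // Set.InjOn f E} ≃
      {g : {x // x ∈ E} → C // Function.Injective g} × ({x // x ∉ E} → C) :=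
    ((Equiv.piEquivPiSubtypeProd (· ∈ E) fun _ => C).subtypeEquiv
      (q := fun p => Function.Injective p.1) fun _ => Set.injOn_iff_injective).trans
      (Equiv.prodSubtypeFstEquivSubtypeProd (p := Function.Injective))
  rw [← Fintype.card_subtype, Fintype.card_congr restrict, Fintype.card_prod,
    Fintype.card_congr (Equiv.subtypeInjectiveEquivEmbedding _ _), Fintype.card_embedding_eq,
    Fintype.card_fun, Fintype.card_coe, Fintype.card_subtype_compl, Fintype.card_coe]

theorem exists_coloring_injOn_of_finite {V ι : Type*} [Finite V] {k : ℕ} (hk : 0 < k)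
    (I : Finset ι) (E : ι → Finset V) (hE : ∀ i ∈ I, #(E i) = k) :
    ∃ f : V → Fin k, k.factorial * #I ≤ k ^ k * #{i ∈ I | Set.InjOn f (E i)} := by
  cases nonempty_fintype V
  have : Nonempty (Fin k) := ⟨⟨0, hk⟩⟩
  have rainbow_count : ∀ i ∈ I, k ^ k * #{f : V → Fin k | Set.InjOn f (E i)} =
      k.factorial * k ^ Fintype.card V := by
    intro i hi
    have hkV : k ≤ Fintype.card V := hE i hi ▸ card_le_univ (E i)
    rw [card_filter_injOn, Fintype.card_fin, hE i hi, Nat.descFactorial_self, mul_left_comm,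
      ← pow_add, Nat.add_sub_cancel' hkV]
  have double_count : ∑ f : V → Fin k, k ^ k * #{i ∈ I | Set.InjOn f (E i)} =
      ∑ i ∈ I, k ^ k * #{f : V → Fin k | Set.InjOn f (E i)} := by
    rw [← mul_sum, ← mul_sum]
    exact congrArg _ (sum_card_bipartiteAbove_eq_sum_card_bipartiteBelow
      fun (f : V → Fin k) i => Set.InjOn f (E i))
  have average : ∑ _f : V → Fin k, k.factorial * #I ≤
      ∑ f : V → Fin k, k ^ k * #{i ∈ I | Set.InjOn f (E i)} := by
    rw [double_count, sum_congr rfl rainbow_count]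
    simp only [sum_const, smul_eq_mul, card_univ, Fintype.card_fun, Fintype.card_fin]
    exact le_of_eq (by ring)
  obtain ⟨f, -, hf⟩ := exists_le_of_sum_le univ_nonempty average
  exact ⟨f, hf⟩

theorem exists_coloring_injOn {α : Type*} {k : ℕ} (hk : 0 < k) (F : Finset (Finset α))
    (hF : ∀ E ∈ F, #E = k) :
    ∃ f : α → Fin k,
      k.factorial * #F ≤ k ^ k * #(F.filter fun E : Finset α => Set.InjOn f (E : Set α)) := by
  set V := F.sup id
  have map_subtype : ∀ E ∈ F, (E.subtype (· ∈ V)).map (.subtype _) = E := fun E hE =>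
    subtype_map_of_mem fun _ hx => le_sup (f := id) hE hx
  obtain ⟨f, hf⟩ := exists_coloring_injOn_of_finite hk F (Finset.subtype (· ∈ V)) fun E hE => by
    rw [← card_map (.subtype _), map_subtype E hE, hF E hE]
  refine ⟨Function.extend Subtype.val f fun _ => ⟨0, hk⟩, hf.trans ?_⟩
  gcongr with E hE
  intro hinj
  rw [← map_subtype E hE, coe_map]
  refine Set.InjOn.image_of_comp ?_
  rwa [Function.Embedding.coe_subtype, Function.extend_comp Subtype.val_injective]

theorem card_filter_eq_one_of_injOn {α : Type*} {k : ℕ} {f : α → Fin k} {E : Finset α}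
    (hE : #E = k) (hf : Set.InjOn f E) (i : Fin k) : #{x ∈ E | f x = i} = 1 := by
  have hsurj : E.image f = univ := by
    rw [← card_eq_iff_eq_univ, card_image_of_injOn hf, hE, Fintype.card_fin]
  obtain ⟨x, hx, rfl⟩ := mem_image.1 (hsurj ▸ mem_univ i)
  refine card_eq_one.2 ⟨x, ext fun y => ?_⟩
  rw [mem_filter, mem_singleton]
  exact ⟨fun ⟨hy, hxy⟩ => hf hy hx hxy, by rintro rfl; exact ⟨hx, rfl⟩⟩

theorem exists_isKPartition_subfamily {k : ℕ} (hk : 0 < k) (V : Finset ℕ) (F : Finset (Finset ℕ))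
    (hF : ∀ E ∈ F, E ⊆ V ∧ #E = k) :
    ∃ G ⊆ F, ∃ X : Fin k → Finset ℕ, IsKPartition k G X ∧ univ.sup X = V ∧
      k.factorial * #F ≤ k ^ k * #G := by
  obtain ⟨f, hf⟩ := exists_coloring_injOn hk F fun E hE => (hF E hE).2
  refine ⟨F.filter fun E : Finset ℕ => Set.InjOn f (E : Set ℕ), filter_subset _ _,
    fun i => {x ∈ V | f x = i}, ⟨?_, ?_⟩, ?_, hf⟩
  · exact fun i j hij => disjoint_filter.2 fun _ _ hi hj => hij (hi.symm.trans hj)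
  · intro E hE i
    obtain ⟨hEF, hinj⟩ := mem_filter.1 hE
    rw [inter_filter, inter_eq_left.2 (hF E hEF).1]
    exact card_filter_eq_one_of_injOn (hF E hEF).2 hinj i
  · ext x
    simp [Finset.mem_sup]

end Coloring

section Links

variable {α : Type} [DecidableEq α] {s : ℕ} {F : Finset (Finset α)} {D : Finset α}

theorem setDeg_eq_card_filter (F : Finset (Finset α)) (D : Finset α) :
    setDeg F D = #{E ∈ F | D ⊆ E} := by
  refine card_image_of_injOn fun A hA B hB hAB => ?_
  rw [← sdiff_union_of_subset (mem_filter.1 hA).2, ← sdiff_union_of_subset (mem_filter.1 hB).2]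
  exact congrArg (· ∪ D) hAB

theorem vdeg_link_pos {E : Finset α} (hE : E ∈ F) (hDE : D ⊆ E) {v : α} (hvE : v ∈ E)
    (hvD : v ∉ D) : 0 < vdeg (link F D) v :=
  card_pos.2 ⟨E \ D, mem_filter.2
    ⟨mem_image_of_mem _ (mem_filter.2 ⟨hE, hDE⟩), Finset.mem_sdiff.2 ⟨hvE, hvD⟩⟩⟩

theorem vdeg_link_le (F : Finset (Finset α)) (D : Finset α) (v : α) :
    vdeg (link F D) v ≤ #{E ∈ F | D ⊆ E ∧ v ∈ E} := by
  unfold vdeg link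
  rw [filter_image, filter_filter]
  refine card_image_le.trans (card_le_card fun E hE => ?_)
  simp only [mem_filter, Finset.mem_sdiff] at hE ⊢
  exact ⟨hE.1, hE.2.1, hE.2.2.1⟩

theorem exists_setDeg_le_mul_of_not_sStrong {E : Finset α} (hE : E ∈ F) (hDE : D ⊆ E)
    (hD : ¬ SStrong s F D) :
    ∃ v ∉ D, setDeg F D ≤ s * #{A ∈ F | D ⊆ A ∧ v ∈ A} := by
  have hne : (link F D).Nonempty := ⟨E \ D, mem_image_of_mem _ (mem_filter.2 ⟨hE, hDE⟩)⟩
  have hdiv : ¬ ∀ v, s * vdeg (link F D) v < #(link F D) := fun h => hD ⟨hne, h⟩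
  push Not at hdiv
  obtain ⟨v, hv⟩ := hdiv
  refine ⟨v, fun hvD => ?_, hv.trans (Nat.mul_le_mul_left s (vdeg_link_le F D v))⟩
  have hzero : vdeg (link F D) v = 0 := by
    refine card_eq_zero.2 (filter_eq_empty_iff.2 fun B hB hvB => ?_)
    obtain ⟨A, -, rfl⟩ := mem_image.1 hB
    exact (Finset.mem_sdiff.1 hvB).2 hvD
  rw [hzero, mul_zero] at hv
  exact hne.card_pos.not_ge hv

end Links

section Projections

variable {k : ℕ} {X : Fin k → Finset ℕ} {G H : Finset (Finset ℕ)} {J : Finset (Fin k)}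
  {E E' : Finset ℕ}

theorem mem_projJ {x : ℕ} : x ∈ projJ X J E ↔ x ∈ E ∧ ∃ i ∈ J, x ∈ X i := by
  simp only [projJ, mem_inter, Finset.mem_sup]

theorem projJ_subset : projJ X J E ⊆ E := inter_subset_left

theorem mem_pattern {D : Finset ℕ} {i : Fin k} : i ∈ pattern X D ↔ ∃ x ∈ D, x ∈ X i := by
  simp only [pattern, mem_filter, mem_univ, true_and, Finset.Nonempty, mem_inter]

theorem mem_MI : J ∈ MI G X ↔ ∃ E ∈ G, ∃ E' ∈ G, E ≠ E' ∧ pattern X (E ∩ E') = J := by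
  simp only [MI, mem_image, mem_filter, mem_product, Prod.exists, and_assoc, exists_and_left]

theorem MI_mono (h : H ⊆ G) : MI H X ⊆ MI G X := by
  intro J hJ
  obtain ⟨E, hE, E', hE', hne, hpat⟩ := mem_MI.1 hJ
  exact mem_MI.2 ⟨E, h hE, E', h hE', hne, hpat⟩

theorem notMem_MI_empty : J ∉ MI ∅ X := by simp [MI]

theorem notMem_MI_of_common_vertex (hcov : ∀ E ∈ G, E ⊆ univ.sup X) {v : ℕ}
    (hv : ∀ E ∈ G, v ∈ E ∧ v ∉ projJ X J E) : J ∉ MI G X := by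
  intro hJ
  obtain ⟨E, hE, E', hE', -, rfl⟩ := mem_MI.1 hJ
  obtain ⟨i, -, hi⟩ := Finset.mem_sup.1 (hcov E hE (hv E hE).1)
  exact (hv E hE).2 (mem_projJ.2
    ⟨(hv E hE).1, i, mem_pattern.2 ⟨v, mem_inter.2 ⟨(hv E hE).1, (hv E' hE').1⟩, hi⟩, hi⟩)

namespace IsKPartition

theorem mono (hX : IsKPartition k G X) (h : H ⊆ G) : IsKPartition k H X :=
  ⟨hX.1, fun E hE => hX.2 E (h hE)⟩

theorem exists_mem (hX : IsKPartition k G X) (hE : E ∈ G) (i : Fin k) : ∃ x ∈ E, x ∈ X i := by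
  obtain ⟨x, hx⟩ := card_pos.1 ((hX.2 E hE i).symm ▸ Nat.one_pos)
  exact ⟨x, mem_inter.1 hx⟩

theorem eq_of_mem (hX : IsKPartition k G X) (hE : E ∈ G) {i : Fin k} {x y : ℕ}
    (hx : x ∈ E) (hxi : x ∈ X i) (hy : y ∈ E) (hyi : y ∈ X i) : x = y :=
  card_le_one.1 (hX.2 E hE i).le x (mem_inter.2 ⟨hx, hxi⟩) y (mem_inter.2 ⟨hy, hyi⟩)

theorem exists_mem_notMem_projJ (hX : IsKPartition k G X) (hE : E ∈ G) (hJ : J ≠ univ) :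
    ∃ v ∈ E, v ∉ projJ X J E := by
  obtain ⟨i, hi⟩ := not_forall.1 (mt eq_univ_iff_forall.2 hJ)
  obtain ⟨v, hvE, hvi⟩ := hX.exists_mem hE i
  refine ⟨v, hvE, fun hv => ?_⟩
  obtain ⟨-, j, hj, hvj⟩ := mem_projJ.1 hv
  exact disjoint_left.1 (hX.1 i j fun hij => hi (hij ▸ hj)) hvi hvj

theorem projJ_subset_iff (hX : IsKPartition k G X) (hE : E ∈ G) (hE' : E' ∈ G) :
    projJ X J E ⊆ E' ↔ projJ X J E = projJ X J E' := by
  refine ⟨fun h => Subset.antisymm (fun x hx => ?_) (fun x hx => ?_), fun h => h ▸ projJ_subset⟩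
  · exact mem_projJ.2 ⟨h hx, (mem_projJ.1 hx).2⟩
  · obtain ⟨hxE', i, hi, hxi⟩ := mem_projJ.1 hx
    obtain ⟨y, hyE, hyi⟩ := hX.exists_mem hE i
    have hy : y ∈ projJ X J E := mem_projJ.2 ⟨hyE, i, hi, hyi⟩
    rwa [hX.eq_of_mem hE' hxE' hxi (h hy) hyi]

theorem projJ_pattern_inter (hX : IsKPartition k G X) (hE : E ∈ G) (hE' : E' ∈ G) :
    projJ X (pattern X (E ∩ E')) E = projJ X (pattern X (E ∩ E')) E' := by
  rw [← hX.projJ_subset_iff hE hE']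
  intro x hx
  obtain ⟨hxE, i, hi, hxi⟩ := mem_projJ.1 hx
  obtain ⟨y, hy, hyi⟩ := mem_pattern.1 hi
  rw [hX.eq_of_mem hE hxE hxi (mem_inter.1 hy).1 hyi]
  exact (mem_inter.1 hy).2

theorem univ_notMem_MI (hX : IsKPartition k G X) (hcov : ∀ E ∈ G, E ⊆ univ.sup X) :
    univ ∉ MI G X := by
  intro hmem
  obtain ⟨E, hE, E', hE', hne, hpat⟩ := mem_MI.1 hmem
  have hproj := hX.projJ_pattern_inter hE hE'
  rw [hpat, projJ, projJ, inter_eq_left.2 (hcov E hE), inter_eq_left.2 (hcov E' hE')] at hproj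
  exact hne hproj

theorem notMem_MI_union {T N : Finset (Finset ℕ)} (hX : IsKPartition k (T ∪ N) X)
    (hT : J ∉ MI T X) (hN : J ∉ MI N X)
    (hTN : ∀ A ∈ T, ∀ B ∈ N, projJ X J A ≠ projJ X J B) : J ∉ MI (T ∪ N) X := by
  intro hJ
  obtain ⟨A, hA, B, hB, hne, hpat⟩ := mem_MI.1 hJ
  have hproj : projJ X J A = projJ X J B := hpat ▸ hX.projJ_pattern_inter hA hB
  rcases mem_union.1 hA with hAT | hAN <;> rcases mem_union.1 hB with hBT | hBN
  · exact hT (mem_MI.2 ⟨A, hAT, B, hBT, hne, hpat⟩)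
  · exact hTN A hAT B hBN hproj
  · exact hTN B hBT A hAN hproj.symm
  · exact hN (mem_MI.2 ⟨A, hAN, B, hBN, hne, hpat⟩)

theorem card_image_projJ_le (hX : IsKPartition k G X) (J : Finset (Fin k)) :
    #(G.image (projJ X J)) ≤ ∏ i ∈ J, #(X i) := by
  rw [← card_pi]
  refine card_le_card_of_surjOn (fun g => J.attach.image fun i => g i.1 i.2) fun D hD => ?_
  obtain ⟨E, hE, rfl⟩ := mem_image.1 hD
  choose a ha using hX.exists_mem hE
  refine ⟨fun i _ => a i, mem_coe.2 (mem_pi.2 fun i _ => (ha i).2), ext fun x => ?_⟩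
  simp only [mem_image, mem_attach, true_and, Subtype.exists, mem_projJ]
  constructor
  · rintro ⟨i, hi, rfl⟩
    exact ⟨(ha i).1, i, hi, (ha i).2⟩
  · rintro ⟨hx, i, hi, hxi⟩
    exact ⟨i, hi, hX.eq_of_mem hE (ha i).1 (ha i).2 hx hxi⟩

end IsKPartition

end Projections

section Avoidance

variable {k : ℕ} {X : Fin k → Finset ℕ} {J : Finset (Fin k)} {U U' : Finset (Finset ℕ)}

/-- The largest number of edges of a subfamily of `U` in which no two edges intersect in the
pattern `J`. -/
noncomputable def avoidNum (X : Fin k → Finset ℕ) (J : Finset (Fin k)) (U : Finset (Finset ℕ)) :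
    ℕ :=
  {T ∈ U.powerset | J ∉ MI T X}.sup card

theorem card_le_avoidNum {T : Finset (Finset ℕ)} (hTU : T ⊆ U) (hT : J ∉ MI T X) :
    #T ≤ avoidNum X J U :=
  le_sup (mem_filter.2 ⟨mem_powerset.2 hTU, hT⟩)

theorem exists_card_eq_avoidNum (X : Fin k → Finset ℕ) (J : Finset (Fin k))
    (U : Finset (Finset ℕ)) : ∃ T ⊆ U, J ∉ MI T X ∧ #T = avoidNum X J U := by
  have hne : {T ∈ U.powerset | J ∉ MI T X}.Nonempty :=
    ⟨∅, mem_filter.2 ⟨empty_mem_powerset U, notMem_MI_empty⟩⟩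
  obtain ⟨T, hT, hsup⟩ := exists_mem_eq_sup _ hne card
  obtain ⟨hTU, hJ⟩ := mem_filter.1 hT
  exact ⟨T, mem_powerset.1 hTU, hJ, hsup.symm⟩

theorem avoidNum_mono (h : U ⊆ U') : avoidNum X J U ≤ avoidNum X J U' :=
  sup_mono (filter_subset_filter _ (powerset_mono.2 h))

theorem avoidNum_empty : avoidNum X J ∅ = 0 := by
  obtain ⟨T, hT, -, hcard⟩ := exists_card_eq_avoidNum X J ∅
  rw [← hcard, subset_empty.1 hT, card_empty]

theorem IsKPartition.avoidNum_add_card_le {N : Finset (Finset ℕ)} (hX : IsKPartition k (U ∪ N) X)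
    (hN : J ∉ MI N X) (hUN : ∀ A ∈ U, ∀ B ∈ N, projJ X J A ≠ projJ X J B) :
    avoidNum X J U + #N ≤ avoidNum X J (U ∪ N) := by
  obtain ⟨T, hTU, hT, hcard⟩ := exists_card_eq_avoidNum X J U
  have hTN : ∀ A ∈ T, ∀ B ∈ N, projJ X J A ≠ projJ X J B := fun A hA => hUN A (hTU hA)
  have hdisj : Disjoint T N := disjoint_left.2 fun A hAT hAN => hTN A hAT A hAN rfl
  have hsub : T ∪ N ⊆ U ∪ N := union_subset_union_left hTU
  rw [← hcard, ← card_union_of_disjoint hdisj]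
  exact card_le_avoidNum hsub ((hX.mono hsub).notMem_MI_union hT hN hTN)

end Avoidance

section Cleaning

variable {k s : ℕ} {θ : Finset (Fin k) → ℝ} {X : Fin k → Finset ℕ} {J : Finset (Fin k)}
  {𝒜 : Finset (Finset (Fin k))} {G H U U' : Finset (Finset ℕ)} {E : Finset ℕ}

/-- All `J`-projections of edges of `H`, for `J ∈ 𝒜`, are `s`-strong and have degree at least
`θ J`. Super-homogeneity is the case `𝒜 = MI H` for a suitable threshold `θ`. -/
def IsClean (s : ℕ) (θ : Finset (Fin k) → ℝ) (X : Fin k → Finset ℕ)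
    (𝒜 : Finset (Finset (Fin k))) (H : Finset (Finset ℕ)) : Prop :=
  ∀ J ∈ 𝒜, ∀ E ∈ H, SStrong s H (projJ X J E) ∧ θ J ≤ setDeg H (projJ X J E)

/-- The budget for deleting the edges `U` on account of bad `J`-projections: at most `s` edges per
edge of a family avoiding the intersection pattern `J`, and at most `t` edges per projection. -/
noncomputable def charge (s : ℕ) (t : ℝ) (X : Fin k → Finset ℕ) (J : Finset (Fin k))
    (U : Finset (Finset ℕ)) : ℝ :=
  s * avoidNum X J U + t * #(U.image (projJ X J))

theorem charge_mono {t : ℝ} (ht : 0 ≤ t) (h : U ⊆ U') : charge s t X J U ≤ charge s t X J U' := by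
  unfold charge
  gcongr
  exact avoidNum_mono h

theorem charge_empty {t : ℝ} : charge s t X J ∅ = 0 := by simp [charge, avoidNum_empty]

-- If `projJ X J E` is not strong, a `1/s` fraction of the edges containing it share a further
-- vertex, so no two of them intersect exactly in the pattern `J`.
theorem IsKPartition.setDeg_add_le_of_not_sStrong (hX : IsKPartition k G X)
    (hcov : ∀ A ∈ G, A ⊆ univ.sup X) (hHG : H ⊆ G) (hUG : U ⊆ G)
    (hU : ∀ A ∈ U, projJ X J A ∉ H.image (projJ X J)) (hE : E ∈ H)
    (hbad : ¬ SStrong s H (projJ X J E)) :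
    setDeg H (projJ X J E) + s * avoidNum X J U ≤
      s * avoidNum X J (U ∪ {A ∈ H | projJ X J E ⊆ A}) := by
  obtain ⟨v, hv, hdeg⟩ := exists_setDeg_le_mul_of_not_sStrong hE projJ_subset hbad
  set N := {A ∈ H | projJ X J E ⊆ A ∧ v ∈ A}
  have hNH : N ⊆ H := filter_subset _ _
  have hvN : ∀ A ∈ N, v ∈ A ∧ v ∉ projJ X J A := fun A hA => by
    obtain ⟨hAH, hDA, hvA⟩ := mem_filter.1 hA
    exact ⟨hvA, (hX.projJ_subset_iff (hHG hE) (hHG hAH)).1 hDA ▸ hv⟩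
  have hN : J ∉ MI N X := notMem_MI_of_common_vertex (fun A hA => hcov A (hHG (hNH hA))) hvN
  have hgain := (hX.mono (union_subset hUG (hNH.trans hHG))).avoidNum_add_card_le hN
    fun A hA B hB heq => hU A hA (heq ▸ mem_image_of_mem _ (hNH hB))
  have hsub : U ∪ N ⊆ U ∪ {A ∈ H | projJ X J E ⊆ A} :=
    union_subset_union_right (monotone_filter_right H fun _ _ h => h.1)
  calc setDeg H (projJ X J E) + s * avoidNum X J U
      ≤ s * (avoidNum X J U + #N) := by linarith
    _ ≤ _ := Nat.mul_le_mul_left s (hgain.trans (avoidNum_mono hsub))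

theorem card_image_projJ_lt (hU : ∀ A ∈ U, projJ X J A ∉ H.image (projJ X J)) (hE : E ∈ H) :
    #(U.image (projJ X J)) < #((U ∪ {A ∈ H | projJ X J E ⊆ A}).image (projJ X J)) := by
  refine card_lt_card ((ssubset_iff_of_subset (image_subset_image subset_union_left)).2
    ⟨projJ X J E, mem_image_of_mem _ (mem_union_right _ (mem_filter.2 ⟨hE, projJ_subset⟩)), ?_⟩)
  intro hmem
  obtain ⟨A, hA, hAE⟩ := mem_image.1 hmem
  exact hU A hA (hAE ▸ mem_image_of_mem _ hE)

theorem IsKPartition.setDeg_add_charge_le {t : ℝ} (ht : 0 ≤ t) (hX : IsKPartition k G X)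
    (hcov : ∀ A ∈ G, A ⊆ univ.sup X) (hHG : H ⊆ G) (hUG : U ⊆ G)
    (hU : ∀ A ∈ U, projJ X J A ∉ H.image (projJ X J)) (hE : E ∈ H)
    (hbad : ¬ (SStrong s H (projJ X J E) ∧ t ≤ setDeg H (projJ X J E))) :
    setDeg H (projJ X J E) + charge s t X J U ≤
      charge s t X J (U ∪ {A ∈ H | projJ X J E ⊆ A}) := by
  set U' := U ∪ {A ∈ H | projJ X J E ⊆ A}
  unfold charge
  by_cases hstrong : SStrong s H (projJ X J E)
  · have hlow : (setDeg H (projJ X J E) : ℝ) < t := not_le.1 fun h => hbad ⟨hstrong, h⟩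
    have havoid : (avoidNum X J U : ℝ) ≤ avoidNum X J U' :=
      mod_cast avoidNum_mono subset_union_left
    have himage : (#(U.image (projJ X J)) + 1 : ℝ) ≤ #(U'.image (projJ X J)) :=
      mod_cast card_image_projJ_lt hU hE
    calc setDeg H (projJ X J E) + (s * avoidNum X J U + t * #(U.image (projJ X J)))
        ≤ s * avoidNum X J U + t * (#(U.image (projJ X J)) + 1) := by linarith
      _ ≤ _ := by gcongr
  · have hgain : (setDeg H (projJ X J E) + s * avoidNum X J U : ℝ) ≤ s * avoidNum X J U' :=
      mod_cast hX.setDeg_add_le_of_not_sStrong hcov hHG hUG hU hE hstrong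
    have himage : (#(U.image (projJ X J)) : ℝ) ≤ #(U'.image (projJ X J)) :=
      mod_cast card_le_card (image_subset_image subset_union_left)
    linarith [mul_le_mul_of_nonneg_left himage ht]

/-- The edges of `G` whose `J`-projection is no longer a `J`-projection of an edge of `H`. -/
noncomputable def lostEdges (X : Fin k → Finset ℕ) (J : Finset (Fin k))
    (G H : Finset (Finset ℕ)) : Finset (Finset ℕ) :=
  {E ∈ G | projJ X J E ∉ H.image (projJ X J)}

theorem lostEdges_anti {H' : Finset (Finset ℕ)} (h : H' ⊆ H) :
    lostEdges X J G H ⊆ lostEdges X J G H' :=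
  monotone_filter_right G fun _ _ hE hE' => hE (image_subset_image h hE')

theorem lostEdges_self : lostEdges X J G G = ∅ :=
  filter_eq_empty_iff.2 fun _ hE h => h (mem_image_of_mem _ hE)

theorem IsKPartition.lostEdges_union_subset (hX : IsKPartition k G X) (hHG : H ⊆ G)
    (hE : E ∈ H) : lostEdges X J G H ∪ {A ∈ H | projJ X J E ⊆ A} ⊆
      lostEdges X J G {A ∈ H | ¬ projJ X J E ⊆ A} := by
  refine union_subset (lostEdges_anti (filter_subset _ _)) fun A hA => ?_
  obtain ⟨hAH, hDA⟩ := mem_filter.1 hA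
  refine mem_filter.2 ⟨hHG hAH, fun hmem => ?_⟩
  obtain ⟨B, hB, hBA⟩ := mem_image.1 hmem
  rw [(hX.projJ_subset_iff (hHG hE) (hHG hAH)).1 hDA, ← hBA] at hB
  exact (mem_filter.1 hB).2 projJ_subset

/-- The number of surviving edges plus the total budget; cleaning steps do not decrease it. -/
noncomputable def potential (s : ℕ) (θ : Finset (Fin k) → ℝ) (X : Fin k → Finset ℕ)
    (𝒜 : Finset (Finset (Fin k))) (G H : Finset (Finset ℕ)) : ℝ :=
  #H + ∑ J ∈ 𝒜, charge s (θ J) X J (lostEdges X J G H)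

theorem potential_self : potential s θ X 𝒜 G G = #G := by
  simp [potential, lostEdges_self, charge_empty]

theorem potential_le (hθ : ∀ J, 0 ≤ θ J) :
    potential s θ X 𝒜 G H ≤ #H + ∑ J ∈ 𝒜, charge s (θ J) X J G :=
  add_le_add_right (sum_le_sum fun J _ => charge_mono (hθ J) (filter_subset _ _)) _

theorem IsKPartition.potential_le_potential_filter (hθ : ∀ J, 0 ≤ θ J) (hX : IsKPartition k G X)
    (hcov : ∀ A ∈ G, A ⊆ univ.sup X) (hHG : H ⊆ G) (hJ : J ∈ 𝒜) (hE : E ∈ H)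
    (hbad : ¬ (SStrong s H (projJ X J E) ∧ θ J ≤ setDeg H (projJ X J E))) :
    potential s θ X 𝒜 G H ≤ potential s θ X 𝒜 G {A ∈ H | ¬ projJ X J E ⊆ A} := by
  set H' := {A ∈ H | ¬ projJ X J E ⊆ A}
  have hcard : (#H : ℝ) = setDeg H (projJ X J E) + #H' := by
    rw [setDeg_eq_card_filter]
    exact mod_cast (card_filter_add_card_filter_not (s := H) _).symm
  have hJcharge : setDeg H (projJ X J E) + charge s (θ J) X J (lostEdges X J G H) ≤
      charge s (θ J) X J (lostEdges X J G H') :=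
    (hX.setDeg_add_charge_le (hθ J) hcov hHG (filter_subset _ _)
      (fun _ hA => (mem_filter.1 hA).2) hE hbad).trans
      (charge_mono (hθ J) (hX.lostEdges_union_subset hHG hE))
  have hrest : ∑ I ∈ 𝒜.erase J, charge s (θ I) X I (lostEdges X I G H) ≤
      ∑ I ∈ 𝒜.erase J, charge s (θ I) X I (lostEdges X I G H') :=
    sum_le_sum fun I _ => charge_mono (hθ I) (lostEdges_anti (filter_subset _ _))
  unfold potential
  rw [← add_sum_erase 𝒜 _ hJ, ← add_sum_erase 𝒜 _ hJ, hcard]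
  linarith

theorem IsKPartition.exists_isClean_potential_le (hθ : ∀ J, 0 ≤ θ J) (hX : IsKPartition k G X)
    (hcov : ∀ A ∈ G, A ⊆ univ.sup X) (𝒜 : Finset (Finset (Fin k))) (hHG : H ⊆ G) :
    ∃ H' ⊆ H, IsClean s θ X 𝒜 H' ∧ potential s θ X 𝒜 G H ≤ potential s θ X 𝒜 G H' := by
  induction H using Finset.strongInduction with
  | H H ih =>
    by_cases hclean : IsClean s θ X 𝒜 H
    · exact ⟨H, Subset.rfl, hclean, le_rfl⟩
    unfold IsClean at hclean
    push Not at hclean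
    obtain ⟨J, hJ, E, hE, hbad⟩ := hclean
    have hlt : {A ∈ H | ¬ projJ X J E ⊆ A} ⊂ H :=
      filter_ssubset.2 ⟨E, hE, not_not.2 projJ_subset⟩
    obtain ⟨H', hH', hclean', hle⟩ := ih _ hlt (hlt.subset.trans hHG)
    exact ⟨H', hH'.trans hlt.subset, hclean',
      (hX.potential_le_potential_filter hθ hcov hHG hJ hE
        fun h => (hbad h.1).not_ge h.2).trans hle⟩

theorem IsKPartition.exists_isClean (hθ : ∀ J, 0 ≤ θ J) (hX : IsKPartition k G X)
    (hcov : ∀ A ∈ G, A ⊆ univ.sup X) (s : ℕ) (𝒜 : Finset (Finset (Fin k))) :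
    ∃ H ⊆ G, IsClean s θ X 𝒜 H ∧ #G ≤ #H + ∑ J ∈ 𝒜, charge s (θ J) X J G := by
  obtain ⟨H, hHG, hclean, hle⟩ := hX.exists_isClean_potential_le hθ hcov 𝒜 Subset.rfl
  rw [potential_self] at hle
  exact ⟨H, hHG, hclean, hle.trans (potential_le hθ)⟩

end Cleaning

section DegreeThreshold

variable {k n m : ℕ} {X : Fin k → Finset ℕ} {G : Finset (Finset ℕ)}

/-- The degree `m / (2k·n^|J|)` required of a `J`-projection in a family of `m` edges. The pattern
`∅` is exempt: every edge contains the empty projection, so the requirement holds automatically,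
while charging for it would break `sum_degreeThreshold_mul_le`. -/
noncomputable def degreeThreshold (k n m : ℕ) (J : Finset (Fin k)) : ℝ :=
  if J = ∅ then 0 else m / (2 * k * (n : ℝ) ^ #J)

theorem degreeThreshold_nonneg (J : Finset (Fin k)) : 0 ≤ degreeThreshold k n m J := by
  unfold degreeThreshold
  split_ifs
  · exact le_rfl
  · positivity

theorem prod_one_add_le_one_add_card_mul_sum {ι : Type*} {t : Finset ι} {x : ι → ℝ}
    (hx : ∀ i ∈ t, 0 ≤ x i) (hsum : ∑ i ∈ t, x i ≤ 1) :
    ∏ i ∈ t, (1 + x i) ≤ 1 + #t * ∑ i ∈ t, x i := by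
  induction t using Finset.cons_induction with
  | empty => simp
  | cons a t ha ih =>
    rw [forall_mem_cons] at hx
    rw [sum_cons] at hsum
    have hS : 0 ≤ ∑ i ∈ t, x i := sum_nonneg hx.2
    have hcross : x a * (#t * ∑ i ∈ t, x i) ≤ x a * #t :=
      mul_le_mul_of_nonneg_left (mul_le_of_le_one_right (by positivity) (by linarith)) hx.1
    rw [prod_cons, sum_cons, card_cons, Nat.cast_succ]
    calc (1 + x a) * ∏ i ∈ t, (1 + x i)
        ≤ (1 + x a) * (1 + #t * ∑ i ∈ t, x i) :=
          mul_le_mul_of_nonneg_left (ih hx.2 (by linarith)) (by linarith)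
      _ ≤ 1 + (#t + 1) * (x a + ∑ i ∈ t, x i) := by linarith

theorem IsKPartition.degreeThreshold_mul_card_image_le (hX : IsKPartition k G X)
    (J : Finset (Fin k)) :
    degreeThreshold k n m J * #(G.image (projJ X J)) ≤
      m / (2 * k) * (∏ i ∈ J, (#(X i) / n : ℝ) - if J = ∅ then 1 else 0) := by
  unfold degreeThreshold
  split_ifs with hJ
  · simp [hJ]
  · have himage : (#(G.image (projJ X J)) : ℝ) ≤ ∏ i ∈ J, (#(X i) : ℝ) :=
      mod_cast hX.card_image_projJ_le J
    calc (m / (2 * k * n ^ #J) : ℝ) * #(G.image (projJ X J))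
        ≤ m / (2 * k * n ^ #J) * ∏ i ∈ J, (#(X i) : ℝ) := by gcongr
      _ = m / (2 * k) * (∏ i ∈ J, (#(X i) / n : ℝ) - 0) := by
          rw [prod_div_distrib, prod_const, sub_zero]
          ring

theorem IsKPartition.sum_degreeThreshold_mul_le (hX : IsKPartition k G X)
    (hn : ∑ i, #(X i) ≤ n) (𝒜 : Finset (Finset (Fin k))) :
    ∑ J ∈ 𝒜, degreeThreshold k n m J * #(G.image (projJ X J)) ≤ m / 2 := by
  have hsum : ∑ i, (#(X i) / n : ℝ) ≤ 1 := by
    rw [← sum_div]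
    exact div_le_one_of_le₀ (mod_cast hn) (Nat.cast_nonneg n)
  have hprod : ∏ i, (1 + #(X i) / n : ℝ) - 1 ≤ k := by
    have h := prod_one_add_le_one_add_card_mul_sum (t := univ) (x := fun i => (#(X i) / n : ℝ))
      (fun _ _ => by positivity) hsum
    rw [card_univ, Fintype.card_fin] at h
    linarith [mul_le_of_le_one_right (Nat.cast_nonneg (α := ℝ) k) hsum]
  calc ∑ J ∈ 𝒜, degreeThreshold k n m J * #(G.image (projJ X J))
      ≤ ∑ J, degreeThreshold k n m J * #(G.image (projJ X J)) :=
        sum_le_sum_of_subset_of_nonneg (subset_univ 𝒜) fun J _ _ =>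
          mul_nonneg (degreeThreshold_nonneg J) (Nat.cast_nonneg _)
    _ ≤ ∑ J, m / (2 * k) * (∏ i ∈ J, (#(X i) / n : ℝ) - if J = ∅ then 1 else 0) :=
        sum_le_sum fun J _ => hX.degreeThreshold_mul_card_image_le J
    _ = m / (2 * k) * (∏ i, (1 + #(X i) / n : ℝ) - 1) := by
        rw [← mul_sum, sum_sub_distrib, prod_one_add, powerset_univ, sum_ite_eq' univ ∅,
          if_pos (mem_univ _)]
    _ ≤ m / (2 * k) * k := by gcongr
    _ ≤ m / 2 := by
        rw [← div_div, div_mul_eq_mul_div, mul_div_assoc]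
        exact mul_le_of_le_one_right (by positivity) (div_self_le_one _)

end DegreeThreshold

section LossFactor

variable {k s : ℕ}

/-- The fraction `1 / (2s(1 + 2^k))` of the edges that is kept in each round. -/
noncomputable def lossFactor (k s : ℕ) : ℝ := 1 / (2 * s * (1 + 2 ^ k))

theorem lossFactor_nonneg : 0 ≤ lossFactor k s := by
  unfold lossFactor
  positivity

theorem lossFactor_mul_eq_half (hs : 0 < s) : (1 + 2 ^ k) * (s * lossFactor k s) = 1 / 2 := by
  unfold lossFactor
  field_simp

theorem lossFactor_le_mul (hs : 0 < s) : lossFactor k s ≤ s * lossFactor k s :=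
  le_mul_of_one_le_left lossFactor_nonneg (mod_cast hs)

theorem lossFactor_le_one (hs : 0 < s) : lossFactor k s ≤ 1 := by
  have hmul : s * lossFactor k s ≤ (1 + 2 ^ k) * (s * lossFactor k s) :=
    le_mul_of_one_le_left (mul_nonneg (Nat.cast_nonneg s) lossFactor_nonneg)
      (le_add_of_nonneg_right (by positivity))
  linarith [lossFactor_le_mul (k := k) hs, lossFactor_mul_eq_half (k := k) hs]

theorem cks_eq_mul_lossFactor_pow :
    cks k s = k.factorial / (k : ℝ) ^ k * lossFactor k s ^ 2 ^ k := by
  rw [cks, lossFactor, div_pow, one_pow, div_mul_div_comm, mul_one]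

end LossFactor

namespace IsKPartition

variable {k s n : ℕ} {X : Fin k → Finset ℕ} {G H : Finset (Finset ℕ)}

theorem card_MI_lt (hX : IsKPartition k G X) (hcov : ∀ E ∈ G, E ⊆ univ.sup X) :
    #(MI G X) < 2 ^ k := by
  have hlt : MI G X ⊂ univ :=
    (ssubset_iff_of_subset (subset_univ _)).2 ⟨univ, mem_univ _, hX.univ_notMem_MI hcov⟩
  simpa using card_lt_card hlt

theorem superHomogeneous_of_isClean (hk : 0 < k) (hX : IsKPartition k G X)
    (hcov : ∀ E ∈ G, E ⊆ univ.sup X) (hHG : H ⊆ G)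
    (hclean : IsClean s (degreeThreshold k n #G) X (MI G X) H) :
    SuperHomogeneous n k s H X := by
  intro J hJ E hE
  obtain ⟨hstrong, hdeg⟩ := hclean J (MI_mono hHG hJ) E hE
  have hJ_ne_univ : J ≠ univ := fun h => hX.univ_notMem_MI hcov (h ▸ MI_mono hHG hJ)
  refine ⟨hstrong, ?_, ?_⟩
  · obtain ⟨v, hvE, hv⟩ := hX.exists_mem_notMem_projJ (hHG hE) hJ_ne_univ
    exact (Nat.le_mul_of_pos_right s (vdeg_link_pos hE projJ_subset hvE hv)).trans
      (hstrong.2 v).le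
  · rcases eq_or_ne J ∅ with rfl | hne
    · have hall : setDeg H (projJ X ∅ E) = #H := by
        simp [setDeg_eq_card_filter, projJ]
      have h2k : (1 : ℝ) ≤ 2 * k := mod_cast (by omega : 1 ≤ 2 * k)
      rw [hall, card_empty, pow_zero, mul_one]
      exact div_le_self (Nat.cast_nonneg _) h2k
    · rw [degreeThreshold, if_neg hne] at hdeg
      refine le_trans ?_ hdeg
      gcongr

theorem exists_superHomogeneous_of_avoidNum_le (hk : 0 < k) (hs : 0 < s)
    (hX : IsKPartition k G X) (hcov : ∀ E ∈ G, E ⊆ univ.sup X) (hn : ∑ i, #(X i) ≤ n)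
    (havoid : ∀ J ∈ MI G X, avoidNum X J G ≤ lossFactor k s * #G) :
    ∃ H ⊆ G, lossFactor k s * #G ≤ #H ∧ SuperHomogeneous n k s H X := by
  obtain ⟨H, hHG, hclean, hbudget⟩ :=
    hX.exists_isClean (θ := degreeThreshold k n #G) degreeThreshold_nonneg hcov s (MI G X)
  refine ⟨H, hHG, ?_, hX.superHomogeneous_of_isClean hk hcov hHG hclean⟩
  have hstrong : ∑ J ∈ MI G X, (s * avoidNum X J G : ℝ) ≤ 2 ^ k * (s * lossFactor k s * #G) :=
    calc ∑ J ∈ MI G X, (s * avoidNum X J G : ℝ)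
        ≤ #(MI G X) * (s * (lossFactor k s * #G)) := by
          rw [← nsmul_eq_mul]
          exact sum_le_card_nsmul _ _ _ fun J hJ =>
            mul_le_mul_of_nonneg_left (havoid J hJ) (Nat.cast_nonneg s)
      _ ≤ 2 ^ k * (s * (lossFactor k s * #G)) := by
          have := lossFactor_nonneg (k := k) (s := s)
          gcongr
          exact mod_cast (hX.card_MI_lt hcov).le
      _ = 2 ^ k * (s * lossFactor k s * #G) := by ring
  have hcharge : ∑ J ∈ MI G X, charge s (degreeThreshold k n #G J) X J G ≤
      2 ^ k * (s * lossFactor k s * #G) + #G / 2 := by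
    unfold charge
    rw [sum_add_distrib]
    exact add_le_add hstrong (hX.sum_degreeThreshold_mul_le hn _)
  calc lossFactor k s * #G
      ≤ s * lossFactor k s * #G :=
        mul_le_mul_of_nonneg_right (lossFactor_le_mul hs) (Nat.cast_nonneg _)
    _ = (1 + 2 ^ k) * (s * lossFactor k s) * #G - 2 ^ k * (s * lossFactor k s * #G) := by ring
    _ = #G / 2 - 2 ^ k * (s * lossFactor k s * #G) := by
        rw [lossFactor_mul_eq_half hs]
        ring
    _ ≤ #H := by linarith

theorem exists_superHomogeneous (hk : 0 < k) (hs : 0 < s) (hX : IsKPartition k G X)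
    (hcov : ∀ E ∈ G, E ⊆ univ.sup X) (hn : ∑ i, #(X i) ≤ n) :
    ∃ H ⊆ G, lossFactor k s ^ (#(MI G X) + 1) * #G ≤ #H ∧ SuperHomogeneous n k s H X := by
  induction hr : #(MI G X) using Nat.strong_induction_on generalizing G with
  | _ r ih =>
    subst hr
    by_cases havoid : ∀ J ∈ MI G X, (avoidNum X J G : ℝ) ≤ lossFactor k s * #G
    · obtain ⟨H, hHG, hcard, hsuper⟩ :=
        hX.exists_superHomogeneous_of_avoidNum_le hk hs hcov hn havoid
      refine ⟨H, hHG, le_trans ?_ hcard, hsuper⟩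
      gcongr
      exact pow_le_of_le_one lossFactor_nonneg (lossFactor_le_one hs) (Nat.succ_ne_zero _)
    push Not at havoid
    obtain ⟨J, hJ, hlarge⟩ := havoid
    obtain ⟨T, hTG, hJT, hTcard⟩ := exists_card_eq_avoidNum X J G
    have hMI : #(MI T X) < #(MI G X) :=
      card_lt_card ((ssubset_iff_of_subset (MI_mono hTG)).2 ⟨J, hJ, hJT⟩)
    obtain ⟨H, hHT, hcard, hsuper⟩ := ih _ hMI (hX.mono hTG) (fun E hE => hcov E (hTG hE)) rfl
    refine ⟨H, hHT.trans hTG, le_trans ?_ hcard, hsuper⟩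
    calc lossFactor k s ^ (#(MI G X) + 1) * #G
        = lossFactor k s ^ #(MI G X) * (lossFactor k s * #G) := by ring
      _ ≤ lossFactor k s ^ (#(MI T X) + 1) * #T := by
          rw [hTcard]
          exact mul_le_mul
            (pow_le_pow_of_le_one lossFactor_nonneg (lossFactor_le_one hs) hMI) hlarge.le
            (mul_nonneg lossFactor_nonneg (Nat.cast_nonneg _)) (pow_nonneg lossFactor_nonneg _)

end IsKPartition

theorem stmt_4_general {k s : ℕ} (hk : 0 < k) (hs : 0 < s) (V : Finset ℕ)
    (F : Finset (Finset ℕ)) (hF : ∀ E ∈ F, E ⊆ V ∧ #E = k) :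
    ∃ F' ⊆ F, ∃ X : Fin k → Finset ℕ,
      IsKPartition k F' X ∧ cks k s * #F ≤ #F' ∧ SuperHomogeneous #V k s F' X := by
  obtain ⟨G, hGF, X, hX, hXV, hGcard⟩ := exists_isKPartition_subfamily hk V F hF
  have hcov : ∀ E ∈ G, E ⊆ univ.sup X := fun E hE => hXV ▸ (hF E (hGF hE)).1
  have hn : ∑ i, #(X i) ≤ #V := by
    rw [← hXV, sup_eq_biUnion, card_biUnion fun i _ j _ hij => hX.1 i j hij]
  obtain ⟨F', hF'G, hcard, hsuper⟩ := hX.exists_superHomogeneous hk hs hcov hn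
  refine ⟨F', hF'G.trans hGF, X, hX.mono hF'G, ?_, hsuper⟩
  calc cks k s * #F
      = lossFactor k s ^ 2 ^ k * (k.factorial * #F / (k : ℝ) ^ k) := by
        rw [cks_eq_mul_lossFactor_pow]
        ring
    _ ≤ lossFactor k s ^ (#(MI G X) + 1) * #G := by
        refine mul_le_mul ?_ ?_ (by positivity) (pow_nonneg lossFactor_nonneg _)
        · exact pow_le_pow_of_le_one lossFactor_nonneg (lossFactor_le_one hs) (hX.card_MI_lt hcov)
        · refine div_le_of_le_mul₀ (by positivity) (by positivity) ?_
          rw [mul_comm (#G : ℝ)]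
          exact mod_cast hGcard
    _ ≤ #F' := hcard

/-- Super-homogeneous Subfamily Lemma: every `k`-graph `F` on `[n]` contains
a `k`-partite subgraph `F'` with `|F'| ≥ c(k,s)·|F|` that is `s`-super-homogeneous. -/
theorem stmt_4 (k s n : ℕ) (hk : 2 ≤ k) (hs : 2 ≤ s) (hsk : 2 * k ≤ s)
    (F : Finset (Finset ℕ)) (hF : IsKGraphOn k n F) :
    ∃ F' ⊆ F, ∃ X : Fin k → Finset ℕ,
      IsKPartition k F' X ∧
      cks k s * (F.card : ℝ) ≤ (F'.card : ℝ) ∧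
      SuperHomogeneous n k s F' X := by
  simpa [vtx] using stmt_4_general (by omega) (by omega) (vtx n) F hF
end
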